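/- Let c be a positive integer and suppose that c = L_n − 2^x·3^y = L_{n₁} − 2^{x₁}·3^{y₁} = L_{n₂} − 2^{x₂}·3^{y₂} for nonnegative integers with n > n₁ > n₂ and n > 60000. Then n < 3.2·10^33, x < 2.4·10^33, and y < 1.5·10^33. -/

import Mathlib

/-- The Lucas sequence: L 0 = 2, L 1 = 1, L (n+2) = L (n+1) + L n. -/
def lucas : ℕ → ℤ
  | 0 => 2
  | 1 => 1
  | n + 2 => lucas (n + 1) + lucas n

/-!
Two representations of `c`, with indices `m < n` and exponents `x'`, `y'` and `x`, `y`, give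
`L_n - L_m + 2 ^ x' * 3 ^ y' = 2 ^ x * 3 ^ y`. This is used at the archimedean place and at the
primes `2` and `3`.

* Archimedean: `|n log φ - x log 2 - y log 3| ≤ 4 / φ ^ (n - m)`, as `c > 0`. This linear form is
  bounded below by the interpolation method. The pigeonhole principle yields exponential sums that
  are small near the line spanned by `(log 2, log 3)`; Liouville's inequality makes them vanish at
  points of the form `φ ^ r₀ * 2 ^ r₁ * 3 ^ r₂`; eliminating the exponential leaves a polynomial in
  two variables with more zeros than Bézout's theorem allows. Hence `8 * 10 ^ 17 * (n - n₂) ≤ n` if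
  `n ≥ 3.2 * 10 ^ 33`.

* `p`-adic, for `p = 2, 3`: with `k = n - m` and a root `α` of `X² - X - 1`, the integer
  `L_n - L_m + u` is up to a unit `((α ^ k - 1) α ^ m - η₁) ((α ^ k - 1) α ^ m - η₂)` in a number
  field of degree at most `4`. Interpolating `t ↦ ∑ c * α ^ b * (t choose j) * E ^ (l * t)`, where
  `E` is a power of `α` that is `p`-adically close to `1`, shows that it is not divisible by a high
  power of `p`.

With `u = 0`, the second estimate leaves at most one large number among `x, x₁, x₂` and at most one
among `y, y₁, y₂`. By size, each of `(x, y)` and `(x₁, y₁)` has a large entry, so `x₂` and `y₂` are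
small. With `u = 2 ^ x₂ * 3 ^ y₂` and `p = 2`, the second estimate then bounds whichever of `x` and
`x₁` is large, by a value too small for the size of `2 ^ x * 3 ^ y` or `2 ^ x₁ * 3 ^ y₁`.
-/

namespace LucasSUnit

section Bezout

open MvPolynomial Module

theorem card_finsupp_fin_two_sum_le (d : ℕ) :
    Nat.card {m : Fin 2 →₀ ℕ | (m.sum fun _ e => e) ≤ d} = ∑ k ∈ Finset.range (d + 1), (k + 1) := by
  have hsum (m : Fin 2 →₀ ℕ) : (m.sum fun _ e => e) = m 0 + m 1 := by
    rw [Finsupp.sum_fintype _ _ fun _ => rfl, Fin.sum_univ_two]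
  let e : {m : Fin 2 →₀ ℕ | (m.sum fun _ e => e) ≤ d} ≃
      Σ k : Fin (d + 1), Fin ((k : ℕ) + 1) :=
    { toFun m := ⟨⟨m.1 0 + m.1 1, by have := m.2; simp [hsum] at this; omega⟩,
        ⟨m.1 0, by simp⟩⟩
      invFun p := ⟨Finsupp.equivFunOnFinite.symm ![(p.2 : ℕ), (p.1 : ℕ) - p.2], by
        have := p.1.2; have := p.2.2; simp [hsum]; omega⟩
      left_inv m := by ext i; fin_cases i <;> simp
      right_inv p := by
        have h : (p.2 : ℕ) + (p.1 - p.2) = p.1 := by have := p.2.2; omega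
        exact Sigma.ext (Fin.ext (by simpa using h))
          ((Fin.heq_ext_iff (by simpa using h)).2 (by simp)) }
  rw [Nat.card_congr e]
  simp [Fin.sum_univ_eq_sum_range (· + 1)]

theorem two_mul_finrank_restrictTotalDegree_fin_two (F : Type*) [Field F] (d : ℕ) :
    2 * finrank F (restrictTotalDegree (Fin 2) F d) = (d + 1) * (d + 2) := by
  have hcard : finrank F (restrictTotalDegree (Fin 2) F d) = ∑ k ∈ Finset.range (d + 1), (k + 1) :=
    (finrank_eq_nat_card_basis (basisRestrictSupport F _)).trans (card_finsupp_fin_two_sum_le d)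
  rw [hcard]
  have := Finset.sum_range_id_mul_two (d + 2)
  rw [Finset.sum_range_succ', add_zero] at this
  simp only [Nat.add_succ_sub_one] at this
  linarith

variable {σ F : Type*} [Field F]

theorem exists_totalDegree_le_card_eval_eq_one (S : Finset (σ → F)) {a : σ → F} (ha : a ∉ S) :
    ∃ p : MvPolynomial σ F, p.totalDegree ≤ S.card ∧ (∀ s ∈ S, eval s p = 0) ∧ eval a p = 1 := by
  classical
  have hdiff (s : S) : ∃ i, s.1 i ≠ a i :=
    Function.ne_iff.1 fun h : s.1 = a => ha (h ▸ s.2)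
  choose i hi using hdiff
  refine ⟨∏ s : S, (X (i s) - C (s.1 (i s))) * C (a (i s) - s.1 (i s))⁻¹, ?_, ?_, ?_⟩
  · calc _ ≤ ∑ s : S, totalDegree ((X (i s) - C (s.1 (i s))) * C (a (i s) - s.1 (i s))⁻¹) :=
          totalDegree_finsetProd _ _
      _ ≤ ∑ s : S, 1 := Finset.sum_le_sum fun s _ => (totalDegree_mul _ _).trans <| by
          rw [totalDegree_C, add_zero]
          exact (totalDegree_sub _ _).trans (by simp)
      _ = S.card := by simp
  · intro s hs
    rw [map_prod]
    exact Finset.prod_eq_zero (Finset.mem_univ ⟨s, hs⟩) (by simp)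
  · rw [map_prod]
    refine Finset.prod_eq_one fun s _ => ?_
    simp only [map_mul, map_sub, eval_X, eval_C]
    exact mul_inv_cancel₀ (sub_ne_zero.2 (hi s).symm)

theorem exists_totalDegree_le_card_eval_eq (S : Finset (σ → F)) (v : S → F) :
    ∃ p : MvPolynomial σ F, p.totalDegree ≤ S.card ∧ ∀ s : S, eval s.1 p = v s := by
  classical
  choose p hp h0 h1 using fun s : S =>
    exists_totalDegree_le_card_eval_eq_one (S.erase s.1) (Finset.notMem_erase s.1 S)
  refine ⟨∑ s : S, C (v s) * p s, totalDegree_finsetSum_le fun s _ => ?_, fun s => ?_⟩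
  · calc _ ≤ (p s).totalDegree := (totalDegree_mul _ _).trans (by simp)
      _ ≤ S.card := (hp s).trans (Finset.card_le_card (Finset.erase_subset _ _))
  · rw [map_sum, Finset.sum_eq_single s]
    · simp [h1]
    · intro t _ hts
      rw [map_mul, h0 t s.1, mul_zero]
      exact Finset.mem_erase.2 ⟨fun h => hts (Subtype.ext h.symm), s.2⟩
    · simp

theorem finrank_add_card_le_finrank_restrictTotalDegree [Finite σ] {d : ℕ} (S : Finset (σ → F))
    (hS : S.card ≤ d) {W : Submodule F (MvPolynomial σ F)} (hW : W ≤ restrictTotalDegree σ F d)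
    (hWS : ∀ p ∈ W, ∀ s ∈ S, eval s p = 0) :
    finrank F W + S.card ≤ finrank F (restrictTotalDegree σ F d) := by
  let ev : restrictTotalDegree σ F d →ₗ[F] S → F :=
    (LinearMap.pi fun s : S => (aeval s.1 : MvPolynomial σ F →ₐ[F] F).toLinearMap) ∘ₗ
      Submodule.subtype _
  have hev : LinearMap.range ev = ⊤ := LinearMap.range_eq_top.2 fun v => by
    obtain ⟨p, hp, h⟩ := exists_totalDegree_le_card_eval_eq S v
    exact ⟨⟨p, (mem_restrictTotalDegree _ _ _).2 (hp.trans hS)⟩, funext h⟩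
  have hker : LinearMap.range (Submodule.inclusion hW) ≤ LinearMap.ker ev := by
    rintro _ ⟨p, rfl⟩
    exact LinearMap.mem_ker.2 (funext fun s => hWS p p.2 s s.2)
  have hrank := LinearMap.finrank_range_add_finrank_ker ev
  rw [hev, finrank_top, finrank_fintype_fun_eq_card, Fintype.card_coe] at hrank
  have hle := Submodule.finrank_mono hker
  rw [LinearMap.finrank_range_of_inj (Submodule.inclusion_injective hW)] at hle
  omega

theorem map_mulLeft_restrictTotalDegree_le (f : MvPolynomial σ F) {d k : ℕ}
    (h : f.totalDegree + d ≤ k) :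
    (restrictTotalDegree σ F d).map (LinearMap.mulLeft F f) ≤ restrictTotalDegree σ F k := by
  rintro _ ⟨p, hp, rfl⟩
  exact (mem_restrictTotalDegree _ _ _).2 <| (totalDegree_mul _ _).trans <|
    (Nat.add_le_add_left ((mem_restrictTotalDegree _ _ _).1 hp) _).trans h

theorem finrank_map_mulLeft {f : MvPolynomial σ F} (hf : f ≠ 0)
    (V : Submodule F (MvPolynomial σ F)) :
    finrank F (V.map (LinearMap.mulLeft F f)) = finrank F V :=
  (Submodule.equivMapOfInjective _ (mul_right_injective₀ hf) V).finrank_eq.symm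

theorem map_mulLeft_inf_map_mulLeft_le {f g : MvPolynomial σ F} (hg : g ≠ 0) (hfg : IsRelPrime f g)
    (d : ℕ) (V : Submodule F (MvPolynomial σ F)) :
    (restrictTotalDegree σ F (d + g.totalDegree)).map (LinearMap.mulLeft F f) ⊓
        V.map (LinearMap.mulLeft F g) ≤
      (restrictTotalDegree σ F d).map (LinearMap.mulLeft F (f * g)) := by
  rintro _ ⟨⟨p, hp, rfl⟩, q, -, hq⟩
  obtain ⟨r, rfl⟩ : g ∣ p := hfg.symm.dvd_of_dvd_mul_left ⟨q, hq.symm⟩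
  refine ⟨r, (mem_restrictTotalDegree _ _ _).2 ?_, mul_assoc f g r⟩
  rcases eq_or_ne r 0 with rfl | hr
  · simp
  · have := (mem_restrictTotalDegree _ _ _).1 hp
    rw [totalDegree_mul_of_isDomain hg hr] at this
    omega

theorem card_le_totalDegree_mul_of_isRelPrime {f g : MvPolynomial (Fin 2) F}
    (hf : f ≠ 0) (hg : g ≠ 0) (hfg : IsRelPrime f g) (S : Finset (Fin 2 → F))
    (hSf : ∀ s ∈ S, eval s f = 0) (hSg : ∀ s ∈ S, eval s g = 0) :
    S.card ≤ f.totalDegree * g.totalDegree := by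
  set a := f.totalDegree
  set b := g.totalDegree
  set e := S.card
  let V := restrictTotalDegree (Fin 2) F
  let U₁ := (V (e + b)).map (LinearMap.mulLeft F f)
  let U₂ := (V (e + a)).map (LinearMap.mulLeft F g)
  have hU₁ : U₁ ≤ V (e + a + b) := map_mulLeft_restrictTotalDegree_le f (by omega)
  have hU₂ : U₂ ≤ V (e + a + b) := map_mulLeft_restrictTotalDegree_le g (by omega)
  have : FiniteDimensional F U₁ := Submodule.finiteDimensional_of_le hU₁
  have : FiniteDimensional F U₂ := Submodule.finiteDimensional_of_le hU₂
  have hsup : finrank F ↥(U₁ ⊔ U₂) + e ≤ finrank F (V (e + a + b)) := by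
    refine finrank_add_card_le_finrank_restrictTotalDegree S (by omega) (sup_le hU₁ hU₂) ?_
    intro p hp s hs
    obtain ⟨_, ⟨p, -, rfl⟩, _, ⟨q, -, rfl⟩, rfl⟩ := Submodule.mem_sup.1 hp
    simp [hSf s hs, hSg s hs]
  have hinf : finrank F ↥(U₁ ⊓ U₂) ≤ finrank F (V e) := by
    refine (Submodule.finrank_mono (map_mulLeft_inf_map_mulLeft_le hg hfg e _)).trans_eq ?_
    exact finrank_map_mulLeft (mul_ne_zero hf hg) _
  have hadd := Submodule.finrank_sup_add_finrank_inf_eq U₁ U₂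
  rw [finrank_map_mulLeft hf, finrank_map_mulLeft hg] at hadd
  have hdim (d : ℕ) : 2 * finrank F (V d) = (d + 1) * (d + 2) :=
    two_mul_finrank_restrictTotalDegree_fin_two F d
  nlinarith [hdim (e + a + b), hdim (e + b), hdim (e + a), hdim e]

end Bezout

section Translation

open MvPolynomial

section CommRing

variable {σ R : Type*} [CommRing R]

/-- Substitution of `x + γ` for the vector `x` of variables. -/
noncomputable def translate (γ : σ → R) : MvPolynomial σ R →ₐ[R] MvPolynomial σ R :=
  aeval fun i => X i + C (γ i)

theorem eval_translate (γ x : σ → R) (p : MvPolynomial σ R) :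
    eval x (translate γ p) = eval (x + γ) p := by
  have h : (eval x).comp (translate γ).toRingHom = eval (x + γ) := by
    ext <;> simp [translate]
  exact congrArg (fun f => f p) h

theorem translate_translate (γ δ : σ → R) (p : MvPolynomial σ R) :
    translate γ (translate δ p) = translate (γ + δ) p := by
  have h : (translate γ).comp (translate δ) = (translate (γ + δ) : MvPolynomial σ R →ₐ[R] _) := by
    ext; simp [translate, add_assoc]
  exact congrArg (fun f => f p) h

theorem translate_zero (p : MvPolynomial σ R) : translate (0 : σ → R) p = p := by
  have h : translate 0 = AlgHom.id R (MvPolynomial σ R) := by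
    ext; simp [translate]
  exact congrArg (fun f => f p) h

theorem totalDegree_translate_le [Nontrivial R] (γ : σ → R) (p : MvPolynomial σ R) :
    (translate γ p).totalDegree ≤ p.totalDegree := by
  classical
  rw [translate, aeval_def, eval₂_eq]
  refine totalDegree_finsetSum_le fun m hm => ?_
  calc _ ≤ (∏ i ∈ m.support, (X i + C (γ i) : MvPolynomial σ R) ^ m i).totalDegree := by
        refine (totalDegree_mul _ _).trans ?_
        rw [algebraMap_eq, totalDegree_C, zero_add]
    _ ≤ ∑ i ∈ m.support, m i := by
        refine (totalDegree_finsetProd _ _).trans (Finset.sum_le_sum fun i _ => ?_)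
        refine (totalDegree_pow _ _).trans (mul_le_of_le_one_right' ?_)
        exact (totalDegree_add _ _).trans (by simp)
    _ ≤ p.totalDegree := le_totalDegree hm

theorem dvd_translate_iff (γ : σ → R) (p q : MvPolynomial σ R) :
    p ∣ translate γ q ↔ translate (-γ) p ∣ q := by
  constructor <;> intro h
  · simpa [translate_translate, translate_zero] using map_dvd (translate (-γ)) h
  · simpa [translate_translate, translate_zero] using map_dvd (translate γ) h

theorem irreducible_translate (γ : σ → R) {p : MvPolynomial σ R} (hp : Irreducible p) :
    Irreducible (translate γ p) := by
  let e : MvPolynomial σ R ≃ₐ[R] MvPolynomial σ R :=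
    AlgEquiv.ofAlgHom (translate γ) (translate (-γ))
      (by ext i : 1; simp [translate]) (by ext i : 1; simp [translate])
  exact (MulEquiv.irreducible_iff e).2 hp

/-- The restriction of a polynomial to the line `s ↦ s • a + γ`, as a polynomial in `s`. -/
noncomputable def toLine (a γ : σ → R) : MvPolynomial σ R →ₐ[R] Polynomial R :=
  aeval fun s => Polynomial.C (a s) * Polynomial.X + Polynomial.C (γ s)

theorem eval_toLine (a γ : σ → R) (p : MvPolynomial σ R) (s : R) :
    (toLine a γ p).eval s = eval (s • a + γ) p := by
  have h : (Polynomial.evalRingHom s).comp (toLine a γ).toRingHom = eval (s • a + γ) := by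
    ext i <;> simp [toLine, mul_comm s]
  exact congrArg (fun f => f p) h

theorem toLine_translate (a γ δ : σ → R) (p : MvPolynomial σ R) :
    toLine a γ (translate δ p) = toLine a (γ + δ) p := by
  have h : (toLine a γ).comp (translate δ) = toLine a (γ + δ) := by
    ext; simp [toLine, translate, add_assoc]
  exact congrArg (fun f => f p) h

end CommRing

theorem natDegree_eq_zero_of_comp_X_add_one_eq {R : Type*} [CommRing R] [IsDomain R] [CharZero R]
    {q : Polynomial R} {c : R} (h : q.comp (Polynomial.X + 1) = Polynomial.C c * q) :
    q.natDegree = 0 := by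
  rcases eq_or_ne q 0 with rfl | hq
  · exact Polynomial.natDegree_zero
  have hc : c = 1 := by
    have hlead := congrArg Polynomial.leadingCoeff h
    rw [← Polynomial.C_1, Polynomial.leadingCoeff_comp
      ((Polynomial.natDegree_X_add_C (1 : R)).trans_ne one_ne_zero),
      Polynomial.leadingCoeff_X_add_C, one_pow, mul_one,
      Polynomial.leadingCoeff_mul, Polynomial.leadingCoeff_C] at hlead
    exact (mul_eq_right₀ (Polynomial.leadingCoeff_ne_zero.2 hq)).1 hlead.symm
  have hperiod (k : ℕ) : q.eval (k : R) = q.eval 0 := by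
    induction k with
    | zero => simp
    | succ k ih =>
      have := congrArg (Polynomial.eval (k : R)) h
      rw [Polynomial.eval_comp, hc, Polynomial.C_1, one_mul, ih] at this
      simpa using this
  have hconst : q = Polynomial.C (q.eval 0) := by
    refine Polynomial.eq_of_infinite_eval_eq _ _
      ((Set.infinite_range_of_injective (Nat.cast_injective (R := R))).mono ?_)
    rintro _ ⟨k, rfl⟩
    simp [hperiod]
  rw [hconst, Polynomial.natDegree_C]

variable {σ K : Type*} [Field K]

theorem not_irreducible_C (a : K) : ¬ Irreducible (C a : MvPolynomial σ K) := by
  rcases eq_or_ne a 0 with rfl | ha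
  · simp
  · exact fun h => h.not_isUnit ((IsUnit.mk0 _ ha).map C)

theorem one_le_totalDegree_of_irreducible {F : MvPolynomial σ K} (hF : Irreducible F) :
    1 ≤ F.totalDegree := by
  by_contra! h
  rw [Nat.lt_one_iff, totalDegree_eq_zero_iff_eq_C] at h
  exact not_irreducible_C _ (h ▸ hF)

theorem totalDegree_prod_of_ne_zero {R ι : Type*} [CommRing R] [IsDomain R] (s : Finset ι)
    (f : ι → MvPolynomial σ R) (h : ∀ i ∈ s, f i ≠ 0) :
    (∏ i ∈ s, f i).totalDegree = ∑ i ∈ s, (f i).totalDegree := by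
  classical
  induction s using Finset.induction_on with
  | empty => simp
  | insert a s ha ih =>
    rw [Finset.forall_mem_insert] at h
    rw [Finset.prod_insert ha, Finset.sum_insert ha, totalDegree_mul_of_isDomain h.1
      (Finset.prod_ne_zero_iff.2 h.2), ih h.2]

section CharZero

variable [CharZero K]

theorem eval_smul_add_of_translate_eq_C_mul {F : MvPolynomial σ K} {δ : σ → K} {c : K}
    (h : translate δ F = C c * F) (x : σ → K) (t : K) : eval (t • δ + x) F = eval x F := by
  have hcomp : (toLine δ x F).comp (Polynomial.X + 1) = Polynomial.C c * toLine δ x F := by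
    refine Polynomial.funext fun s => ?_
    have := congrArg (eval (s • δ + x)) h
    rw [eval_translate, map_mul, eval_C] at this
    simp only [Polynomial.eval_comp, Polynomial.eval_add, Polynomial.eval_X, Polynomial.eval_one,
      Polynomial.eval_mul, Polynomial.eval_C, eval_toLine, ← this]
    congr 2
    rw [add_smul, one_smul]
    abel
  obtain ⟨b, hb⟩ := Polynomial.natDegree_eq_zero.1 (natDegree_eq_zero_of_comp_X_add_one_eq hcomp)
  have hline (s : K) : eval (s • δ + x) F = b := by rw [← eval_toLine, ← hb, Polynomial.eval_C]
  rw [hline, ← hline 0, zero_smul, zero_add]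

theorem eval_smul_add_of_associated_translate {F : MvPolynomial σ K} {δ : σ → K}
    (h : Associated (translate δ F) F) (x : σ → K) (t : K) : eval (t • δ + x) F = eval x F := by
  obtain ⟨u, hu⟩ := h.symm
  obtain ⟨c, -, hc⟩ := isUnit_iff_eq_C_of_isReduced.1 u.isUnit
  exact eval_smul_add_of_translate_eq_C_mul (by rw [← hu, hc, mul_comm]) x t

theorem exists_linear_eq_zero_of_associated_translate {F : MvPolynomial (Fin 2) K}
    (hF : Irreducible F) :
    ∃ a b : K, (a ≠ 0 ∨ b ≠ 0) ∧
      ∀ δ : Fin 2 → K, Associated (translate δ F) F → a * δ 0 + b * δ 1 = 0 := by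
  by_cases h : ∀ δ : Fin 2 → K, Associated (translate δ F) F → δ = 0
  · exact ⟨1, 0, by simp, fun δ hδ => by simp [h δ hδ]⟩
  push Not at h
  obtain ⟨δ, hδ, hδ0⟩ := h
  refine ⟨-δ 1, δ 0, ?_, fun ε hε => ?_⟩
  · by_contra! h
    refine hδ0 (funext fun i => ?_)
    fin_cases i
    · exact h.2
    · simpa using h.1
  by_contra hdet
  set Δ := -δ 1 * ε 0 + δ 0 * ε 1 with hΔ
  -- `δ` and `ε` span the plane and `F` is invariant under both directions.
  have hconst (x : Fin 2 → K) : eval x F = eval 0 F := by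
    have hx : x = ((x 1 * δ 0 - x 0 * δ 1) / Δ) • ε +
        (((x 0 * ε 1 - x 1 * ε 0) / Δ) • δ + 0) := by
      refine funext fun i => ?_
      fin_cases i <;> simp <;> field_simp <;> simp only [hΔ] <;> ring
    rw [hx, eval_smul_add_of_associated_translate hε, eval_smul_add_of_associated_translate hδ]
  have hFC : F = C (eval 0 F) := MvPolynomial.funext fun x => by rw [hconst x, eval_C]
  exact not_irreducible_C _ (hFC ▸ hF)

theorem exists_linear_card_image_le_of_dvd_translate {D F : MvPolynomial (Fin 2) K} [DecidableEq K]
    (hD : D ≠ 0) (hF : Irreducible F) (Γ : Finset (Fin 2 → K)) (h : ∀ γ ∈ Γ, F ∣ translate γ D) :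
    ∃ a b : K, (a ≠ 0 ∨ b ≠ 0) ∧
      (Γ.image fun γ => a * γ 0 + b * γ 1).card ≤ D.totalDegree := by
  obtain ⟨a, b, hab, hlin⟩ := exists_linear_eq_zero_of_associated_translate hF
  refine ⟨a, b, hab, ?_⟩
  set I := Γ.image fun γ => a * γ 0 + b * γ 1
  choose γ hγ hv using fun v : I => Finset.mem_image.1 v.2
  have hirr (v : I) : Irreducible (translate (-γ v) F) := irreducible_translate _ hF
  -- Translates of `F` belonging to different values of the linear form are not associated.
  have hprod : ∏ v : I, translate (-γ v) F ∣ D := by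
    refine Finset.prod_dvd_of_isRelPrime (fun v _ w _ hvw => ?_)
      fun v _ => (dvd_translate_iff _ _ _).1 (h _ (hγ v))
    refine (hirr v).isRelPrime_iff_not_dvd.2 fun hd => hvw (Subtype.ext ?_)
    have hassoc := ((hirr v).associated_of_dvd (hirr w) hd).map (translate (γ w))
    rw [translate_translate, translate_translate, add_neg_cancel, translate_zero] at hassoc
    have hzero := hlin _ hassoc
    simp only [Pi.add_apply, Pi.neg_apply] at hzero
    rw [← hv, ← hv]
    linear_combination -hzero
  calc I.card = ∑ v : I, 1 := by simp
    _ ≤ ∑ v : I, (translate (-γ v) F).totalDegree :=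
        Finset.sum_le_sum fun v _ => one_le_totalDegree_of_irreducible (hirr v)
    _ = (∏ v : I, translate (-γ v) F).totalDegree :=
        (totalDegree_prod_of_ne_zero _ _ fun v _ => (hirr v).ne_zero).symm
    _ ≤ D.totalDegree := totalDegree_le_of_dvd_of_isDomain hprod hD

end CharZero

theorem exists_irreducible_infinite_dvd {ι : Type*} [Infinite ι] {D : MvPolynomial σ K}
    (hD : D ≠ 0) {g : ι → MvPolynomial σ K} (h : ∀ t, ¬ IsRelPrime D (g t)) :
    ∃ F, Irreducible F ∧ {t | F ∣ g t}.Infinite := by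
  classical
  have hfactor (t : ι) :
      ∃ F : {F // F ∈ (UniqueFactorizationMonoid.factors D).toFinset}, F.1 ∣ g t := by
    have := h t
    rw [UniqueFactorizationMonoid.isRelPrime_iff_no_prime_factors hD] at this
    push Not at this
    obtain ⟨d, hd, hdg, hdp⟩ := this
    obtain ⟨q, hq, hdq⟩ := UniqueFactorizationMonoid.exists_mem_factors_of_dvd hD hdp.irreducible hd
    exact ⟨⟨q, Multiset.mem_toFinset.2 hq⟩, hdq.symm.dvd.trans hdg⟩
  choose f hf using hfactor
  obtain ⟨⟨F, hFm⟩, hFi⟩ := Finite.exists_infinite_fiber f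
  refine ⟨F, UniqueFactorizationMonoid.irreducible_of_factor F (Multiset.mem_toFinset.1 hFm),
    (Set.infinite_coe_iff.1 hFi).mono fun t ht => ?_⟩
  have := hf t
  rwa [show f t = ⟨F, hFm⟩ from ht] at this

theorem dvd_of_infinite_dvd_sum {ι : Type*} {F : MvPolynomial σ K} (hF : Irreducible F)
    (Γ : Finset ι) {e : ι → ℕ} (he : Function.Injective e) (G : ι → MvPolynomial σ K)
    (h : {t : K | F ∣ ∑ i ∈ Γ, C (t ^ e i) * G i}.Infinite) {i : ι} (hi : i ∈ Γ) : F ∣ G i := by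
  have hprime : (Ideal.span {F}).IsPrime := (Ideal.span_singleton_prime hF.ne_zero).2 hF.prime
  let mk := Ideal.Quotient.mk (Ideal.span {F})
  let P : Polynomial (MvPolynomial σ K ⧸ Ideal.span {F}) :=
    ∑ i ∈ Γ, Polynomial.C (mk (G i)) * Polynomial.X ^ e i
  have hP : P = 0 := by
    refine Polynomial.eq_zero_of_infinite_isRoot _
      ((h.image ((mk.comp C).injective.injOn)).mono ?_)
    rintro _ ⟨t, ht, rfl⟩
    have h0 : mk (∑ i ∈ Γ, C (t ^ e i) * G i) = 0 :=
      Ideal.Quotient.eq_zero_iff_mem.2 (Ideal.mem_span_singleton.2 ht)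
    change P.eval (mk (C t)) = 0
    rw [← h0, Polynomial.eval_finsetSum, map_sum]
    exact Finset.sum_congr rfl fun i _ => by simp [mul_comm]
  have hcoeff := congrArg (Polynomial.coeff · (e i)) hP
  simp only [P, Polynomial.finsetSum_coeff, Polynomial.coeff_C_mul, Polynomial.coeff_X_pow,
    Polynomial.coeff_zero] at hcoeff
  rw [Finset.sum_eq_single_of_mem i hi fun j _ hji => by
    rw [if_neg fun h => hji (he h).symm, mul_zero], if_pos rfl, mul_one] at hcoeff
  exact Ideal.mem_span_singleton.1 (Ideal.Quotient.eq_zero_iff_mem.1 hcoeff)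

-- Bézout's bound, applied to `D` and generic combinations of its translates by `Γ`, which all
-- vanish on `P`, yields a common irreducible factor of these translates.
theorem exists_linear_card_image_le_of_eval_add_eq_zero [CharZero K] [DecidableEq K]
    {D : MvPolynomial (Fin 2) K} {M : ℕ} (hD : D ≠ 0) (hdeg : D.totalDegree ≤ M)
    (P Γ : Finset (Fin 2 → K)) (hΓ : 0 ∈ Γ) (hP : M ^ 2 < P.card)
    (h : ∀ p ∈ P, ∀ γ ∈ Γ, eval (p + γ) D = 0) :
    ∃ a b : K, (a ≠ 0 ∨ b ≠ 0) ∧ (Γ.image fun γ => a * γ 0 + b * γ 1).card ≤ M := by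
  obtain ⟨e, he⟩ : ∃ e : Γ → ℕ, Function.Injective e :=
    ⟨_, Fin.val_injective.comp Γ.equivFin.injective⟩
  let g (t : K) := ∑ i : Γ, C (t ^ e i) * translate i.1 D
  have hDP : ∀ p ∈ P, eval p D = 0 := fun p hp => by simpa using h p hp 0 hΓ
  have hgP (t : K) : ∀ p ∈ P, eval p (g t) = 0 := fun p hp => by
    simp only [g, map_sum, map_mul]
    exact Finset.sum_eq_zero fun γ _ => by rw [eval_translate, h p hp _ γ.2, mul_zero]
  have hgdeg (t : K) : (g t).totalDegree ≤ M := totalDegree_finsetSum_le fun γ _ => by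
    refine (totalDegree_mul _ _).trans ?_
    rw [totalDegree_C, zero_add]
    exact (totalDegree_translate_le _ _).trans hdeg
  have hrel (t : K) : ¬ IsRelPrime D (g t) := fun hrel => by
    rcases eq_or_ne (g t) 0 with hg0 | hg0
    · rw [hg0, isRelPrime_zero_right] at hrel
      obtain ⟨p, hp⟩ := Finset.card_pos.1 (by omega : 0 < P.card)
      exact (hrel.map (eval p)).ne_zero (hDP p hp)
    · have := card_le_totalDegree_mul_of_isRelPrime hD hg0 hrel P hDP (hgP t)
      nlinarith [Nat.mul_le_mul hdeg (hgdeg t)]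
  obtain ⟨F, hF, hinf⟩ := exists_irreducible_infinite_dvd hD hrel
  obtain ⟨a, b, hab, hc⟩ := exists_linear_card_image_le_of_dvd_translate hD hF Γ fun γ hγ =>
    dvd_of_infinite_dvd_sum (i := (⟨γ, hγ⟩ : Γ)) hF Finset.univ he
      (fun i : Γ => translate i.1 D) hinf (Finset.mem_univ _)
  exact ⟨a, b, hab, hc.trans hdeg⟩

end Translation

theorem coeff_prod_sum_of_natDegree_le {ι R : Type*} [CommSemiring R] (s : Finset ι)
    (f : ι → Polynomial R) (d : ι → ℕ) (h : ∀ i ∈ s, (f i).natDegree ≤ d i) :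
    (∏ i ∈ s, f i).coeff (∑ i ∈ s, d i) = ∏ i ∈ s, (f i).coeff (d i) := by
  classical
  induction s using Finset.induction_on with
  | empty => simp
  | insert a s ha ih =>
    have hs i (hi : i ∈ s) := h i (Finset.mem_insert_of_mem hi)
    rw [Finset.prod_insert ha, Finset.sum_insert ha, Finset.prod_insert ha,
      Polynomial.coeff_mul_add_eq_of_natDegree_le (h a (Finset.mem_insert_self _ _))
        ((Polynomial.natDegree_prod_le s f).trans (Finset.sum_le_sum hs)), ih hs]

theorem coeff_det_of_natDegree_le {ι R : Type*} [CommRing R] [Fintype ι] [DecidableEq ι]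
    (M : Matrix ι ι (Polynomial R)) (d : ι → ℕ) (h : ∀ i l, (M i l).natDegree ≤ d l) :
    M.det.coeff (∑ l, d l) = (Matrix.of fun i l => (M i l).coeff (d l)).det := by
  rw [Matrix.det_apply', Matrix.det_apply', Polynomial.finsetSum_coeff]
  refine Finset.sum_congr rfl fun τ _ => ?_
  rw [← Polynomial.C_eq_intCast, Polynomial.coeff_C_mul,
    coeff_prod_sum_of_natDegree_le Finset.univ (fun l => M (τ l) l) d fun l _ => h _ l]
  rfl

section Eliminant

open MvPolynomial

section CommRing

variable {σ R : Type*} [CommRing R] (a γ : σ → R) (p : MvPolynomial σ R)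

theorem toLine_eq_sum : toLine a γ p = ∑ m ∈ p.support, Polynomial.C (p.coeff m) *
    ∏ s ∈ m.support, (Polynomial.C (a s) * Polynomial.X + Polynomial.C (γ s)) ^ m s := by
  rw [toLine, aeval_def, eval₂_eq, Polynomial.algebraMap_eq]

theorem natDegree_linear_pow_le (s : σ) (k : ℕ) :
    ((Polynomial.C (a s) * Polynomial.X + Polynomial.C (γ s)) ^ k).natDegree ≤ k :=
  (Polynomial.natDegree_pow_le_of_le k Polynomial.natDegree_linear_le).trans (mul_one k).le

theorem natDegree_prod_linear_pow_le (m : σ →₀ ℕ) : (∏ s ∈ m.support,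
    (Polynomial.C (a s) * Polynomial.X + Polynomial.C (γ s)) ^ m s).natDegree ≤ m.degree :=
  (Polynomial.natDegree_prod_le _ _).trans
    (Finset.sum_le_sum fun s _ => natDegree_linear_pow_le a γ s (m s))

theorem coeff_prod_linear_pow (m : σ →₀ ℕ) : (∏ s ∈ m.support,
    (Polynomial.C (a s) * Polynomial.X + Polynomial.C (γ s)) ^ m s).coeff m.degree =
      ∏ s ∈ m.support, a s ^ m s := by
  refine (coeff_prod_sum_of_natDegree_le _ _ m fun s _ =>
    natDegree_linear_pow_le a γ s (m s)).trans (Finset.prod_congr rfl fun s _ => ?_)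
  have := Polynomial.coeff_pow_of_natDegree_le (m := m s)
    (Polynomial.natDegree_linear_le (a := a s) (b := γ s))
  rw [mul_one] at this
  simp [this]

theorem natDegree_toLine_le : (toLine a γ p).natDegree ≤ p.totalDegree := by
  rw [toLine_eq_sum]
  refine Polynomial.natDegree_sum_le_of_forall_le _ _ fun m hm => ?_
  exact (Polynomial.natDegree_C_mul_le _ _).trans
    ((natDegree_prod_linear_pow_le a γ m).trans (le_totalDegree hm))

theorem coeff_toLine_totalDegree : (toLine a γ p).coeff p.totalDegree =
    eval a (homogeneousComponent p.totalDegree p) := by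
  rw [toLine_eq_sum, Polynomial.finsetSum_coeff, homogeneousComponent_apply, map_sum,
    Finset.sum_filter]
  refine Finset.sum_congr rfl fun m hm => ?_
  rw [Polynomial.coeff_C_mul]
  split_ifs with h
  · rw [← h, coeff_prod_linear_pow, eval_monomial, Finsupp.prod]
  · rw [Polynomial.coeff_eq_zero_of_natDegree_lt, mul_zero]
    exact (natDegree_prod_linear_pow_le a γ m).trans_lt (lt_of_le_of_ne (le_totalDegree hm) h)

variable {p} in
theorem homogeneousComponent_totalDegree_ne_zero (hp : p ≠ 0) :
    homogeneousComponent p.totalDegree p ≠ 0 := by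
  obtain ⟨m, hm, hmd⟩ := Finset.exists_mem_eq_sup p.support
    (Finset.nonempty_iff_ne_empty.2 (mt support_eq_empty.1 hp)) (fun s => s.sum fun _ e => e)
  intro h
  have := congrArg (coeff m) h
  rw [coeff_homogeneousComponent, if_pos (by exact hmd.symm), coeff_zero] at this
  exact mem_support_iff.1 hm this

/-- The determinant obtained by eliminating `y` from the equations
`∑ l, p l (x + γ i) * z l ^ i * y l = 0`, as a polynomial in `x`. Its vanishing at a point is a
purely polynomial consequence of the vanishing of `∑ l, p l * Y l` at the points
`(x + γ i, z l ^ i * y l)`. -/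
noncomputable def eliminant {m : ℕ} (p : Fin m → MvPolynomial σ R) (γ : Fin m → σ → R)
    (z : Fin m → R) : MvPolynomial σ R :=
  (Matrix.of fun i l : Fin m => translate (γ i) (p l) * C (z l ^ (i : ℕ))).det

-- Restricted to a line through the origin, the top coefficient of the eliminant is a Vandermonde
-- determinant in `z` times the product of the leading forms of the `p l`.
theorem coeff_toLine_eliminant {m : ℕ} (p : Fin m → MvPolynomial σ R) (γ : Fin m → σ → R)
    (z : Fin m → R) :
    (toLine a 0 (eliminant p γ z)).coeff (∑ l, (p l).totalDegree) =
      (∏ l, eval a (homogeneousComponent (p l).totalDegree (p l))) *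
        (Matrix.vandermonde z).det := by
  have hentry (i l : Fin m) : toLine a 0 (translate (γ i) (p l) * C (z l ^ (i : ℕ))) =
      toLine a (γ i) (p l) * Polynomial.C (z l ^ (i : ℕ)) := by
    rw [map_mul, toLine_translate, zero_add, algHom_C, Polynomial.algebraMap_eq]
  rw [eliminant, AlgHom.map_det, coeff_det_of_natDegree_le _ fun l => (p l).totalDegree]
  · rw [← Matrix.det_transpose (Matrix.vandermonde z), ← Matrix.det_mul_row]
    congr 2 with i l
    rw [AlgHom.mapMatrix_apply, Matrix.map_apply, Matrix.of_apply, hentry,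
      Polynomial.coeff_mul_C, coeff_toLine_totalDegree]
    rfl
  · intro i l
    rw [AlgHom.mapMatrix_apply, Matrix.map_apply, Matrix.of_apply, hentry]
    exact (Polynomial.natDegree_mul_C_le _ _).trans (natDegree_toLine_le a _ _)

end CommRing

variable {σ R : Type*} [CommRing R] [IsDomain R] {m : ℕ} (p : Fin m → MvPolynomial σ R)
  (γ : Fin m → σ → R) (z : Fin m → R)

theorem totalDegree_eliminant_le : (eliminant p γ z).totalDegree ≤ ∑ l, (p l).totalDegree := by
  rw [eliminant, Matrix.det_apply']
  refine totalDegree_finsetSum_le fun τ _ => (totalDegree_mul _ _).trans ?_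
  rw [← map_intCast (C (σ := σ) (R := R)), totalDegree_C, zero_add]
  refine (totalDegree_finsetProd _ _).trans (Finset.sum_le_sum fun l _ => ?_)
  refine (totalDegree_mul _ _).trans ?_
  rw [totalDegree_C, add_zero]
  exact totalDegree_translate_le _ _

theorem eliminant_ne_zero [Infinite R] (hp : ∀ l, p l ≠ 0) (hz : Function.Injective z) :
    eliminant p γ z ≠ 0 := by
  have htop : ∏ l, homogeneousComponent (p l).totalDegree (p l) ≠ 0 :=
    Finset.prod_ne_zero_iff.2 fun l _ => homogeneousComponent_totalDegree_ne_zero (hp l)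
  obtain ⟨a, ha⟩ : ∃ a, eval a (∏ l, homogeneousComponent (p l).totalDegree (p l)) ≠ 0 := by
    by_contra! h
    exact htop (MvPolynomial.funext fun x => by rw [h x, map_zero])
  rw [map_prod] at ha
  intro h0
  have hcoeff := coeff_toLine_eliminant a p γ z
  rw [h0, map_zero, Polynomial.coeff_zero] at hcoeff
  exact mul_ne_zero ha (Matrix.det_vandermonde_ne_zero_iff.2 hz) hcoeff.symm

theorem eval_eliminant_eq_zero {η : σ → R} {y : Fin m → R} (hy : y ≠ 0)
    (h : ∀ i : Fin m, ∑ l, eval (η + γ i) (p l) * z l ^ (i : ℕ) * y l = 0) :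
    eval η (eliminant p γ z) = 0 := by
  rw [eliminant, RingHom.map_det]
  refine Matrix.exists_mulVec_eq_zero_iff.1 ⟨y, hy, _root_.funext fun i => ?_⟩
  rw [Pi.zero_apply, ← h i]
  simp [Matrix.mulVec, dotProduct, eval_translate]

theorem card_le_totalDegree_of_eval_const_eq_zero [Infinite R] {D : MvPolynomial Unit R}
    (hD : D ≠ 0) (S : Finset R) (h : ∀ s ∈ S, eval (fun _ => s) D = 0) :
    S.card ≤ D.totalDegree := by
  have heval (s : R) : (toLine 1 0 D).eval s = eval (fun _ => s) D := by
    rw [eval_toLine]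
    congr 2
    ext
    simp
  have hline : toLine 1 0 D ≠ 0 := fun h0 => hD <| MvPolynomial.funext fun x => by
    rw [map_zero, show x = fun _ => x () from rfl, ← heval, h0, Polynomial.eval_zero]
  refine (Polynomial.card_le_degree_of_subset_roots fun s hs => ?_).trans
    (natDegree_toLine_le 1 0 D)
  rw [Polynomial.mem_roots hline, Polynomial.IsRoot, heval]
  exact h s hs

end Eliminant

theorem exists_int_vector_forms_small {S Q : Type*} [Fintype S] [Fintype Q] (y : Q → S → ℝ)
    (X G : ℕ) {Y ε : ℝ} (hε : 0 < ε) (hy : ∀ q s, |y q s| ≤ Y)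
    (hG : Fintype.card S * X * Y ≤ G * ε)
    (hcard : (2 * G + 1) ^ Fintype.card Q < (X + 1) ^ Fintype.card S) :
    ∃ c : S → ℤ, c ≠ 0 ∧ (∀ s, |c s| ≤ X) ∧ ∀ q, |∑ s, c s * y q s| ≤ ε := by
  classical
  have hbound (c : S → Fin (X + 1)) (q) : |(∑ s, (c s : ℝ) * y q s) / ε| ≤ G := by
    rw [abs_div, abs_of_pos hε, div_le_iff₀ hε]
    calc |∑ s, (c s : ℝ) * y q s| ≤ ∑ s, |(c s : ℝ) * y q s| := Finset.abs_sum_le_sum_abs _ _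
      _ ≤ ∑ _s : S, X * Y := Finset.sum_le_sum fun s _ => by
          rw [abs_mul, Nat.abs_cast]
          exact mul_le_mul (by exact_mod_cast Nat.lt_succ_iff.1 (c s).2) (hy q s) (abs_nonneg _)
            (Nat.cast_nonneg _)
      _ ≤ G * ε := by simpa [mul_assoc] using hG
  have hfloor (c : S → Fin (X + 1)) (q) :
      ⌊(∑ s, (c s : ℝ) * y q s) / ε⌋ ∈ Finset.Icc (-(G : ℤ)) G := by
    obtain ⟨hl, hu⟩ := abs_le.1 (hbound c q)
    rw [Finset.mem_Icc, Int.le_floor]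
    exact ⟨by exact_mod_cast hl, by exact_mod_cast (Int.floor_le _).trans hu⟩
  let f : (S → Fin (X + 1)) → (Q → Finset.Icc (-(G : ℤ)) G) := fun c q => ⟨_, hfloor c q⟩
  obtain ⟨c, c', hne, hcc⟩ := Fintype.exists_ne_map_eq_of_card_lt f (by
    simp only [Fintype.card_pi, Finset.prod_const, Finset.card_univ, Fintype.card_fin,
      Fintype.card_coe, Int.card_Icc]
    convert hcard using 2
    omega)
  refine ⟨fun s => (c s : ℤ) - c' s, fun h => hne (funext fun s => ?_), fun s => ?_, fun q => ?_⟩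
  · exact Fin.ext (by exact_mod_cast sub_eq_zero.1 (congrFun h s))
  · rw [abs_le]
    have hc := (c s).2
    have hc' := (c' s).2
    constructor <;> dsimp only <;> omega
  · have hclose := (Int.abs_sub_lt_one_of_floor_eq_floor
      (congrArg Subtype.val (congrFun hcc q))).le
    rw [← sub_div, abs_div, abs_of_pos hε, div_le_one hε, ← Finset.sum_sub_distrib] at hclose
    simpa only [Int.cast_sub, Int.cast_natCast, sub_mul] using hclose

section ExponentialPolynomial

open Real Finset

theorem abs_exp_sub_sum_range_le {A s : ℝ} {T : ℕ} (hs : |s| ≤ A) (hT : A / (T + 1) ≤ 1 / 2) :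
    |exp s - ∑ t ∈ range T, s ^ t / t.factorial| ≤ 2 * (A ^ T / T.factorial) := by
  have h := Complex.exp_bound' (x := (s : ℂ)) (n := T) (by
    rw [Complex.norm_real, Real.norm_eq_abs, Nat.cast_succ]
    exact le_trans (by gcongr) hT)
  have hcast : (Complex.exp s - ∑ m ∈ range T, (s : ℂ) ^ m / m.factorial) =
      ((exp s - ∑ t ∈ range T, s ^ t / t.factorial : ℝ) : ℂ) := by
    push_cast; rfl
  rw [hcast, Complex.norm_real, Complex.norm_real, Real.norm_eq_abs, Real.norm_eq_abs] at h
  refine h.trans ?_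
  rw [mul_comm]
  gcongr

/-- The value at `(u, v)` of the polynomial of degree `< J` in `v` and `< K` in `u` with the array
of coefficients `b`. -/
def biPoly (J K : ℕ) (b : ℕ → ℕ → ℝ) (u v : ℝ) : ℝ :=
  ∑ j ∈ range J, ∑ a ∈ range K, b j a * v ^ j * u ^ a

/-- The length (sum of the absolute values of the coefficients) of the polynomial `biPoly J K b`. -/
def biPolyLength (J K : ℕ) (b : ℕ → ℕ → ℝ) : ℝ :=
  ∑ j ∈ range J, ∑ a ∈ range K, |b j a|

variable {J K : ℕ} {b : ℕ → ℕ → ℝ} {u v : ℝ}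

theorem biPolyLength_nonneg : 0 ≤ biPolyLength J K b :=
  sum_nonneg fun _ _ => sum_nonneg fun _ _ => abs_nonneg _

theorem biPolyLength_const_mul (c : ℝ) :
    biPolyLength J K (fun j a => c * b j a) = |c| * biPolyLength J K b := by
  simp only [biPolyLength, abs_mul, mul_sum]

theorem biPoly_const_mul (c : ℝ) :
    biPoly J K (fun j a => c * b j a) u v = c * biPoly J K b u v := by
  simp only [biPoly, mul_sum, mul_assoc]

theorem sum_biPoly {ι : Type*} (s : Finset ι) (b : ι → ℕ → ℕ → ℝ) :
    ∑ i ∈ s, biPoly J K (b i) u v = biPoly J K (fun j a => ∑ i ∈ s, b i j a) u v := by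
  simp only [biPoly, sum_mul]
  rw [sum_comm]
  exact sum_congr rfl fun j _ => sum_comm

theorem abs_biPoly_le_biPolyLength (hu : |u| ≤ 1) (hv : |v| ≤ 1) :
    |biPoly J K b u v| ≤ biPolyLength J K b := by
  refine (abs_sum_le_sum_abs _ _).trans (sum_le_sum fun j _ =>
    (abs_sum_le_sum_abs _ _).trans (sum_le_sum fun a _ => ?_))
  rw [abs_mul, abs_mul, abs_pow, abs_pow, mul_assoc]
  exact mul_le_of_le_one_right (abs_nonneg _)
    (mul_le_one₀ (pow_le_one₀ (abs_nonneg _) hv) (by positivity) (pow_le_one₀ (abs_nonneg _) hu))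

theorem biPolyLength_le {ε : ℝ} (h : ∀ j < J, ∀ a < K, |b j a| ≤ ε) :
    biPolyLength J K b ≤ J * K * ε := by
  calc biPolyLength J K b ≤ ∑ _j ∈ range J, ∑ _a ∈ range K, ε :=
        sum_le_sum fun j hj => sum_le_sum fun a ha => h j (mem_range.1 hj) a (mem_range.1 ha)
    _ = J * K * ε := by simp [mul_assoc]

/-- The coefficients of the product of `biPoly J K b u v` and the Taylor polynomial of degree `< T`
of `exp (s * u)`. -/
noncomputable def mulExpCoeff (K T : ℕ) (b : ℕ → ℕ → ℝ) (s : ℝ) (j q : ℕ) : ℝ :=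
  ∑ a ∈ range K, if a ≤ q ∧ q - a < T then b j a * (s ^ (q - a) / (q - a).factorial) else 0

theorem biPoly_mul_sum_pow_div_factorial (T : ℕ) (s : ℝ) :
    biPoly J K b u v * ∑ t ∈ range T, (s * u) ^ t / t.factorial =
      biPoly J (K + T) (mulExpCoeff K T b s) u v := by
  simp only [biPoly, mulExpCoeff, sum_mul]
  refine sum_congr rfl fun j _ => ?_
  rw [sum_comm]
  refine sum_congr rfl fun a ha => ?_
  simp only [mul_sum, ite_mul, zero_mul]
  rw [← sum_filter]
  refine sum_bij (fun t _ => a + t) (fun t ht => ?_) (fun t _ t' _ h => by omega)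
    (fun q hq => ?_) fun t _ => ?_
  · simp only [mem_range, mem_filter] at ha ht ⊢
    omega
  · simp only [mem_range, mem_filter] at hq
    exact ⟨q - a, mem_range.2 hq.2.2, by omega⟩
  · rw [Nat.add_sub_cancel_left]
    ring

theorem abs_mulExpCoeff_le {A s : ℝ} (hs : |s| ≤ A) (T : ℕ) {j : ℕ} (hj : j < J) (q : ℕ) :
    |mulExpCoeff K T b s j q| ≤ biPolyLength J K b * exp A := by
  calc |mulExpCoeff K T b s j q| ≤ ∑ a ∈ range K, |b j a| * exp A := by
        refine (abs_sum_le_sum_abs _ _).trans (sum_le_sum fun a _ => ?_)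
        split_ifs
        · rw [abs_mul, abs_div, abs_pow, Nat.abs_cast]
          gcongr
          exact (pow_div_factorial_le_exp _ (abs_nonneg _) _).trans (exp_le_exp.2 hs)
        · rw [abs_zero]; positivity
    _ ≤ biPolyLength J K b * exp A := by
        rw [← sum_mul]
        gcongr
        exact single_le_sum (f := fun j => ∑ a ∈ range K, |b j a|)
          (fun _ _ => sum_nonneg fun _ _ => abs_nonneg _) (mem_range.2 hj)

-- The pigeonhole principle makes all Taylor coefficients in `u` up to order `K + T` small.
theorem exists_int_sum_biPoly_mul_exp_small {ι : Type*} [Fintype ι] (J K T X G : ℕ) (s : ι → ℝ)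
    (b : ι → ℕ → ℕ → ℝ) {A M ε : ℝ} (hM : 0 ≤ M) (hε : 0 < ε) (hs : ∀ i, |s i| ≤ A)
    (hT : A / (T + 1) ≤ 1 / 2) (hb : ∀ i, biPolyLength J K (b i) ≤ M)
    (hG : Fintype.card ι * X * (M * exp A) ≤ G * ε)
    (hcard : (2 * G + 1) ^ (J * (K + T)) < (X + 1) ^ Fintype.card ι) :
    ∃ c : ι → ℤ, c ≠ 0 ∧ (∀ i, |c i| ≤ X) ∧ ∀ u v : ℝ, |u| ≤ 1 → |v| ≤ 1 →
      |∑ i, c i * (biPoly J K (b i) u v * exp (s i * u))| ≤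
        J * (K + T) * ε + Fintype.card ι * X * M * (2 * (A ^ T / T.factorial)) := by
  obtain ⟨c, hc0, hcX, hc⟩ := exists_int_vector_forms_small
    (fun (q : Fin J × Fin (K + T)) i => mulExpCoeff K T (b i) (s i) q.1 q.2) X G hε
    (fun q i => (abs_mulExpCoeff_le (hs i) T q.1.2 q.2).trans
      (mul_le_mul_of_nonneg_right (hb i) (exp_pos A).le))
    hG (by simpa [Fintype.card_prod] using hcard)
  refine ⟨c, hc0, hcX, fun u v hu hv => ?_⟩
  let rest (i : ι) : ℝ := exp (s i * u) - ∑ t ∈ range T, (s i * u) ^ t / t.factorial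
  have hrest (i) : |rest i| ≤ 2 * (A ^ T / T.factorial) := abs_exp_sub_sum_range_le (by
    rw [abs_mul]
    exact (mul_le_of_le_one_right (abs_nonneg _) hu).trans (hs i)) hT
  have hsplit : ∑ i, c i * (biPoly J K (b i) u v * exp (s i * u)) =
      biPoly J (K + T) (fun j q => ∑ i, c i * mulExpCoeff K T (b i) (s i) j q) u v +
        ∑ i, c i * biPoly J K (b i) u v * rest i := by
    rw [← sum_biPoly, ← sum_add_distrib]
    refine sum_congr rfl fun i _ => ?_
    rw [biPoly_const_mul, ← biPoly_mul_sum_pow_div_factorial]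
    ring
  rw [hsplit]
  refine (abs_add_le _ _).trans (add_le_add ?_ ?_)
  · refine (abs_biPoly_le_biPolyLength hu hv).trans ((biPolyLength_le fun j hj q hq =>
      hc (⟨j, hj⟩, ⟨q, hq⟩)).trans_eq ?_)
    push_cast; ring
  · have hterm (i) (_ : i ∈ univ) : |c i * biPoly J K (b i) u v * rest i| ≤
        X * M * (2 * (A ^ T / T.factorial)) := by
      rw [abs_mul, abs_mul]
      refine mul_le_mul (mul_le_mul (by exact_mod_cast hcX i)
        ((abs_biPoly_le_biPolyLength hu hv).trans (hb i)) (abs_nonneg _) (by positivity))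
        (hrest i) (abs_nonneg _) (by positivity)
    refine (abs_sum_le_sum_abs _ _).trans ((sum_le_card_nsmul _ _ _ hterm).trans_eq ?_)
    rw [nsmul_eq_mul, card_univ]
    ring

end ExponentialPolynomial

section GoldenPairs

open Real

/-- The ring `ℤ[φ]` of integers of `ℚ(√5)`, embedded in `ℝ × ℝ` by its two real places. -/
def goldenPairs : Subring (ℝ × ℝ) where
  carrier := {p | ∃ a b : ℤ, p = (a + b * goldenRatio, a + b * goldenConj)}
  zero_mem' := ⟨0, 0, by simp; rfl⟩
  one_mem' := ⟨1, 0, by simp; rfl⟩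
  add_mem' := by
    rintro _ _ ⟨a, b, rfl⟩ ⟨c, d, rfl⟩
    refine ⟨a + c, b + d, ?_⟩
    ext <;> push_cast <;> simp <;> ring
  neg_mem' := by
    rintro _ ⟨a, b, rfl⟩
    refine ⟨-a, -b, ?_⟩
    ext <;> push_cast <;> simp <;> ring
  mul_mem' := by
    rintro _ _ ⟨a, b, rfl⟩ ⟨c, d, rfl⟩
    refine ⟨a * c + b * d, a * d + b * c + b * d, ?_⟩
    ext
    · simp only [Prod.fst_mul]
      push_cast
      linear_combination ((b : ℝ) * d) * goldenRatio_sq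
    · simp only [Prod.snd_mul]
      push_cast
      linear_combination ((b : ℝ) * d) * goldenConj_sq

theorem int_add_mul_goldenRatio_eq_zero_iff {a b : ℤ} :
    (a : ℝ) + b * goldenRatio = 0 ↔ a = 0 ∧ b = 0 := by
  refine ⟨fun h => ?_, fun h => by simp [h]⟩
  have hb : b = 0 := by
    by_contra hb
    refine (goldenRatio_irrational.intCast_mul hb).ne_int (-a) ?_
    push_cast
    linarith
  subst hb
  simpa using h

theorem abs_goldenConj : |goldenConj| = goldenRatio⁻¹ := by
  rw [abs_of_neg goldenConj_neg, inv_goldenRatio]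

theorem abs_int_add_int_mul_le {a b : ℤ} {X t : ℝ} (ha : |(a : ℝ)| ≤ X) (hb : |(b : ℝ)| ≤ X)
    (ht : |t| ≤ 2) : |(a : ℝ) + b * t| ≤ 3 * X := by
  calc |(a : ℝ) + b * t| ≤ |(a : ℝ)| + |(b : ℝ)| * |t| := by
        rw [← abs_mul]; exact abs_add_le _ _
    _ ≤ X + X * 2 := by gcongr; exact (abs_nonneg _).trans hb
    _ = 3 * X := by ring

namespace goldenPairs

theorem fst_eq_zero_of_abs_mul_lt_one {p : ℝ × ℝ} (hp : p ∈ goldenPairs)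
    (h : |p.1 * p.2| < 1) : p.1 = 0 := by
  obtain ⟨a, b, rfl⟩ := hp
  have hnorm : ((a : ℝ) + b * goldenRatio) * (a + b * goldenConj) =
      ((a ^ 2 + a * b - b ^ 2 : ℤ) : ℝ) := by
    push_cast
    linear_combination ((a : ℝ) * b) * goldenRatio_add_goldenConj +
      (b : ℝ) ^ 2 * goldenRatio_mul_goldenConj
  simp only at h ⊢
  rw [hnorm, ← Int.cast_abs, ← Int.cast_one, Int.cast_lt, Int.abs_lt_one_iff] at h
  rw [h, Int.cast_zero] at hnorm
  rcases mul_eq_zero.1 hnorm with hfst | hconj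
  · exact hfst
  have hswap : ((a + b : ℤ) : ℝ) + (-b : ℤ) * goldenRatio = 0 := by
    push_cast
    linear_combination hconj - (b : ℝ) * goldenRatio_add_goldenConj
  obtain ⟨hab, hb⟩ := int_add_mul_goldenRatio_eq_zero_iff.1 hswap
  obtain rfl : b = 0 := by omega
  obtain rfl : a = 0 := by omega
  simp

theorem intCast_mem (m : ℤ) : ((m : ℝ), (m : ℝ)) ∈ goldenPairs := ⟨m, 0, by simp⟩

theorem zpow_mem (k : ℤ) : (goldenRatio ^ k, goldenConj ^ k) ∈ goldenPairs := by
  have hbase : (goldenRatio, goldenConj) ∈ goldenPairs := ⟨0, 1, by simp⟩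
  have hinv : (goldenRatio⁻¹, goldenConj⁻¹) ∈ goldenPairs := ⟨-1, 1, by
    rw [inv_goldenRatio, inv_goldenConj]
    ext
    · push_cast; linear_combination goldenRatio_add_goldenConj
    · push_cast; linear_combination goldenRatio_add_goldenConj⟩
  cases k with
  | ofNat k => simpa using pow_mem hbase k
  | negSucc k =>
    rw [zpow_negSucc, zpow_negSucc, ← inv_pow, ← inv_pow]
    exact pow_mem hinv (k + 1)

end goldenPairs

/-- The number `φ ^ r₀ * 2 ^ r₁ * 3 ^ r₂`. -/
noncomputable def goldenMonomial (r : Fin 3 → ℤ) : ℝ :=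
  goldenRatio ^ r 0 * 2 ^ r 1 * 3 ^ r 2

/-- The conjugate of `goldenMonomial r` in `ℚ(√5)`. -/
noncomputable def goldenMonomialConj (r : Fin 3 → ℤ) : ℝ :=
  goldenConj ^ r 0 * 2 ^ r 1 * 3 ^ r 2

theorem exists_nat_eq_six_pow_mul {k l : ℤ} {N : ℕ} (hk : |k| ≤ N) (hl : |l| ≤ N) :
    ∃ m : ℕ, (m : ℝ) = 6 ^ N * (2 ^ k * 3 ^ l) ∧ m ≤ 36 ^ N := by
  rw [abs_le] at hk hl
  obtain ⟨a, ha⟩ := Int.eq_ofNat_of_zero_le (by linarith : 0 ≤ k + N)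
  obtain ⟨b, hb⟩ := Int.eq_ofNat_of_zero_le (by linarith : 0 ≤ l + N)
  refine ⟨2 ^ a * 3 ^ b, ?_, ?_⟩
  · rw [show k = a - N by omega, show l = b - N by omega, zpow_sub₀ two_ne_zero,
      zpow_sub₀ three_ne_zero, show (6 : ℝ) = 2 * 3 by norm_num, mul_pow]
    push_cast
    simp only [zpow_natCast]
    field_simp
  · calc 2 ^ a * 3 ^ b ≤ 2 ^ (2 * N) * 3 ^ (2 * N) :=
          Nat.mul_le_mul (Nat.pow_le_pow_right (by norm_num) (by omega))
            (Nat.pow_le_pow_right (by norm_num) (by omega))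
      _ = 36 ^ N := by rw [← mul_pow, pow_mul]; norm_num

theorem zpow_mul_zpow_eq_one_iff {p q : ℕ} (hp : p.Prime) (hq : q.Prime) (hpq : p ≠ q) {a b : ℤ} :
    (p : ℚ) ^ a * (q : ℚ) ^ b = 1 ↔ a = 0 ∧ b = 0 := by
  refine ⟨fun h => ?_, by rintro ⟨rfl, rfl⟩; simp⟩
  have hpne : (p : ℚ) ≠ 0 := Nat.cast_ne_zero.2 hp.ne_zero
  have hqne : (q : ℚ) ≠ 0 := Nat.cast_ne_zero.2 hq.ne_zero
  have hval (l : ℕ) [Fact l.Prime] : a * padicValNat l p + b * padicValNat l q = 0 := by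
    have hl := congrArg (padicValRat l) h
    rwa [padicValRat.mul (zpow_ne_zero _ hpne) (zpow_ne_zero _ hqne), padicValRat.zpow,
      padicValRat.zpow, padicValRat.one, padicValRat.of_nat, padicValRat.of_nat] at hl
  have := Fact.mk hp
  have := Fact.mk hq
  exact ⟨by simpa [padicValNat_primes hpq] using hval p,
    by simpa [padicValNat_primes hpq.symm] using hval q⟩

namespace goldenMonomial

theorem pos (r : Fin 3 → ℤ) : 0 < goldenMonomial r := by
  have := goldenRatio_pos
  unfold goldenMonomial
  positivity

theorem add (r t : Fin 3 → ℤ) : goldenMonomial (r + t) = goldenMonomial r * goldenMonomial t := by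
  unfold goldenMonomial
  simp only [Pi.add_apply]
  rw [zpow_add₀ goldenRatio_ne_zero, zpow_add₀ two_ne_zero, zpow_add₀ three_ne_zero]
  ring

theorem zsmul (e : ℤ) (r : Fin 3 → ℤ) : goldenMonomial (e • r) = goldenMonomial r ^ e := by
  unfold goldenMonomial
  simp only [Pi.smul_apply, smul_eq_mul]
  rw [mul_zpow, mul_zpow, ← zpow_mul, ← zpow_mul, ← zpow_mul, mul_comm e, mul_comm e, mul_comm e]

theorem log_eq (r : Fin 3 → ℤ) :
    log (goldenMonomial r) = r 0 * log goldenRatio + r 1 * log 2 + r 2 * log 3 := by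
  have := goldenRatio_pos
  unfold goldenMonomial
  rw [log_mul (by positivity) (by positivity), log_mul (by positivity) (by positivity), log_zpow,
    log_zpow, log_zpow]

theorem six_pow_mul_mem_goldenPairs (r : Fin 3 → ℤ) {N : ℕ} (h₁ : |r 1| ≤ N) (h₂ : |r 2| ≤ N) :
    (6 ^ N * goldenMonomial r, 6 ^ N * goldenMonomialConj r) ∈ goldenPairs := by
  obtain ⟨m, hm, -⟩ := exists_nat_eq_six_pow_mul h₁ h₂
  have hmem := goldenPairs.mul_mem (goldenPairs.zpow_mem (r 0)) (goldenPairs.intCast_mem m)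
  rw [Int.cast_natCast, hm] at hmem
  convert hmem using 1
  ext <;> simp only [goldenMonomial, goldenMonomialConj, Prod.fst_mul, Prod.snd_mul] <;> ring

theorem abs_six_pow_mul_conj_le (r : Fin 3 → ℤ) {N : ℕ} (hr : ∀ i, |r i| ≤ N) :
    |6 ^ N * goldenMonomialConj r| ≤ 36 ^ N * goldenRatio ^ N := by
  obtain ⟨m, hm, hmN⟩ := exists_nat_eq_six_pow_mul (hr 1) (hr 2)
  have hconj : 6 ^ N * goldenMonomialConj r = m * goldenConj ^ r 0 := by
    rw [hm, goldenMonomialConj]; ring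
  rw [hconj, abs_mul, Nat.abs_cast, abs_zpow, abs_goldenConj, inv_zpow',
    ← zpow_natCast goldenRatio N]
  exact mul_le_mul (by exact_mod_cast hmN)
    (zpow_le_zpow_right₀ one_lt_goldenRatio.le (abs_le.1 (abs_neg (r 0) ▸ hr 0)).2)
    (zpow_nonneg goldenRatio_pos.le _) (by positivity)

theorem exists_forall_abs_le (r : Fin 3 → ℤ) : ∃ N : ℕ, ∀ i, |r i| ≤ N :=
  ⟨∑ i, (r i).natAbs, fun i => by
    rw [Int.abs_eq_natAbs]
    exact_mod_cast Finset.single_le_sum (f := fun i => (r i).natAbs) (fun _ _ => Nat.zero_le _)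
      (Finset.mem_univ i)⟩

theorem conj_eq_one {r : Fin 3 → ℤ} (h : goldenMonomial r = 1) : goldenMonomialConj r = 1 := by
  obtain ⟨N, hN⟩ := exists_forall_abs_le r
  obtain ⟨a, b, hab⟩ := six_pow_mul_mem_goldenPairs r (hN 1) (hN 2)
  rw [h, mul_one, Prod.mk.injEq] at hab
  have hzero : ((a - 6 ^ N : ℤ) : ℝ) + b * goldenRatio = 0 := by push_cast; linarith [hab.1]
  obtain ⟨ha, rfl⟩ := int_add_mul_goldenRatio_eq_zero_iff.1 hzero
  obtain rfl : a = 6 ^ N := by omega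
  exact mul_left_cancel₀ (by positivity : (6 : ℝ) ^ N ≠ 0) (by simpa using hab.2)

theorem apply_zero_eq_zero {r : Fin 3 → ℤ} (h : goldenMonomial r = 1) : r 0 = 0 := by
  have habs : goldenRatio ^ r 0 * (2 ^ r 1 * 3 ^ r 2) =
      goldenRatio ^ (-r 0) * (2 ^ r 1 * 3 ^ r 2) := by
    have hconj := congrArg abs (conj_eq_one h)
    rw [goldenMonomialConj, abs_one, mul_assoc, abs_mul, abs_zpow, abs_goldenConj, inv_zpow',
      abs_of_pos (by positivity : (0 : ℝ) < 2 ^ r 1 * 3 ^ r 2)] at hconj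
    rw [hconj, ← h, goldenMonomial, mul_assoc]
  have := zpow_right_injective₀ goldenRatio_pos one_lt_goldenRatio.ne'
    (mul_right_cancel₀ (by positivity : (2 : ℝ) ^ r 1 * 3 ^ r 2 ≠ 0) habs)
  omega

theorem eq_one_iff {r : Fin 3 → ℤ} : goldenMonomial r = 1 ↔ r = 0 := by
  refine ⟨fun h => ?_, fun h => by simp [h, goldenMonomial]⟩
  have h₀ := apply_zero_eq_zero h
  have hrat : ((2 : ℕ) : ℚ) ^ r 1 * ((3 : ℕ) : ℚ) ^ r 2 = 1 := by
    rw [goldenMonomial, h₀, zpow_zero, one_mul] at h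
    exact Rat.cast_injective (α := ℝ) (by push_cast; exact h)
  obtain ⟨h₁, h₂⟩ := (zpow_mul_zpow_eq_one_iff Nat.prime_two Nat.prime_three (by norm_num)).1 hrat
  ext i
  fin_cases i
  exacts [h₀, h₁, h₂]

-- Liouville's inequality for `6 ^ N` times the sum, which lies in `ℤ[φ]`.
theorem sum_eq_zero {ι : Type*} [Fintype ι] (c : ι → Fin 2 → ℤ) (m : ι → ℤ) (r : ι → Fin 3 → ℤ)
    {N : ℕ} {X M : ℝ} (hc : ∀ i k, |(c i k : ℝ)| ≤ X) (hm : ∀ i, |(m i : ℝ)| ≤ M)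
    (hr : ∀ i k, |r i k| ≤ N)
    (h : |∑ i, (c i 0 + c i 1 * goldenRatio) * m i * goldenMonomial (r i)| *
      (6 ^ N * (Fintype.card ι * (3 * X * M * (36 ^ N * goldenRatio ^ N)))) < 1) :
    ∑ i, (c i 0 + c i 1 * goldenRatio) * m i * goldenMonomial (r i) = 0 := by
  let p : ℝ × ℝ := ∑ i, ((c i 0 + c i 1 * goldenRatio, c i 0 + c i 1 * goldenConj) : ℝ × ℝ) *
    (((m i : ℝ), (m i : ℝ)) * (6 ^ N * goldenMonomial (r i), 6 ^ N * goldenMonomialConj (r i)))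
  have hp : p ∈ goldenPairs := sum_mem fun i _ => mul_mem ⟨_, _, rfl⟩
    (mul_mem (goldenPairs.intCast_mem _) (six_pow_mul_mem_goldenPairs (r i) (hr i 1) (hr i 2)))
  have hfst : p.1 = 6 ^ N * ∑ i, (c i 0 + c i 1 * goldenRatio) * m i * goldenMonomial (r i) := by
    rw [Prod.fst_sum, Finset.mul_sum]
    refine Finset.sum_congr rfl fun i _ => ?_
    simp only [Prod.fst_mul]
    ring
  have hsnd : |p.2| ≤ Fintype.card ι * (3 * X * M * (36 ^ N * goldenRatio ^ N)) := by
    rw [Prod.snd_sum, ← nsmul_eq_mul, ← Finset.card_univ]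
    refine (Finset.abs_sum_le_sum_abs _ _).trans (Finset.sum_le_card_nsmul _ _ _ fun i _ => ?_)
    have hX : 0 ≤ X := (abs_nonneg _).trans (hc i 0)
    have hM : 0 ≤ M := (abs_nonneg _).trans (hm i)
    have hconj : |goldenConj| ≤ 2 := by
      rw [abs_le]
      constructor <;> linarith [neg_one_lt_goldenConj, goldenConj_neg]
    simp only [Prod.snd_mul]
    rw [abs_mul, abs_mul, ← mul_assoc]
    exact mul_le_mul (mul_le_mul (abs_int_add_int_mul_le (hc i 0) (hc i 1) hconj) (hm i)
      (abs_nonneg _) (by positivity)) (abs_six_pow_mul_conj_le (r i) (hr i)) (abs_nonneg _)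
      (by positivity)
  have hzero : p.1 = 0 := by
    refine goldenPairs.fst_eq_zero_of_abs_mul_lt_one hp (lt_of_le_of_lt ?_ h)
    rw [abs_mul, hfst, abs_mul, abs_of_pos (by positivity : (0 : ℝ) < 6 ^ N), mul_comm (6 ^ N : ℝ),
      mul_assoc]
    gcongr
  rw [hfst] at hzero
  exact (mul_eq_zero.1 hzero).resolve_left (by positivity)

end goldenMonomial

end GoldenPairs

section GoldenExponentialSum

open Real

theorem mul_pow_four_le_two_pow {R : ℕ} (hR : 100 ≤ R) : 10 ^ 9 * R ^ 4 ≤ 2 ^ R := by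
  induction R, hR using Nat.le_induction with
  | base => norm_num
  | succ R hR ih =>
    have hsucc : (R + 1) ^ 4 ≤ 2 * R ^ 4 := by
      have h₃ : 100 * R ^ 3 ≤ R ^ 4 := by rw [pow_succ R 3, mul_comm]; gcongr
      have h₂ : R ^ 2 ≤ R ^ 3 := Nat.pow_le_pow_right (by omega) (by norm_num)
      have h₁ : R ≤ R ^ 3 := Nat.le_self_pow (by norm_num) R
      have : 1 ≤ R ^ 3 := Nat.one_le_pow _ _ (by omega)
      linarith [show (R + 1) ^ 4 = R ^ 4 + 4 * R ^ 3 + 6 * R ^ 2 + 4 * R + 1 by ring]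
    rw [pow_succ 2 R]
    linarith

theorem mul_pow_four_le_two_pow_mul {L R : ℕ} (hL : 100 ≤ L) (hLR : L ≤ R) :
    (10 : ℝ) ^ 9 * R ^ 4 ≤ 2 ^ (L * R) := by
  have hR : (10 : ℝ) ^ 9 * R ^ 4 ≤ 2 ^ R := by exact_mod_cast mul_pow_four_le_two_pow (hL.trans hLR)
  exact hR.trans (pow_le_pow_right₀ one_le_two (Nat.le_mul_of_pos_left _ (by omega)))

theorem exp_mul_nat_le (n : ℕ) : exp (23 / 10 * n) ≤ (2 ^ n) ^ 4 := by
  have h : exp (23 / 10) ≤ 16 := by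
    refine le_of_pow_le_pow_left₀ (n := 10) (by norm_num) (by norm_num) ?_
    rw [← exp_nat_mul, show ((10 : ℕ) : ℝ) * (23 / 10) = (23 : ℕ) * 1 by norm_num, exp_nat_mul]
    refine (pow_le_pow_left₀ (exp_pos _).le exp_one_lt_d9.le 23).trans ?_
    norm_num
  rw [mul_comm, exp_nat_mul, ← pow_mul, mul_comm n 4, pow_mul]
  exact pow_le_pow_left₀ (exp_pos _).le (h.trans (by norm_num)) n

theorem pow_div_factorial_le_two_pow (n : ℕ) :
    (23 / 10 * n : ℝ) ^ (40 * n) / (40 * n).factorial ≤ ((2 ^ n) ^ 100)⁻¹ := by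
  have hfact := pow_div_factorial_le_exp (40 * n : ℝ) (by positivity) (40 * n)
  have hscale : (23 / 10 * n : ℝ) ^ (40 * n) = (23 / 400) ^ (40 * n) * (40 * n) ^ (40 * n) := by
    rw [← mul_pow]; congr 1; ring
  have hexp : exp 1 * (23 / 400) ≤ 176 / 1000 := by linarith [exp_one_lt_d9]
  rw [hscale, mul_div_assoc]
  calc (23 / 400 : ℝ) ^ (40 * n) * ((40 * n : ℝ) ^ (40 * n) / (40 * n).factorial)
      ≤ (23 / 400) ^ (40 * n) * exp (40 * n) := by gcongr
    _ = (exp 1 * (23 / 400)) ^ (40 * n) := by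
      rw [mul_pow, ← exp_nat_mul]; push_cast; rw [mul_one, mul_comm]
    _ ≤ (176 / 1000) ^ (40 * n) := by gcongr
    _ = ((176 / 1000) ^ 40) ^ n := by rw [pow_mul]
    _ ≤ ((2 ^ 100)⁻¹) ^ n := by
      gcongr
      norm_num
    _ = _ := by rw [inv_pow, ← pow_mul, ← pow_mul, mul_comm]

theorem abs_zpow_sub_exp_le {ξ y δ A : ℝ} {l : ℤ} {n : ℕ} (hξ : 0 < ξ) (hl : |l| ≤ n)
    (h : |log ξ - y| ≤ δ) (hA : n * |y| ≤ A) (hδ : n * δ ≤ 1) :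
    |ξ ^ l - exp (l * y)| ≤ exp A * (2 * (n * δ)) := by
  have hl' : |(l : ℝ)| ≤ n := by exact_mod_cast hl
  have hfactor : ξ ^ l = exp (l * y) * exp (l * (log ξ - y)) := by
    rw [← exp_add, ← mul_add, add_sub_cancel, mul_comm, ← rpow_def_of_pos hξ, rpow_intCast]
  have hexponent : |l * (log ξ - y)| ≤ n * δ := by
    rw [abs_mul]
    gcongr
  have hly : l * y ≤ A := by
    refine (le_abs_self _).trans (le_trans ?_ hA)
    rw [abs_mul]
    gcongr
  rw [hfactor, ← mul_sub_one, abs_mul, abs_exp]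
  exact mul_le_mul (exp_le_exp.2 hly) (by linarith [abs_exp_sub_one_le (hexponent.trans hδ)])
    (abs_nonneg _) (exp_pos _).le

variable {ι : Type*} [Fintype ι]

theorem abs_sum_mul_zpow_sub_sum_mul_exp_le (c : ι → ℝ) (l : ι → ℤ) {ξ y δ A C : ℝ} {n : ℕ}
    (hξ : 0 < ξ) (hc : ∀ i, |c i| ≤ C) (hl : ∀ i, |l i| ≤ n) (h : |log ξ - y| ≤ δ)
    (hA : n * |y| ≤ A) (hδ : n * δ ≤ 1) :
    |∑ i, c i * ξ ^ l i - ∑ i, c i * exp (l i * y)| ≤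
      Fintype.card ι * (C * (exp A * (2 * (n * δ)))) := by
  simp only [← Finset.sum_sub_distrib, ← mul_sub]
  rw [← nsmul_eq_mul, ← Finset.card_univ]
  refine (Finset.abs_sum_le_sum_abs _ _).trans (Finset.sum_le_card_nsmul _ _ _ fun i _ => ?_)
  rw [abs_mul]
  exact mul_le_mul (hc i) (abs_zpow_sub_exp_le hξ (hl i) h hA hδ) (abs_nonneg _)
    ((abs_nonneg _).trans (hc i))

theorem exists_golden_sum_biPoly_mul_exp_small (J K T X G : ℕ) (s : ι → ℝ) (b : ι → ℕ → ℕ → ℝ)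
    {A M ε : ℝ} (hM : 0 ≤ M) (hε : 0 < ε) (hs : ∀ i, |s i| ≤ A) (hT : A / (T + 1) ≤ 1 / 2)
    (hb : ∀ i, biPolyLength J K (b i) ≤ M)
    (hG : 4 * Fintype.card ι * X * (M * exp A) ≤ G * ε)
    (hcard : (2 * G + 1) ^ (J * (K + T)) < (X + 1) ^ (2 * Fintype.card ι)) :
    ∃ c : ι → Fin 2 → ℤ, c ≠ 0 ∧ (∀ i k, |c i k| ≤ X) ∧ ∀ u v : ℝ, |u| ≤ 1 → |v| ≤ 1 →
      |∑ i, (c i 0 + c i 1 * goldenRatio) * (biPoly J K (b i) u v * exp (s i * u))| ≤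
        J * (K + T) * ε + 8 * Fintype.card ι * X * M * (A ^ T / T.factorial) := by
  have hpow (k : Fin 2) : |goldenRatio ^ (k : ℕ)| ≤ 2 := by
    rw [abs_of_pos (pow_pos goldenRatio_pos _)]
    fin_cases k
    · simp
    · simpa using goldenRatio_lt_two.le
  obtain ⟨c, hc0, hcX, hc⟩ := exists_int_sum_biPoly_mul_exp_small (ι := ι × Fin 2) J K T X G
    (fun p => s p.1) (fun p j a => goldenRatio ^ (p.2 : ℕ) * b p.1 j a) (M := 2 * M) (by positivity)
    hε (fun p => hs p.1) hT
    (fun p => by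
      rw [biPolyLength_const_mul]
      exact mul_le_mul (hpow p.2) (hb p.1) biPolyLength_nonneg zero_le_two)
    (by rw [Fintype.card_prod, Fintype.card_fin]; push_cast; linarith)
    (by rwa [Fintype.card_prod, Fintype.card_fin, mul_comm _ 2])
  refine ⟨fun i k => c (i, k), fun h => hc0 ?_, fun i k => hcX _, fun u v hu hv => ?_⟩
  · ext p
    exact congrFun (congrFun h p.1) p.2
  · convert hc u v hu hv using 2
    · rw [Fintype.sum_prod_type]
      refine Finset.sum_congr rfl fun i _ => ?_
      simp only [biPoly_const_mul, Fin.sum_univ_two, Fin.val_zero, Fin.val_one, pow_zero, pow_one]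
      ring
    · rw [Fintype.card_prod, Fintype.card_fin]
      push_cast
      ring

variable {L R J : ℕ}

theorem two_mul_two_pow_add_one_pow_lt {N : ℕ} (hL : 22 ≤ L) (hR : 0 < R) (hN : 0 < N)
    (hJ : J * (80 * R) * (2 * L + 1) ≤ 2 * N) :
    (2 * 2 ^ (89 * (L * R)) + 1) ^ (J * (80 * R + 40 * (L * R))) <
      (2 ^ (24 * (L * R)) + 1) ^ (2 * N) := by
  have hn : 2 ≤ L * R := (by omega : 2 ≤ L).trans (Nat.le_mul_of_pos_right _ hR)
  have hbase : 2 * 2 ^ (89 * (L * R)) + 1 ≤ 2 ^ (90 * (L * R)) := by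
    have hfour : 2 ^ 2 ≤ 2 ^ (L * R) := Nat.pow_le_pow_right two_pos hn
    have hone : 1 ≤ 2 ^ (89 * (L * R)) := Nat.one_le_two_pow
    rw [show 90 * (L * R) = 89 * (L * R) + L * R by ring, pow_add]
    nlinarith
  have hexponent : 90 * (L * R) * (J * (80 * R + 40 * (L * R))) ≤ 24 * (L * R) * (2 * N) := by
    have hLbound : 90 * (80 + 40 * L) ≤ 1920 * (2 * L + 1) := by omega
    calc 90 * (L * R) * (J * (80 * R + 40 * (L * R))) = L * R * (J * R) * (90 * (80 + 40 * L)) := by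
          ring
      _ ≤ L * R * (J * R) * (1920 * (2 * L + 1)) := by gcongr
      _ = 24 * (L * R) * (J * (80 * R) * (2 * L + 1)) := by ring
      _ ≤ 24 * (L * R) * (2 * N) := by gcongr
  calc _ ≤ (2 ^ (90 * (L * R))) ^ (J * (80 * R + 40 * (L * R))) := Nat.pow_le_pow_left hbase _
    _ ≤ (2 ^ (24 * (L * R))) ^ (2 * N) := by
      rw [← pow_mul, ← pow_mul]
      exact Nat.pow_le_pow_right two_pos hexponent
    _ < _ := Nat.pow_lt_pow_left (Nat.lt_succ_self _) (by positivity)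

theorem mul_inv_pow_add_mul_pow_div_factorial_le {N : ℕ} (hL : 100 ≤ L) (hLR : L ≤ R)
    (hN : N ≤ 19200 * R ^ 3) (hJR : J ≤ 80 * R) {Q : ℝ} (hQ : 2 ^ (L * R) = Q) :
    J * ((80 * R : ℕ) + (40 * (L * R) : ℕ)) * (Q ^ 48)⁻¹ + 8 * N * Q ^ 24 * Q ^ 12 *
      ((23 / 10 * (L * R : ℕ)) ^ (40 * (L * R)) / (40 * (L * R)).factorial) ≤
        1 / 20 * (Q ^ 47)⁻¹ := by
  have hRQ := mul_pow_four_le_two_pow_mul hL hLR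
  rw [hQ] at hRQ
  have hQ1 : 1 ≤ Q := hQ ▸ one_le_pow₀ one_le_two
  have hR1 : (1 : ℝ) ≤ R := by exact_mod_cast (by omega : 1 ≤ R)
  have hN' : (N : ℝ) ≤ 19200 * R ^ 3 := by exact_mod_cast hN
  have hmain : (J : ℝ) * ((80 * R : ℕ) + (40 * (L * R) : ℕ)) ≤ 9600 * R ^ 4 := by
    have : J * (80 * R + 40 * (L * R)) ≤ 80 * R * (80 * (R * R * R) + 40 * (R * R * R)) := by
      have : 1 ≤ R := by omega
      gcongr
      · nlinarith
      · nlinarith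
    exact_mod_cast this.trans_eq (by ring)
  have htail : (23 / 10 * (L * R : ℕ) : ℝ) ^ (40 * (L * R)) / (40 * (L * R)).factorial ≤
      (Q ^ 100)⁻¹ := hQ ▸ pow_div_factorial_le_two_pow (L * R)
  calc _ ≤ 9600 * (R : ℝ) ^ 4 * (Q ^ 48)⁻¹ +
        8 * (19200 * R ^ 3) * Q ^ 24 * Q ^ 12 * (Q ^ 100)⁻¹ := by gcongr
    _ = 9600 * (R : ℝ) ^ 4 * (Q ^ 48)⁻¹ + 153600 * R ^ 3 * (Q ^ 64)⁻¹ := by field_simp; norm_num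
    _ ≤ 9600 * (R : ℝ) ^ 4 * (Q ^ 48)⁻¹ + 153600 * R ^ 4 * (Q ^ 48)⁻¹ := by gcongr <;> norm_num
    _ = 163200 * (R : ℝ) ^ 4 * (Q ^ 48)⁻¹ := by ring
    _ ≤ 1 / 20 * Q * (Q ^ 48)⁻¹ :=
        mul_le_mul_of_nonneg_right (by linarith) (by positivity)
    _ = _ := by field_simp

-- The parameters of the pigeonhole argument are `T = 40 * (L * R)`, `X = Q ^ 24`, `G = Q ^ 89`.
theorem exists_golden_sum_biPoly_mul_exp_le [Nonempty ι] (hL : 100 ≤ L) (hLR : L ≤ R)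
    (hJ : J * (80 * R) * (2 * L + 1) ≤ 2 * Fintype.card ι) (hι : Fintype.card ι ≤ 19200 * R ^ 3)
    (hJR : J ≤ 80 * R) (s : ι → ℝ) (b : ι → ℕ → ℕ → ℝ) {Q : ℝ} (hQ : 2 ^ (L * R) = Q)
    (hs : ∀ i, |s i| ≤ 23 / 10 * (L * R : ℕ)) (hb : ∀ i, biPolyLength J (80 * R) (b i) ≤ Q ^ 12) :
    ∃ c : ι → Fin 2 → ℤ, c ≠ 0 ∧ (∀ i k, |(c i k : ℝ)| ≤ Q ^ 24) ∧
      ∀ u v : ℝ, |u| ≤ 1 → |v| ≤ 1 →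
        |∑ i, (c i 0 + c i 1 * goldenRatio) * (biPoly J (80 * R) (b i) u v * exp (s i * u))| ≤
          1 / 20 * (Q ^ 47)⁻¹ := by
  have hRQ := mul_pow_four_le_two_pow_mul hL hLR
  rw [hQ] at hRQ
  have hQ1 : 1 ≤ Q := hQ ▸ one_le_pow₀ one_le_two
  have hQpow (k : ℕ) : ((2 ^ (k * (L * R)) : ℕ) : ℝ) = Q ^ k := by
    rw [← hQ, ← pow_mul, mul_comm, Nat.cast_pow, Nat.cast_two]
  have hR34 : (R : ℝ) ^ 3 ≤ R ^ 4 :=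
    pow_le_pow_right₀ (by exact_mod_cast (by omega : 1 ≤ R)) (by norm_num)
  have hι' : (Fintype.card ι : ℝ) ≤ 19200 * R ^ 3 := by exact_mod_cast hι
  obtain ⟨c, hc0, hcX, hc⟩ := exists_golden_sum_biPoly_mul_exp_small J (80 * R) (40 * (L * R))
    (2 ^ (24 * (L * R))) (2 ^ (89 * (L * R))) s b (ε := (Q ^ 48)⁻¹) (by positivity) (by positivity)
    hs
    (by
      rw [div_le_iff₀ (by positivity)]
      push_cast
      linarith [(by positivity : (0 : ℝ) ≤ L * R)])
    hb
    (by
      rw [hQpow, hQpow, ← div_eq_mul_inv, le_div_iff₀ (by positivity)]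
      calc 4 * (Fintype.card ι : ℝ) * Q ^ 24 * (Q ^ 12 * exp (23 / 10 * (L * R : ℕ))) * Q ^ 48
          ≤ Q * Q ^ 24 * (Q ^ 12 * Q ^ 4) * Q ^ 48 := by
            gcongr
            · linarith
            · exact hQ ▸ exp_mul_nat_le (L * R)
        _ = Q ^ 89 := by ring)
    (two_mul_two_pow_add_one_pow_lt (by omega) (by omega) Fintype.card_pos hJ)
  refine ⟨c, hc0, fun i k => by rw [← hQpow]; exact_mod_cast hcX i k, fun u v hu hv =>
    (hc u v hu hv).trans ?_⟩
  rw [hQpow]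
  exact mul_inv_pow_add_mul_pow_div_factorial_le hL hLR hι hJR hQ

theorem goldenMonomial.sum_eq_zero_of_abs_le (c : ι → Fin 2 → ℤ) (m : ι → ℤ) (r : ι → Fin 3 → ℤ)
    {n : ℕ} {Q : ℝ} (hQ : 2 ^ n = Q) (hι : 3 * Fintype.card ι ≤ Q)
    (hc : ∀ i k, |(c i k : ℝ)| ≤ Q ^ 24) (hm : ∀ i, |(m i : ℝ)| ≤ Q ^ 12) (hr : ∀ i k, |r i k| ≤ n)
    (h : |∑ i, (c i 0 + c i 1 * goldenRatio) * m i * goldenMonomial (r i)| ≤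
      1 / 10 * (Q ^ 47)⁻¹) :
    ∑ i, (c i 0 + c i 1 * goldenRatio) * m i * goldenMonomial (r i) = 0 := by
  have := goldenRatio_pos
  have hQ1 : 1 ≤ Q := hQ ▸ one_le_pow₀ one_le_two
  have hconj : (36 : ℝ) ^ n * goldenRatio ^ n ≤ Q ^ 6 := by
    have hsqrt : √5 ≤ 9 / 4 := Real.sqrt_le_iff.2 ⟨by norm_num, by norm_num⟩
    rw [← mul_pow, ← hQ, ← pow_mul, mul_comm n 6, pow_mul (2 : ℝ)]
    refine pow_le_pow_left₀ (by positivity) ?_ n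
    rw [goldenRatio]
    linarith
  have hsix : (6 : ℝ) ^ n ≤ Q ^ 3 := by
    rw [← hQ, ← pow_mul, mul_comm n 3, pow_mul (2 : ℝ)]
    exact pow_le_pow_left₀ (by norm_num) (by norm_num) n
  refine goldenMonomial.sum_eq_zero c m r hc hm hr ?_
  calc _ ≤ 1 / 10 * (Q ^ 47)⁻¹ * (Q ^ 3 * (Fintype.card ι * (3 * Q ^ 24 * Q ^ 12 * Q ^ 6))) := by
        gcongr
    _ = 1 / 10 * (Q ^ 47)⁻¹ * (3 * Fintype.card ι) * Q ^ 45 := by ring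
    _ ≤ 1 / 10 * (Q ^ 47)⁻¹ * Q * Q ^ 45 := by gcongr
    _ = 1 / 10 * (1 / Q) := by field_simp
    _ < 1 := by linarith [(div_le_one (by positivity)).2 hQ1]

theorem goldenMonomial.abs_sum_mul_zpow_sub_sum_mul_exp_le (hL : 100 ≤ L) (hLR : L ≤ R)
    (hι : Fintype.card ι ≤ 19200 * R ^ 3) {Q y δ : ℝ} (hQ : 2 ^ (L * R) = Q)
    (c : ι → Fin 2 → ℤ) (m l : ι → ℤ) {r : Fin 3 → ℤ} (hc : ∀ i k, |(c i k : ℝ)| ≤ Q ^ 24)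
    (hm : ∀ i, |(m i : ℝ)| ≤ Q ^ 12) (hl : ∀ i, |l i| ≤ L)
    (hlog : |log (goldenMonomial r) - y| ≤ δ) (hδ : δ * Q ^ 88 ≤ 1)
    (hy : L * |y| ≤ 23 / 10 * (L * R : ℕ)) :
    |∑ i, (c i 0 + c i 1 * goldenRatio) * m i * goldenMonomial r ^ l i -
        ∑ i, (c i 0 + c i 1 * goldenRatio) * m i * exp (l i * y)| ≤ 1 / 20 * (Q ^ 47)⁻¹ := by
  have hQ1 : 1 ≤ Q := hQ ▸ one_le_pow₀ one_le_two
  have hRQ : (10 : ℝ) ^ 9 * R ^ 4 ≤ Q := hQ ▸ mul_pow_four_le_two_pow_mul hL hLR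
  have hR : (R : ℝ) ≤ R ^ 4 := le_self_pow₀ (by exact_mod_cast (by omega : 1 ≤ R)) (by norm_num)
  have hδ0 : 0 ≤ δ := (abs_nonneg _).trans hlog
  have hLδ : L * δ ≤ R * (Q ^ 88)⁻¹ := by
    rw [← le_div_iff₀ (by positivity), one_div] at hδ
    gcongr
  have hLδ1 : L * δ ≤ 1 := by
    refine hLδ.trans ((mul_inv_le_iff₀ (by positivity)).2 ?_)
    rw [one_mul]
    exact (by linarith : (R : ℝ) ≤ Q).trans (le_self_pow₀ hQ1 (by norm_num))
  have hcoeff (i : ι) : |((c i 0 : ℝ) + c i 1 * goldenRatio) * m i| ≤ 3 * Q ^ 24 * Q ^ 12 := by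
    rw [abs_mul]
    exact mul_le_mul (abs_int_add_int_mul_le (hc i 0) (hc i 1)
      ((abs_of_pos goldenRatio_pos).trans_le goldenRatio_lt_two.le)) (hm i) (abs_nonneg _)
      (by positivity)
  calc _ ≤ Fintype.card ι * (3 * Q ^ 24 * Q ^ 12 *
        (exp (23 / 10 * (L * R : ℕ)) * (2 * (L * δ)))) :=
        LucasSUnit.abs_sum_mul_zpow_sub_sum_mul_exp_le _ l (goldenMonomial.pos r) hcoeff hl hlog hy
          hLδ1
    _ ≤ 19200 * (R : ℝ) ^ 3 * (3 * Q ^ 24 * Q ^ 12 * (Q ^ 4 * (2 * (R * (Q ^ 88)⁻¹)))) := by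
        have := exp_mul_nat_le (L * R)
        rw [hQ] at this
        gcongr
        exact_mod_cast hι
    _ = 115200 * R ^ 4 * (Q ^ 48)⁻¹ := by field_simp; ring
    _ ≤ 1 / 20 * Q * (Q ^ 48)⁻¹ := mul_le_mul_of_nonneg_right (by linarith) (by positivity)
    _ = _ := by field_simp

-- The small exponential sum at `y` is close to an element of `ℤ[φ, 1/6]`, which therefore vanishes
-- by Liouville's inequality.
theorem goldenMonomial.sum_mul_zpow_eq_zero (hL : 100 ≤ L) (hLR : L ≤ R)
    (hι : Fintype.card ι ≤ 19200 * R ^ 3) {Q y δ : ℝ} (hQ : 2 ^ (L * R) = Q)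
    (c : ι → Fin 2 → ℤ) (m l : ι → ℤ) {r : Fin 3 → ℤ} (hc : ∀ i k, |(c i k : ℝ)| ≤ Q ^ 24)
    (hm : ∀ i, |(m i : ℝ)| ≤ Q ^ 12) (hl : ∀ i, |l i| ≤ L) (hr : ∀ k, |r k| ≤ R)
    (hlog : |log (goldenMonomial r) - y| ≤ δ) (hδ : δ * Q ^ 88 ≤ 1)
    (hy : L * |y| ≤ 23 / 10 * (L * R : ℕ))
    (h : |∑ i, (c i 0 + c i 1 * goldenRatio) * m i * exp (l i * y)| ≤ 1 / 20 * (Q ^ 47)⁻¹) :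
    ∑ i, (c i 0 + c i 1 * goldenRatio) * m i * goldenMonomial r ^ l i = 0 := by
  have hRQ : (10 : ℝ) ^ 9 * R ^ 4 ≤ Q := hQ ▸ mul_pow_four_le_two_pow_mul hL hLR
  have hR : (R : ℝ) ^ 3 ≤ R ^ 4 :=
    pow_le_pow_right₀ (by exact_mod_cast (by omega : 1 ≤ R)) (by norm_num)
  have hι' : (Fintype.card ι : ℝ) ≤ 19200 * R ^ 3 := by exact_mod_cast hι
  have hdiff := goldenMonomial.abs_sum_mul_zpow_sub_sum_mul_exp_le hL hLR hι hQ c m l hc hm hl hlog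
    hδ hy
  have habs := (sub_le_iff_le_add.1 ((abs_sub_abs_le_abs_sub _ _).trans hdiff)).trans
    (add_le_add_right h _)
  simp only [← goldenMonomial.zsmul] at habs ⊢
  refine goldenMonomial.sum_eq_zero_of_abs_le c m (fun i => l i • r) hQ (by linarith) hc hm ?_
    (habs.trans_eq (by ring))
  intro i k
  rw [Pi.smul_apply, smul_eq_mul, abs_mul, Nat.cast_mul]
  exact mul_le_mul (hl i) (hr k) (abs_nonneg _) (Int.natCast_nonneg _)

theorem exists_golden_relation {Ω : Type*} [Fintype Ω] [Nonempty Ω] (hL : 100 ≤ L) (hLR : L ≤ R)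
    (hJ : J * (80 * R) ≤ 2 * Fintype.card Ω) (hΩ : Fintype.card Ω ≤ (80 * R) ^ 2)
    (hJR : J ≤ 80 * R) {δ ρ : ℝ} (hδ : δ * 2 ^ (88 * (L * R)) ≤ 1) (hρ : |ρ| ≤ 23 / 10 * R)
    {P : Set (Fin 3 → ℤ)} (hP : ∀ r ∈ P, ∀ i, |r i| ≤ R) (mon : Ω → (Fin 3 → ℤ) → ℤ)
    (b : Ω → ℕ → ℕ → ℝ) (u v : (Fin 3 → ℤ) → ℝ) (hu : ∀ r ∈ P, |u r| ≤ 1)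
    (hv : ∀ r ∈ P, |v r| ≤ 1)
    (hmon : ∀ r ∈ P, ∀ ω, (mon ω r : ℝ) = biPoly J (80 * R) (b ω) (u r) (v r))
    (hb : ∀ ω, biPolyLength J (80 * R) (b ω) ≤ 2 ^ (12 * (L * R)))
    (hlog : ∀ r ∈ P, |log (goldenMonomial r) - ρ * u r| ≤ δ) :
    ∃ c : Ω → Fin (2 * L + 1) → ℝ, c ≠ 0 ∧ ∀ r ∈ P,
      ∑ ω, ∑ l, c ω l * mon ω r * goldenMonomial r ^ ((l : ℤ) - L) = 0 := by
  obtain ⟨Q, hQ⟩ : ∃ Q : ℝ, 2 ^ (L * R) = Q := ⟨_, rfl⟩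
  have hQpow (k : ℕ) : (2 : ℝ) ^ (k * (L * R)) = Q ^ k := by rw [← hQ, ← pow_mul, mul_comm]
  rw [hQpow] at hδ
  let l (i : Ω × Fin (2 * L + 1)) : ℤ := (i.2 : ℤ) - L
  have hl (i) : |l i| ≤ L := by
    rw [abs_le]
    constructor <;> have := i.2.2 <;> simp only [l] <;> omega
  have hcard : Fintype.card (Ω × Fin (2 * L + 1)) ≤ 19200 * R ^ 3 := by
    rw [Fintype.card_prod, Fintype.card_fin]
    exact (Nat.mul_le_mul hΩ (by omega : 2 * L + 1 ≤ 3 * R)).trans_eq (by ring)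
  have hLρ {x : ℝ} (hx : |x| ≤ |ρ|) : L * |x| ≤ 23 / 10 * (L * R : ℕ) := by
    push_cast
    linarith [mul_le_mul_of_nonneg_left (hx.trans hρ) (Nat.cast_nonneg L)]
  obtain ⟨c, hc0, hcX, hc⟩ := exists_golden_sum_biPoly_mul_exp_le (J := J) hL hLR
    (by
      rw [Fintype.card_prod, Fintype.card_fin, ← mul_assoc 2]
      exact Nat.mul_le_mul_right _ hJ) hcard hJR
    (fun i => l i * ρ) (fun i => b i.1) hQ
    (fun i => by
      rw [abs_mul]
      refine le_trans ?_ (hLρ le_rfl)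
      gcongr
      exact_mod_cast hl i)
    (fun i => (hb i.1).trans_eq (hQpow 12))
  refine ⟨fun ω k => c (ω, k) 0 + c (ω, k) 1 * goldenRatio, fun h0 => hc0 ?_, fun r hr => ?_⟩
  · ext i k
    obtain ⟨h₀, h₁⟩ := int_add_mul_goldenRatio_eq_zero_iff.1 (congrFun (congrFun h0 i.1) i.2)
    fin_cases k
    exacts [h₀, h₁]
  · rw [← Fintype.sum_prod_type' fun ω (k : Fin (2 * L + 1)) =>
      ((c (ω, k) 0 : ℝ) + c (ω, k) 1 * goldenRatio) * mon ω r * goldenMonomial r ^ ((k : ℤ) - L)]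
    refine goldenMonomial.sum_mul_zpow_eq_zero hL hLR hcard hQ c (fun i => mon i.1 r) l hcX
      (fun i => ?_) hl (hP r hr) (hlog r hr) hδ (hLρ ?_) ?_
    · rw [hmon r hr, ← hQpow]
      exact (abs_biPoly_le_biPolyLength (hu r hr) (hv r hr)).trans (hb i.1)
    · rw [abs_mul]
      exact mul_le_of_le_one_right (abs_nonneg _) (hu r hr)
    · simpa only [← hmon r hr, ← mul_assoc] using hc (u r) (v r) (hu r hr) (hv r hr)

end GoldenExponentialSum

section EliminationOfPowers

open MvPolynomial

variable {σ F : Type*} [Field F] [Infinite F] {N K : ℕ}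

theorem exists_eval_eq_zero_of_sum_eval_mul_pow {p : Fin N → MvPolynomial σ F} (hp : p ≠ 0)
    (hK : ∀ l, (p l).totalDegree ≤ K) {z : Fin N → F} (hz : Function.Injective z) (τ : σ → F) :
    ∃ D : MvPolynomial σ F, D ≠ 0 ∧ D.totalDegree ≤ N * K ∧ ∀ (η : σ → F) (y : Fin N → F),
      (∀ l, y l ≠ 0) → (∀ i < N, ∑ l, eval (η + (i : F) • τ) (p l) * z l ^ i * y l = 0) →
      eval η D = 0 := by
  classical
  let S : Finset (Fin N) := {l | p l ≠ 0}
  have hS : 0 < S.card := by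
    obtain ⟨l, hl⟩ := Function.ne_iff.1 hp
    exact Finset.card_pos.2 ⟨l, by simpa [S] using hl⟩
  have hSN : S.card ≤ N := by simpa using Finset.card_le_univ S
  let f : Fin S.card ≃ S := S.equivFin.symm
  have hf (i) : p (f i) ≠ 0 := (Finset.mem_filter.1 (f i).2).2
  have hsum (g : Fin N → F) (hg : ∀ l, p l = 0 → g l = 0) : ∑ i, g (f i) = ∑ l, g l := by
    rw [f.sum_comp fun l => g l, Finset.sum_coe_sort S g]
    refine Finset.sum_subset (Finset.subset_univ _) fun l _ hl => hg l ?_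
    simpa [S] using hl
  refine ⟨eliminant (fun i => p (f i)) (fun i => ((i : ℕ) : F) • τ) fun i => z (f i),
    eliminant_ne_zero _ _ _ hf (hz.comp (Subtype.val_injective.comp f.injective)), ?_,
    fun η y hy h => ?_⟩
  · refine (totalDegree_eliminant_le _ _ _).trans ((Finset.sum_le_sum fun i _ => hK _).trans ?_)
    simpa using Nat.mul_le_mul_right K hSN
  · refine eval_eliminant_eq_zero _ _ _ (y := fun i => y (f i))
      (fun h0 => hy _ (congrFun h0 ⟨0, hS⟩)) fun i => ?_
    rw [hsum fun l => eval (η + ((i : ℕ) : F) • τ) (p l) * z l ^ (i : ℕ) * y l]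
    · exact h i (i.2.trans_le hSN)
    · intro l hl
      simp [hl]

theorem exists_eval_eq_zero_of_sum_prod_pow_mul_pow {Ω : Type*} [Fintype Ω] {c : Ω → Fin N → F}
    (hc : c ≠ 0) {e : Ω → σ →₀ ℕ} (he : Function.Injective e) (hK : ∀ ω, (e ω).degree ≤ K)
    {z : Fin N → F} (hz : Function.Injective z) (τ : σ → F) :
    ∃ D : MvPolynomial σ F, D ≠ 0 ∧ D.totalDegree ≤ N * K ∧ ∀ (η : σ → F) (y : Fin N → F),
      (∀ l, y l ≠ 0) → (∀ i < N, ∑ ω, ∑ l, c ω l *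
        (e ω).prod (fun s k => (η s + i * τ s) ^ k) * (z l ^ i * y l) = 0) →
      eval η D = 0 := by
  classical
  let p (l : Fin N) : MvPolynomial σ F := ∑ ω, monomial (e ω) (c ω l)
  have hcoeff (ω l) : coeff (e ω) (p l) = c ω l := by
    rw [coeff_sum, Finset.sum_eq_single ω]
    · simp
    · intro ω' _ h
      rw [coeff_monomial, if_neg (he.ne h)]
    · simp
  have hp : p ≠ 0 := fun h0 => hc <| _root_.funext fun ω => _root_.funext fun l => by
    rw [← hcoeff, h0]
    simp
  obtain ⟨D, hD, hdeg, h⟩ := exists_eval_eq_zero_of_sum_eval_mul_pow hp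
    (fun l => totalDegree_finsetSum_le fun ω _ => (totalDegree_monomial_le _ _).trans (hK ω)) hz τ
  refine ⟨D, hD, hdeg, fun η y hy hη => h η y hy fun i hi => ?_⟩
  rw [← hη i hi, Finset.sum_comm]
  refine Finset.sum_congr rfl fun l _ => ?_
  rw [map_sum, mul_assoc, Finset.sum_mul]
  refine Finset.sum_congr rfl fun ω _ => ?_
  rw [eval_monomial]
  simp

end EliminationOfPowers

namespace goldenMonomial

open MvPolynomial

theorem add_nsmul_zpow (d t : Fin 3 → ℤ) (i : ℕ) (k : ℤ) :
    goldenMonomial (d + i • t) ^ k = (goldenMonomial t ^ k) ^ i * goldenMonomial d ^ k := by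
  rw [goldenMonomial.add, mul_zpow, ← natCast_zsmul, goldenMonomial.zsmul, mul_comm,
    ← zpow_natCast, ← zpow_mul, ← zpow_mul, mul_comm (i : ℤ)]

theorem exists_eval_eq_zero_of_sum_prod_pow_mul_zpow {σ Ω : Type*} [Fintype Ω] {N K : ℕ}
    {c : Ω → Fin N → ℝ} (hc : c ≠ 0) {e : Ω → σ →₀ ℕ} (he : Function.Injective e)
    (hK : ∀ ω, (e ω).degree ≤ K) (Z : σ → (Fin 3 → ℤ) →+ ℤ) {t : Fin 3 → ℤ} (ht : t ≠ 0) (L : ℤ) :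
    ∃ D : MvPolynomial σ ℝ, D ≠ 0 ∧ D.totalDegree ≤ N * K ∧ ∀ d : Fin 3 → ℤ,
      (∀ i < N, ∑ ω, ∑ l, c ω l * ((e ω).prod fun s k => Z s (d + i • t) ^ k : ℤ) *
        goldenMonomial (d + i • t) ^ ((l : ℤ) - L) = 0) →
      eval (fun s => (Z s d : ℝ)) D = 0 := by
  have hinj : Function.Injective fun l : Fin N => goldenMonomial t ^ ((l : ℤ) - L) :=
      fun l l' h => by
    have := zpow_right_injective₀ (pos t) (mt eq_one_iff.1 ht) h
    exact Fin.ext (by simpa using this)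
  obtain ⟨D, hD, hdeg, hroot⟩ := exists_eval_eq_zero_of_sum_prod_pow_mul_pow hc he hK hinj
    fun s => (Z s t : ℝ)
  refine ⟨D, hD, hdeg, fun d hd => hroot _ (fun l => goldenMonomial d ^ ((l : ℤ) - L))
    (fun l => (zpow_pos (pos d) _).ne') fun i hi => ?_⟩
  rw [← hd i hi]
  refine Finset.sum_congr rfl fun ω _ => Finset.sum_congr rfl fun l _ => ?_
  rw [add_nsmul_zpow, Finsupp.prod, Finsupp.prod, Int.cast_prod]
  simp only [map_add, map_nsmul]
  simp

end goldenMonomial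

section LineEstimate

open Real

theorem exists_abs_le_and_abs_mul_le {X : Type*} {P : Set X} (Z : X → ℝ) {μ H ρ : ℝ} (hH : 0 < H)
    (hρ : 0 < ρ) (hZ : ∀ r ∈ P, |Z r| ≤ H) (hμ : ∀ r ∈ P, |μ * Z r| ≤ ρ) :
    ∃ W, 0 < W ∧ W ≤ H ∧ |μ * W| ≤ ρ ∧ ∀ r ∈ P, |Z r| ≤ W := by
  rcases le_or_gt (|μ| * H) ρ with h | h
  · exact ⟨H, hH, le_rfl, by rwa [abs_mul, abs_of_pos hH], hZ⟩
  · have hμ0 : 0 < |μ| := pos_of_mul_pos_left (hρ.trans h) hH.le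
    have hW : 0 < ρ / |μ| := div_pos hρ hμ0
    refine ⟨ρ / |μ|, hW, (div_le_iff₀' hμ0).2 h.le, ?_, fun r hr => ?_⟩
    · rw [abs_mul, abs_of_pos hW, mul_div_cancel₀ _ hμ0.ne']
    · rw [le_div_iff₀' hμ0, ← abs_mul]
      exact hμ r hr

theorem card_le_of_log_near_line {L R : ℕ} (hL : 100 ≤ L) (hLR : L ≤ R) {δ μ : ℝ} {H : ℕ}
    (hδ : δ * 2 ^ (88 * (L * R)) ≤ 1) (hH : 0 < H) (hHR : H ^ (80 * R) ≤ 2 ^ (12 * (L * R)))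
    {P : Set (Fin 3 → ℤ)} (hP : ∀ r ∈ P, ∀ i, |r i| ≤ R) (Z : (Fin 3 → ℤ) →+ ℤ)
    (hlog : ∀ r ∈ P, |log (goldenMonomial r) - μ * Z r| ≤ δ)
    (hμ : ∀ r ∈ P, |μ * Z r| ≤ 23 / 10 * R) (hZ : ∀ r ∈ P, |Z r| ≤ H)
    {t : Fin 3 → ℤ} (ht : t ≠ 0) {Φ : Finset (Fin 3 → ℤ)} (hinj : Set.InjOn Z Φ)
    (hΦ : ∀ d ∈ Φ, ∀ i < 2 * L + 1, d + i • t ∈ P) : Φ.card ≤ (2 * L + 1) * (80 * R) := by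
  classical
  have hR0 : 0 < R := by omega
  obtain ⟨W, hW0, hWH, hμW, hZW⟩ := exists_abs_le_and_abs_mul_le (P := P) (fun r => (Z r : ℝ))
    (Nat.cast_pos.2 hH) (by positivity) (fun r hr => by exact_mod_cast hZ r hr) hμ
  have : Nonempty (Fin (80 * R)) := ⟨⟨0, by omega⟩⟩
  let e (k : Fin (80 * R)) : Unit →₀ ℕ := Finsupp.single () (k : ℕ)
  have he : Function.Injective e := fun k k' h => Fin.ext (Finsupp.single_injective () h)
  let b (k : Fin (80 * R)) (_ a : ℕ) : ℝ := if a = k then W ^ (k : ℕ) else 0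
  have hb (k) : biPolyLength 1 (80 * R) (b k) = W ^ (k : ℕ) := by
    simp [biPolyLength, b, apply_ite abs, abs_of_pos hW0]
  obtain ⟨c, hc, hvan⟩ := exists_golden_relation (Ω := Fin (80 * R)) (J := 1) hL hLR
    (by rw [Fintype.card_fin]; omega)
    (by rw [Fintype.card_fin]; exact Nat.le_self_pow two_ne_zero _)
    (by omega) hδ hμW hP (fun k r => (e k).prod fun _ j => Z r ^ j) b
    (fun r => Z r / W) (fun _ => 0)
    (fun r hr => by
      rw [abs_div, abs_of_pos hW0]
      exact div_le_one_of_le₀ (hZW r hr) hW0.le)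
    (fun _ _ => by simp)
    (fun r _ k => by
      simp only [e, Finsupp.prod_single_index, pow_zero]
      simp [biPoly, b, ← mul_pow, mul_div_cancel₀ _ hW0.ne'])
    (fun k => by
      rw [hb]
      calc W ^ (k : ℕ) ≤ (H : ℝ) ^ (k : ℕ) := by gcongr
        _ ≤ (H : ℝ) ^ (80 * R) := pow_le_pow_right₀ (by exact_mod_cast hH) k.2.le
        _ ≤ _ := by exact_mod_cast hHR)
    (fun r hr => by
      rw [mul_assoc, mul_div_cancel₀ _ hW0.ne']
      exact hlog r hr)
  obtain ⟨D, hD, hdeg, hroot⟩ := goldenMonomial.exists_eval_eq_zero_of_sum_prod_pow_mul_zpow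
    (K := 80 * R) hc he (fun k => by rw [Finsupp.degree_single]; exact k.2.le) (fun _ => Z) ht L
  have hcard := card_le_totalDegree_of_eval_const_eq_zero hD (Φ.image fun d => (Z d : ℝ))
    (Finset.forall_mem_image.2 fun d hd => hroot d fun i hi => hvan _ (hΦ d hd i hi))
  rw [Finset.card_image_of_injOn fun a ha b hb h => hinj ha hb (Int.cast_injective (α := ℝ) h)]
    at hcard
  exact hcard.trans hdeg

end LineEstimate

section BivariateMonomials

open Finset

theorem exists_biPoly_eq_pow_mul_add_pow (p q s : ℝ) {k j K : ℕ} (h : k + j < K) :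
    ∃ b : ℕ → ℕ → ℝ, (∀ u v, (p * v) ^ k * (q * u + s * v) ^ j = biPoly K K b u v) ∧
      biPolyLength K K b ≤ |p| ^ k * (|q| + |s|) ^ j := by
  classical
  let w (a : ℕ) : ℝ := p ^ k * (q ^ a * s ^ (j - a) * j.choose a)
  have hcol (g : ℕ → ℕ → ℝ) : (∑ i ∈ range K, ∑ a ∈ range K,
      if a < j + 1 ∧ i = k + (j - a) then g i a else 0) =
      ∑ a ∈ range (j + 1), g (k + (j - a)) a := by
    rw [sum_comm, ← sum_subset (range_mono (by omega : j + 1 ≤ K))]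
    · refine sum_congr rfl fun a ha => ?_
      rw [sum_eq_single (k + (j - a)), if_pos ⟨mem_range.1 ha, rfl⟩]
      · exact fun i _ hi => if_neg fun h => hi h.2
      · exact fun h' => absurd (mem_range.2 (by omega)) h'
    · exact fun a _ ha => sum_eq_zero fun i _ => if_neg fun h => ha (mem_range.2 h.1)
  refine ⟨fun i a => if a < j + 1 ∧ i = k + (j - a) then w a else 0, fun u v => ?_, ?_⟩
  · simp only [biPoly, ite_mul, zero_mul]
    rw [hcol fun i a => w a * v ^ i * u ^ a, add_pow, mul_sum]
    refine sum_congr rfl fun a _ => ?_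
    simp only [w]
    ring
  · simp only [biPolyLength, apply_ite abs, abs_zero]
    rw [hcol fun _ a => |w a|, add_pow, mul_sum]
    refine sum_le_sum fun a _ => le_of_eq ?_
    simp only [w, abs_mul, abs_pow, Nat.abs_cast]

/-- The pairs `(k, j)` of natural numbers with `k + j < K`, grouped by their sum; they index the
monomials of degree less than `K` in two variables. -/
abbrev TriangleIndex (K : ℕ) : Type :=
  Σ i : Fin K, antidiagonal (i : ℕ)

namespace TriangleIndex

variable {K : ℕ}

theorem two_mul_card : 2 * Fintype.card (TriangleIndex K) = (K + 1) * K := by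
  rw [Fintype.card_sigma]
  simp only [Fintype.card_coe, Nat.card_antidiagonal]
  have hsum := sum_range_id_mul_two (K + 1)
  rw [sum_range_succ', add_zero, Nat.add_sub_cancel] at hsum
  rw [Fin.sum_univ_eq_sum_range (· + 1), mul_comm 2, hsum]

theorem add_eq (ω : TriangleIndex K) : ω.2.1.1 + ω.2.1.2 = ω.1 :=
  mem_antidiagonal.1 ω.2.2

/-- The exponent vector of the monomial `X₀ ^ k * X₁ ^ j` indexed by `(k, j)`. -/
noncomputable def exponent (ω : TriangleIndex K) : Fin 2 →₀ ℕ :=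
  Finsupp.single 0 ω.2.1.1 + Finsupp.single 1 ω.2.1.2

theorem exponent_injective : Function.Injective (exponent (K := K)) := by
  rintro ⟨i, ⟨k, j⟩, h⟩ ⟨i', ⟨k', j'⟩, h'⟩ heq
  obtain rfl : k = k' := by simpa [exponent] using DFunLike.congr_fun heq 0
  obtain rfl : j = j' := by simpa [exponent] using DFunLike.congr_fun heq 1
  obtain rfl : i = i' := Fin.ext ((mem_antidiagonal.1 h).symm.trans (mem_antidiagonal.1 h'))
  rfl

theorem degree_exponent (ω : TriangleIndex K) : ω.exponent.degree = ω.1 := by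
  rw [exponent, map_add, Finsupp.degree_single, Finsupp.degree_single, add_eq]

theorem exponent_prod_pow {A : Type*} [CommMonoid A] (ω : TriangleIndex K) (g : Fin 2 → A) :
    (ω.exponent.prod fun s k => g s ^ k) = g 0 ^ ω.2.1.1 * g 1 ^ ω.2.1.2 := by
  rw [Finsupp.prod_fintype _ _ fun _ => pow_zero _, Fin.prod_univ_two]
  simp [exponent]

end TriangleIndex

end BivariateMonomials

section NumericalBounds

open Real

theorem log_three_le : log 3 ≤ 8 / 5 * log 2 := by
  have h : log ((3 : ℝ) ^ 5) ≤ log ((2 : ℝ) ^ 8) := log_le_log (by norm_num) (by norm_num)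
  rw [log_pow, log_pow] at h
  push_cast at h
  linarith

theorem one_le_log_three : 1 ≤ log 3 := by
  rw [le_log_iff_exp_le (by norm_num)]
  linarith [exp_one_lt_d9]

theorem goldenRatio_lt_d4 : goldenRatio < 1.6181 := by
  have : √5 < 2.2362 := by
    rw [Real.sqrt_lt' (by norm_num)]
    norm_num
  rw [goldenRatio]
  linarith

theorem goldenRatio_pow_ten_le : goldenRatio ^ 10 ≤ (2 : ℝ) ^ 7 :=
  (pow_le_pow_left₀ goldenRatio_pos.le goldenRatio_lt_d4.le 10).trans (by norm_num)

theorem log_goldenRatio_le : log goldenRatio ≤ 7 / 10 * log 2 := by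
  have h := log_le_log (pow_pos goldenRatio_pos _) goldenRatio_pow_ten_le
  rw [log_pow, log_pow] at h
  push_cast at h
  linarith

end NumericalBounds

section LatticeForms

open Real

/-- The linear form `n r₁ + m r₀`. The forms with `m = x`, `i = 1` and `m = y`, `i = 2` are the
coordinates of the lattice points at which the auxiliary function is studied. -/
def latticeForm (n m : ℕ) (i : Fin 3) : (Fin 3 → ℤ) →+ ℤ where
  toFun r := n * r i + m * r 0
  map_zero' := by simp
  map_add' r t := by simp only [Pi.add_apply]; ring

theorem latticeForm_apply (n m : ℕ) (i : Fin 3) (r : Fin 3 → ℤ) :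
    latticeForm n m i r = n * r i + m * r 0 := rfl

/-- The value that `log (goldenMonomial r)` would have if `n log φ = x log 2 + y log 3`. -/
noncomputable def latticeLog (n x y : ℕ) (r : Fin 3 → ℤ) : ℝ :=
  (latticeForm n x 1 r * log 2 + latticeForm n y 2 r * log 3) / n

variable {n x y m R : ℕ} {r : Fin 3 → ℤ}

theorem abs_latticeForm_le {κ : ℝ} (hm : (m : ℝ) ≤ κ * n) (i : Fin 3) (hr : ∀ i, |r i| ≤ R) :
    |(latticeForm n m i r : ℝ)| ≤ (1 + κ) * n * R := by
  have h (i) : |(r i : ℝ)| ≤ R := by exact_mod_cast hr i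
  rw [latticeForm_apply]
  push_cast
  refine (abs_add_le _ _).trans ?_
  rw [abs_mul, abs_mul, Nat.abs_cast, Nat.abs_cast]
  have h₁ : (n : ℝ) * |(r i : ℝ)| ≤ n * R := by gcongr; exact h i
  have h₂ : (m : ℝ) * |(r 0 : ℝ)| ≤ κ * n * R :=
    mul_le_mul hm (h 0) (abs_nonneg _) ((Nat.cast_nonneg m).trans hm)
  linarith

theorem abs_log_goldenMonomial_le (hr : ∀ i, |r i| ≤ R) :
    |log (goldenMonomial r)| ≤ 229 / 100 * R := by
  have h (i) : |(r i : ℝ)| ≤ R := by exact_mod_cast hr i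
  have hlog₂ : 0 < log 2 := log_pos (by norm_num)
  have hlog₃ : 0 < log 3 := log_pos (by norm_num)
  have hlogφ : 0 < log goldenRatio := log_pos one_lt_goldenRatio
  rw [goldenMonomial.log_eq]
  refine (abs_add_three _ _ _).trans ?_
  rw [abs_mul, abs_mul, abs_mul, abs_of_pos hlogφ, abs_of_pos hlog₂, abs_of_pos hlog₃]
  calc _ ≤ R * (7 / 10 * log 2) + R * log 2 + R * (8 / 5 * log 2) :=
        add_le_add_three (mul_le_mul (h 0) log_goldenRatio_le hlogφ.le (by positivity))
          (mul_le_mul (h 1) le_rfl hlog₂.le (by positivity))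
          (mul_le_mul (h 2) log_three_le hlog₃.le (by positivity))
    _ = 33 / 10 * log 2 * R := by ring
    _ ≤ _ := by gcongr; linarith [log_two_lt_d9]

theorem abs_log_goldenMonomial_sub_latticeLog_le (hn : 0 < n) (hRn : R ≤ n)
    (hr : ∀ i, |r i| ≤ R) : |log (goldenMonomial r) - latticeLog n x y r| ≤
      |n * log goldenRatio - x * log 2 - y * log 3| := by
  have hn' : (0 : ℝ) < n := Nat.cast_pos.2 hn
  have h : log (goldenMonomial r) - latticeLog n x y r =
      r 0 / n * (n * log goldenRatio - x * log 2 - y * log 3) := by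
    rw [goldenMonomial.log_eq, latticeLog, latticeForm_apply, latticeForm_apply]
    push_cast
    field_simp
    ring
  rw [h, abs_mul]
  refine mul_le_of_le_one_left (abs_nonneg _) ?_
  rw [abs_div, Nat.abs_cast, div_le_one hn']
  have : |r 0| ≤ (n : ℤ) := (hr 0).trans (by exact_mod_cast hRn)
  exact_mod_cast this

theorem abs_latticeLog_le (hn : 0 < n) (hRn : R ≤ n) (hR : 100 ≤ R)
    (hΛ : |n * log goldenRatio - x * log 2 - y * log 3| ≤ 1) (hr : ∀ i, |r i| ≤ R) :
    |latticeLog n x y r| ≤ 23 / 10 * R := by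
  have hR' : (100 : ℝ) ≤ R := by exact_mod_cast hR
  have hlog := abs_log_goldenMonomial_sub_latticeLog_le (x := x) (y := y) hn hRn hr
  rw [abs_sub_comm] at hlog
  linarith [abs_log_goldenMonomial_le hr,
    abs_sub_abs_le_abs_sub (latticeLog n x y r) (log (goldenMonomial r))]

theorem goldenMonomial.eq_zero_of_abs_log_le (hr : ∀ i, |r i| ≤ R) {δ : ℝ}
    (hδ : δ * 2 ^ (11 * (R + 1)) ≤ 1) (h : |log (goldenMonomial r)| ≤ δ) : r = 0 := by
  have hδ0 : 0 ≤ δ := (abs_nonneg _).trans h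
  have hδ1 : δ ≤ 1 := (le_mul_of_one_le_right hδ0 (one_le_pow₀ one_le_two)).trans hδ
  have hsub : |goldenMonomial r - 1| ≤ 2 * δ := by
    have := abs_exp_sub_one_le (h.trans hδ1)
    rw [exp_log (goldenMonomial.pos r)] at this
    linarith
  have hmem := sub_mem (six_pow_mul_mem_goldenPairs r (hr 1) (hr 2))
    (goldenPairs.intCast_mem (6 ^ R))
  have hconj : |6 ^ R * goldenMonomialConj r - 6 ^ R| ≤ 2 * 72 ^ R := by
    refine (abs_sub _ _).trans ?_
    rw [two_mul]
    refine add_le_add ((abs_six_pow_mul_conj_le r hr).trans ?_) ?_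
    · rw [← mul_pow]
      exact pow_le_pow_left₀ (by positivity) (by linarith [goldenRatio_lt_two]) R
    · rw [abs_of_pos (by positivity)]
      exact pow_le_pow_left₀ (by norm_num) (by norm_num) R
  have hzero := goldenPairs.fst_eq_zero_of_abs_mul_lt_one hmem (by
    push_cast
    rw [Prod.fst_sub, Prod.snd_sub, ← mul_sub_one, abs_mul, abs_mul,
      abs_of_pos (by positivity : (0 : ℝ) < 6 ^ R)]
    calc 6 ^ R * |goldenMonomial r - 1| * |6 ^ R * goldenMonomialConj r - 6 ^ R|
        ≤ 6 ^ R * (2 * δ) * (2 * 72 ^ R) := by gcongr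
      _ = δ * (4 * (6 * 72) ^ R) := by rw [mul_pow]; ring
      _ ≤ δ * (2 ^ 10 * (2 ^ 11) ^ R) := by gcongr <;> norm_num
      _ = 1 / 2 * (δ * 2 ^ (11 * (R + 1))) := by rw [mul_add, pow_add, pow_mul]; ring
      _ < 1 := by linarith)
  refine eq_one_iff.1 (sub_eq_zero.1 ((mul_eq_zero.1 ?_).resolve_left
    (by positivity : (6 : ℝ) ^ R ≠ 0)))
  rw [mul_sub_one]
  simpa using hzero

theorem eq_zero_of_latticeForm_eq_zero (hn : 0 < n) (hRn : R ≤ n)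
    (hΛ : |n * log goldenRatio - x * log 2 - y * log 3| * 2 ^ (11 * (R + 1)) ≤ 1)
    (hr : ∀ i, |r i| ≤ R) (hx : latticeForm n x 1 r = 0) (hy : latticeForm n y 2 r = 0) :
    r = 0 := by
  refine goldenMonomial.eq_zero_of_abs_log_le hr hΛ ?_
  simpa [latticeLog, hx, hy] using
    abs_log_goldenMonomial_sub_latticeLog_le (x := x) (y := y) hn hRn hr

end LatticeForms

section LatticeEstimates

open Real

variable {n x y L R : ℕ}

theorem exists_biPoly_eq_latticeForm_pow_mul_pow (hn : 0 < n) (hR : 0 < R) {k j K : ℕ}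
    (h : k + j < K) : ∃ b : ℕ → ℕ → ℝ,
      (∀ r, (latticeForm n x 1 r : ℝ) ^ k * latticeForm n y 2 r ^ j = biPoly K K b
        (latticeLog n x y r / (23 / 10 * R)) (latticeForm n x 1 r / (17 / 10 * n * R))) ∧
      biPolyLength K K b ≤ (4 * n * R) ^ (k + j) := by
  have : (0 : ℝ) < n := Nat.cast_pos.2 hn
  have : (0 : ℝ) < R := Nat.cast_pos.2 hR
  have : 0 < log 2 := log_pos (by norm_num)
  have hlog₃ := one_le_log_three
  obtain ⟨b, hb, hlen⟩ := exists_biPoly_eq_pow_mul_add_pow (17 / 10 * n * R)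
    (n * (23 / 10 * R) / log 3) (-(17 / 10 * n * R * log 2 / log 3)) h
  refine ⟨b, fun r => ?_, hlen.trans ?_⟩
  · rw [← hb, latticeLog]
    congr 2 <;> field_simp
    ring
  · rw [pow_add]
    gcongr
    · rw [abs_of_pos (by positivity)]
      gcongr
      norm_num
    · rw [abs_neg, abs_of_pos (by positivity), abs_of_pos (by positivity), ← add_div,
        div_le_iff₀ (by positivity)]
      calc n * (23 / 10 * R) + 17 / 10 * n * R * log 2
          = n * R * (23 / 10 + 17 / 10 * log 2) := by ring
        _ ≤ n * R * (4 * log 3) := by gcongr; linarith [log_two_lt_d9]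
        _ = _ := by ring

theorem exists_golden_relation_latticeForm (hL : 100 ≤ L) (hLR : L ≤ R) (hn : 0 < n)
    (hRn : R ≤ n) (hx : (x : ℝ) ≤ 7 / 10 * n) (hH : (4 * n * R) ^ (80 * R) ≤ 2 ^ (12 * (L * R)))
    (hΛ : |n * log goldenRatio - x * log 2 - y * log 3| * 2 ^ (88 * (L * R)) ≤ 1) :
    ∃ c : TriangleIndex (80 * R) → Fin (2 * L + 1) → ℝ, c ≠ 0 ∧
      ∀ r : Fin 3 → ℤ, (∀ i, |r i| ≤ R) → ∑ ω, ∑ l, c ω l *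
        (ω.exponent.prod fun i k => (![latticeForm n x 1, latticeForm n y 2] i) r ^ k : ℤ) *
        goldenMonomial r ^ ((l : ℤ) - L) = 0 := by
  have hn' : (1 : ℝ) ≤ n := by exact_mod_cast hn
  have hR : 0 < R := by omega
  have hR' : (100 : ℝ) ≤ R := by exact_mod_cast hL.trans hLR
  have hΛ1 : |n * log goldenRatio - x * log 2 - y * log 3| ≤ 1 :=
    (le_mul_of_one_le_right (abs_nonneg _) (one_le_pow₀ one_le_two)).trans hΛ
  have : Nonempty (TriangleIndex (80 * R)) := ⟨⟨⟨0, by omega⟩, ⟨(0, 0), by simp⟩⟩⟩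
  have hcard := TriangleIndex.two_mul_card (K := 80 * R)
  choose b hb hlen using fun ω : TriangleIndex (80 * R) =>
    exists_biPoly_eq_latticeForm_pow_mul_pow (x := x) (y := y) hn hR (ω.add_eq.trans_lt ω.1.2)
  refine exists_golden_relation (J := 80 * R) (ρ := 23 / 10 * R) (P := {r | ∀ i, |r i| ≤ R})
    hL hLR (by nlinarith) (by nlinarith) le_rfl hΛ (abs_of_nonneg (by positivity)).le
    (fun _ hr => hr) _ b (fun r => latticeLog n x y r / (23 / 10 * R))
    (fun r => latticeForm n x 1 r / (17 / 10 * n * R)) (fun r hr => ?_) (fun r hr => ?_)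
    (fun r _ ω => ?_) (fun ω => ?_) (fun r hr => ?_)
  · rw [abs_div, abs_of_pos (by positivity : 0 < 23 / 10 * (R : ℝ)), div_le_one (by positivity)]
    exact abs_latticeLog_le hn hRn (hL.trans hLR) hΛ1 hr
  · rw [abs_div, abs_of_pos (by positivity : 0 < 17 / 10 * (n : ℝ) * R),
      div_le_one (by positivity)]
    exact (abs_latticeForm_le hx 1 hr).trans_eq (by ring)
  · rw [ω.exponent_prod_pow fun i => (![latticeForm n x 1, latticeForm n y 2] i) r, ← hb]
    simp
  · calc biPolyLength (80 * R) (80 * R) (b ω)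
        ≤ (4 * n * R : ℝ) ^ (ω.1 : ℕ) := ω.add_eq ▸ hlen ω
      _ ≤ (4 * n * R : ℝ) ^ (80 * R) := pow_le_pow_right₀ (by nlinarith) ω.1.2.le
      _ ≤ _ := by exact_mod_cast hH
  · rw [mul_div_cancel₀ _ (by positivity)]
    exact abs_log_goldenMonomial_sub_latticeLog_le hn hRn hr

theorem exists_eval_latticeForm_eq_zero (hL : 100 ≤ L) (hLR : L ≤ R) (hn : 0 < n) (hRn : R ≤ n)
    (hx : (x : ℝ) ≤ 7 / 10 * n) (hH : (4 * n * R) ^ (80 * R) ≤ 2 ^ (12 * (L * R)))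
    (hΛ : |n * log goldenRatio - x * log 2 - y * log 3| * 2 ^ (88 * (L * R)) ≤ 1)
    {t : Fin 3 → ℤ} (ht : t ≠ 0) :
    ∃ D : MvPolynomial (Fin 2) ℝ, D ≠ 0 ∧ D.totalDegree ≤ (2 * L + 1) * (80 * R) ∧
      ∀ d : Fin 3 → ℤ, (∀ i < 2 * L + 1, ∀ j, |(d + i • t) j| ≤ R) →
        MvPolynomial.eval ![(latticeForm n x 1 d : ℝ), (latticeForm n y 2 d : ℝ)] D = 0 := by
  obtain ⟨c, hc, hvan⟩ := exists_golden_relation_latticeForm hL hLR hn hRn hx hH hΛ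
  obtain ⟨D, hD, hdeg, hroot⟩ := goldenMonomial.exists_eval_eq_zero_of_sum_prod_pow_mul_zpow
    hc TriangleIndex.exponent_injective (fun ω => ω.degree_exponent.trans_le ω.1.2.le)
    ![latticeForm n x 1, latticeForm n y 2] ht L
  refine ⟨D, hD, hdeg, fun d hd => ?_⟩
  convert hroot d fun i hi => hvan _ (hd i hi) using 3
  ext i
  fin_cases i <;> rfl

end LatticeEstimates

section IntegerBoxes

/-- The box `[0, q)^ι` of integer vectors. -/
noncomputable def intBox (ι : Type*) [Fintype ι] [DecidableEq ι] (q : ℕ) : Finset (ι → ℤ) :=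
  Fintype.piFinset fun _ => Finset.Ico 0 (q : ℤ)

variable {ι : Type*} [Fintype ι] [DecidableEq ι] {q : ℕ} {r t : ι → ℤ}

theorem mem_intBox : r ∈ intBox ι q ↔ ∀ i, 0 ≤ r i ∧ r i < q := by
  simp [intBox]

theorem card_intBox : (intBox ι q).card = q ^ Fintype.card ι := by
  simp [intBox]

theorem abs_sub_apply_le_of_mem_intBox (hr : r ∈ intBox ι q) (ht : t ∈ intBox ι q) (i : ι) :
    |(r - t) i| ≤ q := by
  have hri := mem_intBox.1 hr i
  have hti := mem_intBox.1 ht i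
  rw [Pi.sub_apply, abs_le]
  omega

variable {A : Type*} [AddGroup A] [DecidableEq A] {M p s : ℕ} (f : (ι → ℤ) →+ A)

theorem exists_ne_zero_map_eq_zero_of_card_image_intBox
    (hM : ((intBox ι q).image f).card < q ^ Fintype.card ι) :
    ∃ t ≠ 0, f t = 0 ∧ ∀ i, |t i| ≤ q := by
  obtain ⟨t₁, ht₁, t₂, ht₂, hne, heq⟩ := Finset.exists_ne_map_eq_of_card_lt_of_maps_to
    (by rwa [card_intBox]) fun r hr => Finset.mem_image_of_mem f hr
  exact ⟨t₁ - t₂, sub_ne_zero.2 hne, by rw [map_sub, heq, sub_self],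
    abs_sub_apply_le_of_mem_intBox ht₁ ht₂⟩

theorem exists_card_gt_map_eq_zero_of_card_image_intBox
    (hM : ((intBox ι q).image f).card * M < q ^ Fintype.card ι) :
    ∃ Φ : Finset (ι → ℤ), M < Φ.card ∧ (∀ d ∈ Φ, f d = 0 ∧ ∀ i, |d i| ≤ q) ∧
      ∀ d ∈ Φ, ∀ d' ∈ Φ, ∀ i, |(d - d') i| ≤ q := by
  obtain ⟨v, -, hv⟩ := Finset.exists_lt_card_fiber_of_mul_lt_card_of_maps_to
    (fun r hr => Finset.mem_image_of_mem f hr) (by rwa [card_intBox])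
  obtain ⟨r₀, hr₀⟩ := Finset.card_pos.1 ((Nat.zero_le _).trans_lt hv)
  rw [Finset.mem_filter] at hr₀
  refine ⟨((intBox ι q).filter (f · = v)).image (· - r₀), ?_, ?_, ?_⟩
  · rwa [Finset.card_image_of_injective _ sub_left_injective]
  · refine Finset.forall_mem_image.2 fun r hr => ?_
    rw [Finset.mem_filter] at hr
    exact ⟨by rw [map_sub, hr.2, hr₀.2, sub_self], abs_sub_apply_le_of_mem_intBox hr.1 hr₀.1⟩
  · refine Finset.forall_mem_image.2 fun r hr => Finset.forall_mem_image.2 fun t ht => ?_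
    rw [Finset.mem_filter] at hr ht
    rw [sub_sub_sub_cancel_right]
    exact abs_sub_apply_le_of_mem_intBox hr.1 ht.1

end IntegerBoxes

section LowerBound

open Real

variable {n x y L R p s : ℕ}

/-- The combination `a * (n r₁ + x r₀) + b * (n r₂ + y r₀)` of the two lattice coordinates: the form
in which the zero estimate in the plane yields a linear form with few values. -/
noncomputable def latticeComb (n x y : ℕ) (a b : ℝ) : (Fin 3 → ℤ) →+ ℝ :=
  (AddMonoidHom.mulLeft a).comp ((Int.castAddHom ℝ).comp (latticeForm n x 1)) +
    (AddMonoidHom.mulLeft b).comp ((Int.castAddHom ℝ).comp (latticeForm n y 2))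

theorem latticeComb_apply (n x y : ℕ) (a b : ℝ) (r : Fin 3 → ℤ) :
    latticeComb n x y a b r = a * latticeForm n x 1 r + b * latticeForm n y 2 r := rfl

theorem exists_card_image_latticeForm_le (hL : 100 ≤ L) (hLR : L ≤ R) (hRn : R ≤ n)
    (hx : (x : ℝ) ≤ 7 / 10 * n) (hH : (4 * n * R) ^ (80 * R) ≤ 2 ^ (12 * (L * R)))
    (hΛ : |n * log goldenRatio - x * log 2 - y * log 3| * 2 ^ (88 * (L * R)) ≤ 1)
    (hp : ((2 * L + 1) * (80 * R)) ^ 2 < p ^ 3) (hpR : p + (2 * L + 1) ≤ R) :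
    ∃ a b : ℝ, (a ≠ 0 ∨ b ≠ 0) ∧
      ((intBox (Fin 3) p).image (latticeComb n x y a b)).card ≤ (2 * L + 1) * (80 * R) := by
  have hn : 0 < n := by omega
  have hp0 : 0 < p := Nat.pos_of_ne_zero fun h => by simp [h] at hp
  obtain ⟨D, hD, hdeg, hroot⟩ := exists_eval_latticeForm_eq_zero (y := y) hL hLR hn hRn hx hH hΛ
    (t := Pi.single 0 1) (by simp)
  let η (r : Fin 3 → ℤ) : Fin 2 → ℝ := ![latticeForm n x 1 r, latticeForm n y 2 r]
  have hη_eq {r t} (h : η r = η t) : latticeForm n x 1 (r - t) = 0 ∧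
      latticeForm n y 2 (r - t) = 0 := by
    rw [map_sub, map_sub, sub_eq_zero, sub_eq_zero]
    exact ⟨Int.cast_injective (α := ℝ) (congrFun h 0), Int.cast_injective (α := ℝ) (congrFun h 1)⟩
  have hη_add (r t) : η (r + t) = η r + η t := by
    ext i
    fin_cases i <;> simp [η]
  have hη_inj : Set.InjOn (fun r => η (r - fun _ => (p : ℤ))) (intBox (Fin 3) p) := by
    intro r hr t ht h
    obtain ⟨h₁, h₂⟩ := hη_eq h
    rw [sub_sub_sub_cancel_right] at h₁ h₂
    refine sub_eq_zero.1 (eq_zero_of_latticeForm_eq_zero hn hRn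
      (le_trans (by gcongr 1; exact pow_le_pow_right₀ one_le_two (by nlinarith)) hΛ)
      (fun i => ?_) h₁ h₂)
    have : (p : ℤ) ≤ R := by omega
    exact (abs_sub_apply_le_of_mem_intBox hr ht i).trans this
  obtain ⟨a, b, hab, hcard⟩ := exists_linear_card_image_le_of_eval_add_eq_zero hD hdeg
    ((intBox (Fin 3) p).image fun r => η (r - fun _ => (p : ℤ))) ((intBox (Fin 3) p).image η)
    (Finset.mem_image.2 ⟨0, by simp [mem_intBox, hp0], by ext i; fin_cases i <;> simp [η]⟩)
    (by rwa [Finset.card_image_of_injOn hη_inj, card_intBox])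
    (Finset.forall_mem_image.2 fun r hr => Finset.forall_mem_image.2 fun t ht => by
      rw [← hη_add]
      refine hroot _ fun i hi k => ?_
      have hrk := mem_intBox.1 hr k
      have htk := mem_intBox.1 ht k
      have hik : (Pi.single 0 1 : Fin 3 → ℤ) k = 0 ∨ (Pi.single 0 1 : Fin 3 → ℤ) k = 1 := by
        by_cases hk : k = 0 <;> simp [hk]
      rw [Pi.add_apply, Pi.add_apply, Pi.sub_apply, Pi.smul_apply, abs_le]
      rcases hik with hik | hik <;> rw [hik] <;> simp only [nsmul_eq_mul] <;> omega)
  rw [Finset.image_image] at hcard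
  exact ⟨a, b, hab, hcard⟩

theorem exists_latticeLog_eq_mul {a b : ℝ} (n x y : ℕ) (hab : a ≠ 0 ∨ b ≠ 0) :
    ∃ (Z : (Fin 3 → ℤ) →+ ℤ) (μ : ℝ), (Z = latticeForm n x 1 ∨ Z = latticeForm n y 2) ∧
      ∀ r, latticeComb n x y a b r = 0 → latticeLog n x y r = μ * Z r ∧
        (Z r = 0 → latticeForm n x 1 r = 0 ∧ latticeForm n y 2 r = 0) := by
  rcases eq_or_ne b 0 with rfl | hb
  · refine ⟨latticeForm n y 2, log 3 / n, Or.inr rfl, fun r hr => ?_⟩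
    have hr0 : latticeForm n x 1 r = 0 := by
      simpa [latticeComb_apply, hab.resolve_right (· rfl)] using hr
    refine ⟨?_, fun h => ⟨hr0, h⟩⟩
    rw [latticeLog, hr0]
    push_cast
    ring
  · refine ⟨latticeForm n x 1, (log 2 - a / b * log 3) / n, Or.inl rfl, fun r hr => ?_⟩
    have hr' : (latticeForm n y 2 r : ℝ) = -(a / b) * latticeForm n x 1 r := by
      rw [latticeComb_apply] at hr
      field_simp
      linarith
    refine ⟨?_, fun h => ⟨h, by simpa [h] using hr'⟩⟩
    rw [latticeLog, hr']
    ring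

theorem card_le_of_latticeComb_eq_zero (hL : 100 ≤ L) (hLR : L ≤ R) (hRn : R ≤ n)
    (hx : (x : ℝ) ≤ 7 / 10 * n) (hy : (y : ℝ) ≤ 44 / 100 * n)
    (hH : (4 * n * R) ^ (80 * R) ≤ 2 ^ (12 * (L * R)))
    (hΛ : |n * log goldenRatio - x * log 2 - y * log 3| * 2 ^ (88 * (L * R)) ≤ 1)
    (hpR : p + (2 * L + 1) * s ≤ R) {a b : ℝ} (hab : a ≠ 0 ∨ b ≠ 0) {t : Fin 3 → ℤ} (ht : t ≠ 0)
    (htf : latticeComb n x y a b t = 0) (hts : ∀ i, |t i| ≤ s) {Φ : Finset (Fin 3 → ℤ)}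
    (hΦ : ∀ d ∈ Φ, latticeComb n x y a b d = 0 ∧ ∀ i, |d i| ≤ p)
    (hΦsub : ∀ d ∈ Φ, ∀ d' ∈ Φ, ∀ i, |(d - d') i| ≤ p) :
    Φ.card ≤ (2 * L + 1) * (80 * R) := by
  have hn : 0 < n := by omega
  have hΛ1 : |n * log goldenRatio - x * log 2 - y * log 3| ≤ 1 :=
    (le_mul_of_one_le_right (abs_nonneg _) (one_le_pow₀ one_le_two)).trans hΛ
  have hΛ11 : |n * log goldenRatio - x * log 2 - y * log 3| * 2 ^ (11 * (R + 1)) ≤ 1 :=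
    le_trans (by gcongr 1; exact pow_le_pow_right₀ one_le_two (by nlinarith)) hΛ
  have hpR' : (p : ℤ) ≤ R := by exact_mod_cast (Nat.le_add_right _ _).trans hpR
  obtain ⟨Z, μ, hZ, hZf⟩ := exists_latticeLog_eq_mul n x y hab
  refine card_le_of_log_near_line (μ := μ) (H := 4 * n * R)
    (P := {r | (∀ i, |r i| ≤ R) ∧ latticeComb n x y a b r = 0}) hL hLR hΛ
    (Nat.mul_pos (by omega) (by omega)) hH (fun r hr => hr.1) Z
    (fun r hr => ?_) (fun r hr => ?_) (fun r hr => ?_) ht ?_ fun d hd i hi => ⟨fun k => ?_, ?_⟩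
  · rw [← (hZf r hr.2).1]
    exact abs_log_goldenMonomial_sub_latticeLog_le hn hRn hr.1
  · rw [← (hZf r hr.2).1]
    exact abs_latticeLog_le hn hRn (hL.trans hLR) hΛ1 hr.1
  · have hZr : |(Z r : ℝ)| ≤ (1 + 7 / 10) * n * R := by
      rcases hZ with rfl | rfl
      · exact abs_latticeForm_le hx 1 hr.1
      · exact abs_latticeForm_le (hy.trans (by linarith [n.cast_nonneg (α := ℝ)])) 2 hr.1
    have : |(Z r : ℝ)| ≤ 4 * n * R := hZr.trans (by gcongr; norm_num)
    exact_mod_cast this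
  · intro d hd d' hd' h
    obtain ⟨h₁, h₂⟩ := (hZf (d - d') (by rw [map_sub, (hΦ d hd).1, (hΦ d' hd').1, sub_zero])).2
      (by rw [map_sub, h, sub_self])
    exact sub_eq_zero.1 (eq_zero_of_latticeForm_eq_zero hn hRn hΛ11
      (fun i => (hΦsub d hd d' hd' i).trans hpR') h₁ h₂)
  · rw [Pi.add_apply, Pi.smul_apply, nsmul_eq_mul]
    calc |d k + i * t k| ≤ |d k| + |i * t k| := abs_add_le _ _
      _ ≤ p + (2 * L + 1) * s := by
        rw [abs_mul, Nat.abs_cast]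
        gcongr
        · exact (hΦ d hd).2 k
        · exact_mod_cast hi.le
        · exact hts k
      _ ≤ R := by exact_mod_cast hpR
  · rw [map_add, map_nsmul, htf, (hΦ d hd).1, smul_zero, add_zero]

theorem one_lt_abs_linear_form_mul (hL : 100 ≤ L) (hLR : L ≤ R) (hRn : R ≤ n)
    (hx : (x : ℝ) ≤ 7 / 10 * n) (hy : (y : ℝ) ≤ 44 / 100 * n)
    (hH : (4 * n * R) ^ (80 * R) ≤ 2 ^ (12 * (L * R)))
    (hp : ((2 * L + 1) * (80 * R)) ^ 2 < p ^ 3) (hs : (2 * L + 1) * (80 * R) < s ^ 3)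
    (hpR : p + (2 * L + 1) * s ≤ R) (hsp : s ≤ p) :
    1 < |n * log goldenRatio - x * log 2 - y * log 3| * 2 ^ (88 * (L * R)) := by
  by_contra! hΛ
  have hs0 : 0 < s := Nat.pos_of_ne_zero fun h => by simp [h] at hs
  obtain ⟨a, b, hab, hcard⟩ := exists_card_image_latticeForm_le (y := y) hL hLR hRn hx hH hΛ hp
    (by nlinarith)
  have hsub : intBox (Fin 3) s ⊆ intBox (Fin 3) p := fun r hr => mem_intBox.2 fun i =>
    ⟨(mem_intBox.1 hr i).1, (mem_intBox.1 hr i).2.trans_le (by exact_mod_cast hsp)⟩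
  obtain ⟨t, ht, htf, hts⟩ := exists_ne_zero_map_eq_zero_of_card_image_intBox
    (latticeComb n x y a b) (q := s)
    ((Finset.card_le_card (Finset.image_subset_image hsub)).trans_lt (hcard.trans_lt hs))
  obtain ⟨Φ, hΦcard, hΦ, hΦsub⟩ := exists_card_gt_map_eq_zero_of_card_image_intBox
    (latticeComb n x y a b) (M := (2 * L + 1) * (80 * R)) (q := p)
    ((Nat.mul_le_mul_right _ hcard).trans_lt (by rwa [← sq]))
  exact hΦcard.not_ge
    (card_le_of_latticeComb_eq_zero hL hLR hRn hx hy hH hΛ hpR hab ht htf hts hΦ hΦsub)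

set_option exponentiation.threshold 1000 in
theorem pow_twenty_le_two_pow {B : ℕ} (hB : 112 ≤ B) :
    (9600000 * B ^ 2) ^ 20 ≤ 2 ^ (7 * B) := by
  induction B, hB using Nat.le_induction with
  | base => norm_num
  | succ B hB ih =>
    have hratio : (B + 1) ^ 40 ≤ 2 ^ 7 * B ^ 40 := by
      refine Nat.le_of_mul_le_mul_left (c := 112 ^ 40) ?_ (by positivity)
      calc 112 ^ 40 * (B + 1) ^ 40 = (112 * (B + 1)) ^ 40 := (mul_pow ..).symm
        _ ≤ (113 * B) ^ 40 := by gcongr 1; omega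
        _ = 113 ^ 40 * B ^ 40 := mul_pow ..
        _ ≤ 2 ^ 7 * 112 ^ 40 * B ^ 40 := by gcongr; norm_num
        _ = _ := by ring
    calc (9600000 * (B + 1) ^ 2) ^ 20 = 9600000 ^ 20 * (B + 1) ^ 40 := by
          rw [mul_pow, ← pow_mul]
      _ ≤ 9600000 ^ 20 * (2 ^ 7 * B ^ 40) := by gcongr
      _ = 2 ^ 7 * (9600000 * B ^ 2) ^ 20 := by rw [mul_pow _ _ 20, ← pow_mul]; ring
      _ ≤ 2 ^ 7 * 2 ^ (7 * B) := by gcongr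
      _ = _ := by rw [← pow_add]; congr 1; ring

theorem mul_sq_le_two_pow {B : ℕ} (hB : 112 ≤ B) : 2400000 * B ^ 2 ≤ 2 ^ (B - 1) := by
  have h : (2400000 * B ^ 2) ^ 20 ≤ (2 ^ (B - 1)) ^ 20 := by
    calc (2400000 * B ^ 2) ^ 20 ≤ (9600000 * B ^ 2) ^ 20 := by gcongr; norm_num
      _ ≤ 2 ^ (7 * B) := pow_twenty_le_two_pow hB
      _ ≤ _ := by rw [← pow_mul]; exact Nat.pow_le_pow_right (by norm_num) (by omega)
  exact (Nat.pow_le_pow_iff_left (by norm_num)).1 h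

theorem one_lt_abs_linear_form_mul_two_pow {B : ℕ} (hB : 112 ≤ B) (hn : 2 ^ (B - 1) ≤ n)
    (hnB : n < 2 ^ B) (hx : (x : ℝ) ≤ 7 / 10 * n) (hy : (y : ℝ) ≤ 44 / 100 * n) :
    1 < |n * log goldenRatio - x * log 2 - y * log 3| * 2 ^ (1900800000 * B ^ 3) := by
  have hBsq : B ≤ B ^ 2 := Nat.le_self_pow (by norm_num) B
  have hBcube : 112 * B ^ 2 ≤ B ^ 3 := by rw [pow_succ' B 2]; gcongr
  have h := one_lt_abs_linear_form_mul (n := n) (x := x) (y := y) (L := 9 * B)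
    (R := 2400000 * B ^ 2) (p := 2300000 * B ^ 2) (s := 1600 * B) (by omega) (by omega)
    ((mul_sq_le_two_pow hB).trans hn) hx hy ?_ ?_ ?_ ?_ (by omega)
  · convert h using 3
    ring
  · calc (4 * n * (2400000 * B ^ 2)) ^ (80 * (2400000 * B ^ 2))
        = (n ^ 20 * (9600000 * B ^ 2) ^ 20) ^ (4 * (2400000 * B ^ 2)) := by
          rw [← mul_pow, ← pow_mul]; congr 1 <;> ring
      _ ≤ ((2 ^ B) ^ 20 * 2 ^ (7 * B)) ^ (4 * (2400000 * B ^ 2)) :=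
          Nat.pow_le_pow_left (Nat.mul_le_mul (Nat.pow_le_pow_left hnB.le 20)
            (pow_twenty_le_two_pow hB)) _
      _ = _ := by rw [← pow_mul, ← pow_add, ← pow_mul]; congr 1; ring
  · refine lt_of_mul_lt_mul_right (a := 112 ^ 2) ?_ (Nat.zero_le _)
    calc ((2 * (9 * B) + 1) * (80 * (2400000 * B ^ 2))) ^ 2 * 112 ^ 2
        = (((2 * (9 * B) + 1) * 112) * (192000000 * B ^ 2)) ^ 2 := by ring
      _ ≤ ((2017 * B) * (192000000 * B ^ 2)) ^ 2 := by gcongr ?_ ^ 2; gcongr ?_ * _; omega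
      _ < (2300000 * B ^ 2) ^ 3 * 112 ^ 2 := by
        have : 0 < B ^ 6 := by positivity
        ring_nf
        omega
  · ring_nf
    omega
  · ring_nf
    omega

end LowerBound

section BinomExpPoly

theorem exists_int_vector_dvd {ι κ : Type*} [Fintype ι] [Fintype κ] (g : κ → ι → ℤ) (M : κ → ℕ)
    (hM : ∀ k, 0 < M k) {X : ℕ} (hX : ∏ k, M k < (X + 1) ^ Fintype.card ι) :
    ∃ c : ι → ℤ, c ≠ 0 ∧ (∀ i, |c i| ≤ X) ∧ ∀ k, (M k : ℤ) ∣ ∑ i, g k i * c i := by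
  classical
  have (k : κ) : NeZero (M k) := ⟨(hM k).ne'⟩
  obtain ⟨a, b, hab, h⟩ := Fintype.exists_ne_map_eq_of_card_lt
    (fun (a : ι → Fin (X + 1)) (k : κ) => ((∑ i, g k i * ((a i : ℕ) : ℤ) : ℤ) : ZMod (M k)))
    (by simpa [ZMod.card] using hX)
  refine ⟨fun i => (a i : ℕ) - (b i : ℕ), fun h0 => hab ?_, fun i => ?_, fun k => ?_⟩
  · ext i
    have := congrFun h0 i
    simp only [Pi.zero_apply] at this
    omega
  · have := (a i).2
    have := (b i).2
    simp only [abs_le]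
    omega
  · rw [← ZMod.intCast_zmod_eq_zero_iff_dvd, ← sub_eq_zero.2 (congrFun h k)]
    push_cast
    simp only [mul_sub, Finset.sum_sub_distrib]

variable {O : Type*} [CommRing O]

theorem choose_mul_pow_eq_sum (Y : O) (t k : ℕ) :
    (t.choose k : O) * Y ^ t =
      ∑ d ∈ Finset.range (t + 1), t.choose d * (d.choose k * Y ^ k * (Y - 1) ^ (d - k)) := by
  rcases lt_or_ge t k with htk | hkt
  · rw [Nat.choose_eq_zero_of_lt htk, Nat.cast_zero, zero_mul]
    refine (Finset.sum_eq_zero fun d hd => ?_).symm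
    rw [Nat.choose_eq_zero_of_lt (n := d) (by rw [Finset.mem_range] at hd; omega)]
    simp
  · obtain ⟨m, rfl⟩ := Nat.exists_eq_add_of_le hkt
    rw [add_assoc, Finset.sum_range_add, Finset.sum_eq_zero, zero_add]
    · have hY : Y ^ (k + m) = ∑ j ∈ Finset.range (m + 1), Y ^ k * ((Y - 1) ^ j * m.choose j) := by
        rw [pow_add, ← Finset.mul_sum]
        congr 1
        conv_lhs => rw [← sub_add_cancel Y 1, add_pow]
        simp
      rw [hY, Finset.mul_sum]
      refine Finset.sum_congr rfl fun j _ => ?_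
      have hchoose : ((k + m).choose (k + j) : O) * (k + j).choose k =
          (k + m).choose k * m.choose j := by
        have := Nat.choose_mul (n := k + m) (k := k + j) (s := k) (by omega)
        rw [Nat.add_sub_cancel_left, Nat.add_sub_cancel_left] at this
        rw [← Nat.cast_mul, this, Nat.cast_mul]
      rw [Nat.add_sub_cancel_left]
      linear_combination -(Y ^ k * (Y - 1) ^ j) * hchoose
    · intro d hd
      rw [Nat.choose_eq_zero_of_lt (n := d) (Finset.mem_range.1 hd)]
      simp

theorem exists_eq_add_mul_of_mem_adjoin {α : O} (hα : α ^ 2 = α + 1) {x : O}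
    (hx : x ∈ Algebra.adjoin ℤ {α}) : ∃ a b : ℤ, x = a + b * α := by
  induction hx using Algebra.adjoin_induction with
  | mem x hx => exact ⟨0, 1, by simp [Set.mem_singleton_iff.1 hx]⟩
  | algebraMap r => exact ⟨r, 0, by simp⟩
  | add x y _ _ hx hy =>
    obtain ⟨a, b, rfl⟩ := hx
    obtain ⟨c, d, rfl⟩ := hy
    exact ⟨a + c, b + d, by push_cast; ring⟩
  | mul x y _ _ hx hy =>
    obtain ⟨a, b, rfl⟩ := hx
    obtain ⟨c, d, rfl⟩ := hy
    exact ⟨a * c + b * d, a * d + b * c + b * d, by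
      push_cast
      linear_combination (b * d : O) * hα⟩

theorem two_mul_sum_range_sub (J w : ℕ) :
    2 * ∑ d ∈ Finset.range (J + w), (w - (d - J)) = 2 * J * w + w ^ 2 + w := by
  have htriangle (w : ℕ) : 2 * ∑ i ∈ Finset.range w, (w - i) = w ^ 2 + w := by
    induction w with
    | zero => simp
    | succ w ih =>
      rw [Finset.sum_range_succ', mul_add]
      simp only [Nat.add_sub_add_right]
      rw [ih]
      simp
      ring
  rw [Finset.sum_range_add, mul_add]
  simp only [Nat.add_sub_cancel_left]
  rw [htriangle, Finset.sum_congr rfl (g := fun _ => w) fun d hd => by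
    rw [Finset.mem_range] at hd; omega]
  simp
  ring

variable {J L : ℕ}

/-- The exponential polynomial `∑ c_{k,l,b} α ^ b * (t choose k) * E ^ (l * t)` in `t`, used as
auxiliary function in the `p`-adic argument. The binomial basis keeps its Mahler coefficients
integral. -/
def binomExpPoly (α E : O) (c : Fin J × Fin L × Fin 2 → ℤ) (t : ℕ) : O :=
  ∑ i, c i * α ^ (i.2.2 : ℕ) * (t.choose i.1 * (E ^ (i.2.1 : ℕ)) ^ t)

theorem exists_mahlerCoeff_eq {α : O} (hα : α ^ 2 = α + 1) {p : ℕ} {E e : O}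
    (hE : E ∈ Algebra.adjoin ℤ {α}) (he : e ∈ Algebra.adjoin ℤ {α}) (hEe : E = 1 + p * e)
    (d l b : ℕ) {k : ℕ} (hk : k < J) :
    ∃ u v : ℤ, α ^ b * (d.choose k * (E ^ l) ^ k * (E ^ l - 1) ^ (d - k)) =
      p ^ (d - (J - 1)) * (u + v * α) := by
  have hα' : α ∈ Algebra.adjoin ℤ {α} := Algebra.subset_adjoin rfl
  obtain ⟨f, hf, hEf⟩ : ∃ f ∈ Algebra.adjoin ℤ {α}, E ^ l - 1 = p * f := by
    refine ⟨e * ∑ i ∈ Finset.range l, E ^ i, mul_mem he (sum_mem fun i _ => pow_mem hE _), ?_⟩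
    rw [← mul_geom_sum, hEe]
    ring
  obtain ⟨u, v, huv⟩ := exists_eq_add_mul_of_mem_adjoin hα
    (x := α ^ b * (d.choose k * (E ^ l) ^ k * (p ^ ((d - k) - (d - (J - 1))) * f ^ (d - k))))
    (mul_mem (pow_mem hα' _) (mul_mem (mul_mem (natCast_mem _ _) (pow_mem (pow_mem hE _) _))
      (mul_mem (pow_mem (natCast_mem _ _) _) (pow_mem hf _))))
  have hsplit : (p : O) ^ (d - k) = p ^ (d - (J - 1)) * p ^ ((d - k) - (d - (J - 1))) := by
    rw [← pow_add]
    congr 1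
    omega
  refine ⟨u, v, ?_⟩
  rw [← huv, hEf, mul_pow, hsplit]
  ring

theorem binomExpPoly_eq_sum {α E : O} {p : ℕ} {u v : ℕ → Fin J × Fin L × Fin 2 → ℤ}
    (huv : ∀ d i, α ^ (i.2.2 : ℕ) * (d.choose i.1 * (E ^ (i.2.1 : ℕ)) ^ (i.1 : ℕ) *
      (E ^ (i.2.1 : ℕ) - 1) ^ (d - (i.1 : ℕ))) = p ^ (d - (J - 1)) * (u d i + v d i * α))
    (c : Fin J × Fin L × Fin 2 → ℤ) (t : ℕ) :
    binomExpPoly α E c t = ∑ d ∈ Finset.range (t + 1), t.choose d * (p ^ (d - (J - 1)) *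
      ((∑ i, u d i * c i : ℤ) + (∑ i, v d i * c i : ℤ) * α)) := by
  simp only [binomExpPoly, choose_mul_pow_eq_sum, Finset.mul_sum]
  rw [Finset.sum_comm]
  refine Finset.sum_congr rfl fun d _ => ?_
  push_cast
  rw [Finset.sum_mul, ← Finset.sum_add_distrib, Finset.mul_sum, Finset.mul_sum]
  refine Finset.sum_congr rfl fun i _ => ?_
  linear_combination (c i * t.choose d : O) * huv d i

theorem exists_pow_dvd_binomExpPoly {α : O} (hα : α ^ 2 = α + 1) {p w X : ℕ} (hp : 0 < p)
    (hJ : 0 < J) {E e : O} (hE : E ∈ Algebra.adjoin ℤ {α}) (he : e ∈ Algebra.adjoin ℤ {α})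
    (hEe : E = 1 + p * e) (hX : p ^ (2 * J * w + w ^ 2) < (X + 1) ^ (2 * (J * L))) :
    ∃ c : Fin J × Fin L × Fin 2 → ℤ, c ≠ 0 ∧ (∀ i, |c i| ≤ X) ∧
      ∀ t, (p : O) ^ w ∣ binomExpPoly α E c t := by
  choose u v huv using fun (d : ℕ) (i : Fin J × Fin L × Fin 2) =>
    exists_mahlerCoeff_eq hα hE he hEe d i.2.1 i.2.2 i.1.2
  obtain ⟨c, hc0, hcX, hc⟩ := exists_int_vector_dvd
    (κ := Fin (J - 1 + w) × Fin 2) (fun k i => if k.2 = 0 then u k.1 i else v k.1 i)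
    (fun k => p ^ (w - ((k.1 : ℕ) - (J - 1)))) (fun k => by positivity) (X := X) (by
      rw [Finset.prod_pow_eq_pow_sum, Fintype.sum_prod_type]
      simp only [Finset.sum_const, Finset.card_univ, Fintype.card_fin, smul_eq_mul,
        Fintype.card_prod]
      rw [← Finset.mul_sum, Fin.sum_univ_eq_sum_range (fun d => w - (d - (J - 1))),
        two_mul_sum_range_sub, show J * (L * 2) = 2 * (J * L) by ring]
      refine lt_of_le_of_lt (Nat.pow_le_pow_right hp ?_) hX
      obtain ⟨J, rfl⟩ := Nat.exists_eq_add_of_le' hJ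
      simp only [Nat.add_sub_cancel]
      nlinarith)
  refine ⟨c, hc0, hcX, fun t => ?_⟩
  rw [binomExpPoly_eq_sum huv]
  refine Finset.dvd_sum fun d _ => dvd_mul_of_dvd_right ?_ _
  rcases lt_or_ge d (J - 1 + w) with hd | hd
  · have hcast (b : Fin 2) := Int.cast_dvd_cast (α := O) _ _ (hc (⟨d, hd⟩, b))
    have hu := hcast 0
    have hv := hcast 1
    simp only [if_true, one_ne_zero, if_false, Nat.cast_pow, Int.cast_pow, Int.cast_natCast]
      at hu hv
    have hpow : (p : O) ^ w ∣ p ^ (d - (J - 1)) * p ^ (w - (d - (J - 1))) := by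
      rw [← pow_add]
      exact pow_dvd_pow _ (by omega)
    exact hpow.trans (mul_dvd_mul_left _ (dvd_add hu (hv.mul_right _)))
  · exact dvd_mul_of_dvd_left (pow_dvd_pow _ (by omega)) _

end BinomExpPoly

section ZeroEstimate

variable {F : Type*} [Field F] {J L : ℕ}

theorem eq_zero_of_sum_mul_choose_eq_zero {c : Fin J → F}
    (h : ∀ t : ℕ, ∑ k, c k * t.choose k = 0) : c = 0 := by
  have (t : ℕ) : ∀ ht : t < J, c ⟨t, ht⟩ = 0 := by
    induction t using Nat.strong_induction_on with
    | _ t ih =>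
      intro ht
      have hsum := h t
      rw [Finset.sum_eq_single ⟨t, ht⟩] at hsum
      · simpa using hsum
      · intro k _ hk
        rcases lt_or_ge (k : ℕ) t with hkt | hkt
        · rw [show c k = 0 from ih k hkt k.2, zero_mul]
        · rw [Nat.choose_eq_zero_of_lt, Nat.cast_zero, mul_zero]
          exact lt_of_le_of_ne hkt fun h => hk (Fin.ext h.symm)
      · simp
  ext k
  exact this k k.2

variable [CharZero F]

open MvPolynomial in
theorem exists_eval_eq_sum_mul_choose (c : Fin J → F) :
    ∃ p : MvPolynomial Unit F, p.totalDegree ≤ J - 1 ∧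
      ∀ t : ℕ, eval (fun _ => (t : F)) p = ∑ k, c k * t.choose k := by
  refine ⟨∑ k : Fin J, C (c k / (k : ℕ).factorial) *
    ∏ j ∈ Finset.range k, (X () - C (j : F)), totalDegree_finsetSum_le fun k _ => ?_, fun t => ?_⟩
  · have hdeg (j : ℕ) : (X () - C (j : F) : MvPolynomial Unit F).totalDegree ≤ 1 :=
      (totalDegree_sub_C_le _ _).trans_eq (totalDegree_X _)
    calc _ ≤ (C (c k / (k : ℕ).factorial) : MvPolynomial Unit F).totalDegree +
          ∑ j ∈ Finset.range k, (X () - C (j : F) : MvPolynomial Unit F).totalDegree :=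
        (totalDegree_mul _ _).trans (Nat.add_le_add_left (totalDegree_finsetProd _ _) _)
      _ ≤ 0 + ∑ _j ∈ Finset.range k, 1 := by gcongr with j; exacts [(totalDegree_C _).le, hdeg j]
      _ ≤ J - 1 := by
        have := k.2
        simp
        omega
  · simp only [map_sum, map_mul, map_prod, map_sub, eval_C, eval_X]
    refine Finset.sum_congr rfl fun k _ => ?_
    have : ((k : ℕ).factorial : F) ≠ 0 := Nat.cast_ne_zero.2 (Nat.factorial_ne_zero _)
    rw [← descPochhammer_eval_eq_prod_range, descPochhammer_eval_eq_descFactorial,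
      Nat.descFactorial_eq_factorial_mul_choose, Nat.cast_mul]
    field_simp

theorem injOn_add_mul {R m : ℕ} (hRm : R ≤ m) :
    Set.InjOn (fun x : ℕ × ℕ => x.1 + x.2 * m) {x | x.1 < R} := by
  rintro ⟨r, s⟩ hr ⟨r', s'⟩ hr' heq
  simp only [Set.mem_ofPred_eq] at hr hr' heq
  obtain rfl : r = r' := by
    simpa [Nat.mod_eq_of_lt (hr.trans_le hRm), Nat.mod_eq_of_lt (hr'.trans_le hRm)] using
      congrArg (· % m) heq
  obtain rfl : s = s' := Nat.eq_of_mul_eq_mul_right (by omega : 0 < m) (by omega)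
  rfl

theorem exists_sum_choose_mul_pow_ne_zero {R S m : ℕ} {c : Fin J → Fin L → F} (hc : c ≠ 0)
    {z : Fin L → F} (hz : Function.Injective z) (hz0 : ∀ l, z l ≠ 0) (hJ : 0 < J) (hL : 0 < L)
    (hRS : L * J ≤ R * S) (hRm : R ≤ m) {y : ℕ → Fin L → F} (hy : ∀ s l, y s l ≠ 0) :
    ∃ r < R + L, ∃ s < S, ∑ l, (∑ k, c k l * (r + s * m).choose k) * z l ^ r * y s l ≠ 0 := by
  classical
  by_contra! h
  choose p hpdeg hpeval using fun l => exists_eval_eq_sum_mul_choose fun k => c k l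
  have hp : p ≠ 0 := fun hp => hc <| by
    ext k l
    refine congrFun (eq_zero_of_sum_mul_choose_eq_zero (c := fun k => c k l) fun t => ?_) k
    rw [← hpeval, hp, Pi.zero_apply, map_zero]
  obtain ⟨D, hD, hDdeg, hroot⟩ :=
    exists_eval_eq_zero_of_sum_eval_mul_pow hp hpdeg hz fun _ => (1 : F)
  have hcard := card_le_totalDegree_of_eval_const_eq_zero hD
    ((Finset.range R ×ˢ Finset.range S).image fun x => ((x.1 + x.2 * m : ℕ) : F)) (by
      simp only [Finset.forall_mem_image, Finset.mem_product, Finset.mem_range]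
      rintro ⟨r, s⟩ ⟨hr, hs⟩
      refine hroot _ (fun l => z l ^ r * y s l)
        (fun l => mul_ne_zero (pow_ne_zero _ (hz0 l)) (hy s l)) fun i hi => ?_
      rw [← h (r + i) (by omega) s hs]
      refine Finset.sum_congr rfl fun l _ => ?_
      have harg : (fun _ : Unit => ((r + s * m : ℕ) : F)) + (i : F) • (fun _ => 1) =
          fun _ => ((r + i + s * m : ℕ) : F) := by
        ext
        simp
        ring
      rw [harg, hpeval, pow_add]
      ring)
  rw [Finset.card_image_of_injOn, Finset.card_product, Finset.card_range,
    Finset.card_range] at hcard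
  · have : L * (J - 1) < L * J := by gcongr; omega
    omega
  · exact Nat.cast_injective.comp_injOn ((injOn_add_mul hRm).mono fun x hx => by simp_all)

end ZeroEstimate

section Golden

open Real

theorem norm_eq_goldenRatio_or_inv {x : ℂ} (h : x ^ 2 = x + 1) :
    ‖x‖ = goldenRatio ∨ ‖x‖ = goldenRatio⁻¹ := by
  have hadd : (goldenRatio : ℂ) + goldenConj = 1 := by exact_mod_cast goldenRatio_add_goldenConj
  have hmul : (goldenRatio : ℂ) * goldenConj = -1 := by exact_mod_cast goldenRatio_mul_goldenConj
  have hfactor : (x - (goldenRatio : ℝ)) * (x - (goldenConj : ℝ)) = 0 := by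
    linear_combination h - x * hadd + hmul
  rcases mul_eq_zero.1 hfactor with h | h <;> rw [sub_eq_zero.1 h, Complex.norm_real, norm_eq_abs]
  · exact Or.inl (abs_of_pos goldenRatio_pos)
  · exact Or.inr abs_goldenConj

theorem norm_pow_mul_sub_one_pow_le {x : ℂ} (h : x ^ 2 = x + 1) {a b N : ℕ} (ha : a ≤ b + N)
    (hb : b ≤ a + N) : ‖x ^ a * (x - 1) ^ b‖ ≤ goldenRatio ^ N := by
  have hmul : ‖x‖ * ‖x - 1‖ = 1 := by
    rw [← norm_mul, show x * (x - 1) = 1 by linear_combination h, norm_one]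
  have hφ : (1 : ℝ) ≤ goldenRatio := one_lt_goldenRatio.le
  obtain ⟨hx, hx'⟩ : ‖x‖ ≤ goldenRatio ∧ ‖x - 1‖ ≤ goldenRatio := by
    have hinv := inv_le_one_of_one_le₀ hφ
    rcases norm_eq_goldenRatio_or_inv h with h0 | h0 <;> rw [h0] at hmul ⊢
    · rw [eq_inv_of_mul_eq_one_right hmul]
      exact ⟨le_rfl, hinv.trans hφ⟩
    · rw [eq_inv_of_mul_eq_one_right hmul, inv_inv]
      exact ⟨hinv.trans hφ, le_rfl⟩
  rw [norm_mul, norm_pow, norm_pow]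
  rcases le_total a b with hab | hab
  · obtain ⟨d, rfl⟩ := Nat.exists_eq_add_of_le hab
    rw [pow_add, ← mul_assoc, ← mul_pow, hmul, one_pow, one_mul]
    exact (pow_le_pow_left₀ (norm_nonneg _) hx' _).trans (pow_le_pow_right₀ hφ (by omega))
  · obtain ⟨d, rfl⟩ := Nat.exists_eq_add_of_le hab
    rw [pow_add, mul_right_comm, ← mul_pow, hmul, one_pow, one_mul]
    exact (pow_le_pow_left₀ (norm_nonneg _) hx _).trans (pow_le_pow_right₀ hφ (by omega))

theorem eq_zero_of_int_add_mul_eq_zero {O : Type*} [CommRing O] [CharZero O] {α : O}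
    (hα : α ^ 2 = α + 1) {a b : ℤ} (h : (a : O) + b * α = 0) : a = 0 ∧ b = 0 := by
  have hnormℤ : a ^ 2 + a * b - b ^ 2 = 0 := by
    refine Int.cast_injective (α := O) ?_
    push_cast
    linear_combination (a + b - b * α : O) * h + (b ^ 2 : O) * hα
  have hnorm : (a : ℝ) ^ 2 + a * b - b ^ 2 = 0 := by exact_mod_cast hnormℤ
  have hfactor : ((a : ℝ) + b * goldenRatio) *
      (((a + b : ℤ) : ℝ) + (-b : ℤ) * goldenRatio) = 0 := by
    push_cast
    linear_combination hnorm - (b ^ 2 : ℝ) * goldenRatio_sq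
  rcases mul_eq_zero.1 hfactor with h | h
  · exact int_add_mul_goldenRatio_eq_zero_iff.1 h
  · have := int_add_mul_goldenRatio_eq_zero_iff.1 h
    omega

end Golden

section PadicCore

open NumberField Real

theorem eq_zero_of_mem_pow_of_norm_le {K : Type*} [Field K] [NumberField K]
    (hdeg : Module.finrank ℚ K ≤ 4) {p w : ℕ} {I : Ideal (𝓞 K)} (hN : p ^ 2 ≤ Ideal.absNorm I)
    {x : 𝓞 K} (hx : x ∈ I ^ w) {B : ℝ} (hB1 : 1 ≤ B) (hB : ∀ σ : K →+* ℂ, ‖σ x‖ ≤ B)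
    (hBp : B ^ 2 < p ^ w) : x = 0 := by
  by_contra hx0
  have hdvd : Ideal.absNorm I ^ w ∣ Ideal.absNorm (Ideal.span {x}) := by
    rw [← map_pow]
    exact Ideal.absNorm_dvd_absNorm_of_le ((Ideal.span_singleton_le_iff_mem _).2 hx)
  have hne : Ideal.absNorm (Ideal.span {x}) ≠ 0 := by
    rwa [Ne, Ideal.absNorm_eq_zero_iff, Ideal.span_singleton_eq_bot]
  have hlower : (p ^ 2) ^ w ≤ Ideal.absNorm (Ideal.span {x}) :=
    (Nat.pow_le_pow_left hN w).trans (Nat.le_of_dvd (Nat.pos_of_ne_zero hne) hdvd)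
  have hupper : (Ideal.absNorm (Ideal.span {x}) : ℝ) ≤ B ^ 4 := by
    calc (Ideal.absNorm (Ideal.span {x}) : ℝ) = ‖∏ σ : K →ₐ[ℚ] ℂ, σ (x : K)‖ := by
          rw [← Algebra.norm_eq_prod_embeddings ℚ ℂ (x : K), ← Algebra.coe_norm_int,
            Ideal.absNorm_span_singleton]
          simp [Nat.cast_natAbs]
      _ ≤ ∏ _σ : K →ₐ[ℚ] ℂ, B := by
          rw [norm_prod]
          exact Finset.prod_le_prod (fun _ _ => norm_nonneg _) fun σ _ => hB σ.toRingHom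
      _ = B ^ Module.finrank ℚ K := by rw [Finset.prod_const, Finset.card_univ, AlgHom.card]
      _ ≤ B ^ 4 := pow_le_pow_right₀ hB1 hdeg
  have hle : ((p : ℝ) ^ 2) ^ w ≤ B ^ 4 := le_trans (by exact_mod_cast hlower) hupper
  have hlt : (B ^ 2) ^ 2 < ((p : ℝ) ^ w) ^ 2 := by gcongr
  rw [← pow_mul, mul_comm 2 w, pow_mul] at hle
  linarith [show (B ^ 2) ^ 2 = B ^ 4 by ring]

variable {O : Type*} [CommRing O] {J L : ℕ}

/-- The value `A ^ (S * L) * binomExpPoly α E c (r + s * m)` after replacing `E ^ m` by `η / A`: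
close to that value when `A * E ^ m` is close to `η`, but of size independent of `m`. -/
def binomExpPolyApprox (α E A η : O) (c : Fin J × Fin L × Fin 2 → ℤ) (S m r s : ℕ) : O :=
  ∑ i, c i * α ^ (i.2.2 : ℕ) * (r + s * m).choose i.1 * (E ^ (i.2.1 : ℕ)) ^ r *
    (η ^ (s * i.2.1) * A ^ (S * L - s * i.2.1))

variable {α E A η : O} {c : Fin J × Fin L × Fin 2 → ℤ} {S m r s : ℕ}

theorem mul_add_mul_sub_of_lt (hs : s < S) (l : Fin L) : s * l + (S * L - s * l) = S * L :=
  Nat.add_sub_cancel' (Nat.mul_le_mul hs.le l.2.le)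

theorem binomExpPolyApprox_mem {I : Ideal O} (hc : ∀ t, binomExpPoly α E c t ∈ I)
    (hI : A * E ^ m - η ∈ I) (hs : s < S) : binomExpPolyApprox α E A η c S m r s ∈ I := by
  have hdecomp : binomExpPolyApprox α E A η c S m r s =
      A ^ (S * L) * binomExpPoly α E c (r + s * m) -
        ∑ i : Fin J × Fin L × Fin 2, c i * α ^ (i.2.2 : ℕ) * (r + s * m).choose i.1 *
          (E ^ (i.2.1 : ℕ)) ^ r * A ^ (S * L - s * i.2.1) *
            ((A * E ^ m) ^ (s * (i.2.1 : ℕ)) - η ^ (s * (i.2.1 : ℕ))) := by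
    rw [binomExpPolyApprox, binomExpPoly, Finset.mul_sum, ← Finset.sum_sub_distrib]
    refine Finset.sum_congr rfl fun i _ => ?_
    have hA : A ^ (S * L) = A ^ (s * (i.2.1 : ℕ)) * A ^ (S * L - s * i.2.1) := by
      rw [← pow_add, mul_add_mul_sub_of_lt hs]
    have hE : (E ^ (i.2.1 : ℕ)) ^ (r + s * m) =
        (E ^ (i.2.1 : ℕ)) ^ r * (E ^ m) ^ (s * (i.2.1 : ℕ)) := by
      rw [pow_add, ← pow_mul, ← pow_mul, ← pow_mul]
      congr 2
      ring
    rw [hA, hE, mul_pow A]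
    ring
  rw [hdecomp]
  exact sub_mem (Ideal.mul_mem_left _ _ (hc _)) (sum_mem fun i _ =>
    Ideal.mul_mem_left _ _ (Ideal.mem_of_dvd _ (sub_dvd_pow_sub_pow _ _ _) hI))

theorem norm_pow_mul_sub_one_pow_le_of_le_two_mul {x : ℂ} (hx : x ^ 2 = x + 1) {l M : ℕ}
    (hl : l ≤ 2 * M) (q r : ℕ) :
    ‖x ^ (q * l * r) * (x - 1) ^ (q * M * r)‖ ≤ goldenRatio ^ (q * M * r) := by
  refine norm_pow_mul_sub_one_pow_le hx ?_ (by omega)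
  calc q * l * r ≤ q * (2 * M) * r := by gcongr
    _ = _ := by ring

theorem norm_pow_mul_pow_sub_le {a b : ℂ} {H : ℝ} (ha : ‖a‖ ≤ H) (hb : ‖b‖ ≤ H) (hs : s < S)
    (l : Fin L) : ‖b ^ (s * l) * a ^ (S * L - s * l)‖ ≤ H ^ (S * L) := by
  have : 0 ≤ H := (norm_nonneg a).trans ha
  rw [norm_mul, norm_pow, norm_pow]
  calc ‖b‖ ^ (s * (l : ℕ)) * ‖a‖ ^ (S * L - s * l)
      ≤ H ^ (s * (l : ℕ)) * H ^ (S * L - s * l) := by gcongr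
    _ = _ := by rw [← pow_add, mul_add_mul_sub_of_lt hs]

theorem norm_map_sub_one_pow_mul_binomExpPolyApprox_le (hα : α ^ 2 = α + 1) (σ : O →+* ℂ)
    {H : ℝ} (hAH : ‖σ A‖ ≤ H) (hηH : ‖σ η‖ ≤ H) {M X C q : ℕ} (hL : L = 2 * M)
    (hcX : ∀ i, |c i| ≤ X) (hC : ∀ k < J, (r + s * m).choose k ≤ C) (hs : s < S) :
    ‖σ ((α - 1) ^ (q * M * r) * binomExpPolyApprox α (α ^ q) A η c S m r s)‖ ≤
      8 * J * M * X * C * goldenRatio ^ (q * M * r) * H ^ (S * L) := by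
  have hσα : σ α ^ 2 = σ α + 1 := by rw [← map_pow, hα, map_add, map_one]
  rw [map_mul, binomExpPolyApprox, map_sum, Finset.mul_sum]
  refine (norm_sum_le_of_le _ (n := fun _ => X * 2 * C * goldenRatio ^ (q * M * r) * H ^ (S * L))
    fun i _ => ?_).trans_eq ?_
  · have hcoeff : ‖(c i : ℂ)‖ ≤ X := by
      rw [Complex.norm_intCast]
      exact_mod_cast hcX i
    have hpow : ‖σ α ^ (i.2.2 : ℕ)‖ ≤ 2 := by
      have := norm_pow_mul_sub_one_pow_le hσα (a := i.2.2) (b := 0) (N := 1)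
        (by have := i.2.2.2; omega) (by omega)
      rw [pow_zero, mul_one, pow_one] at this
      linarith [goldenRatio_lt_two]
    have hchoose : ‖(((r + s * m).choose i.1 : ℕ) : ℂ)‖ ≤ C := by
      rw [Complex.norm_natCast]
      exact_mod_cast hC _ i.1.2
    have hbalanced := norm_pow_mul_sub_one_pow_le_of_le_two_mul hσα (i.2.1.2.le.trans_eq hL) q r
    have hAη := norm_pow_mul_pow_sub_le hAH hηH hs i.2.1
    have hterm : σ ((α - 1) ^ (q * M * r)) * σ (c i * α ^ (i.2.2 : ℕ) *
        (r + s * m).choose i.1 * ((α ^ q) ^ (i.2.1 : ℕ)) ^ r *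
          (η ^ (s * i.2.1) * A ^ (S * L - s * i.2.1))) =
        c i * σ α ^ (i.2.2 : ℕ) * (((r + s * m).choose i.1 : ℕ) : ℂ) *
          (σ α ^ (q * i.2.1 * r) * (σ α - 1) ^ (q * M * r)) *
            (σ η ^ (s * i.2.1) * σ A ^ (S * L - s * i.2.1)) := by
      simp only [map_mul, map_pow, map_sub, map_one, map_intCast, map_natCast]
      rw [← pow_mul, ← pow_mul]
      ring
    rw [hterm, norm_mul, norm_mul, norm_mul, norm_mul]
    gcongr
  · simp only [Finset.sum_const, Finset.card_univ, Fintype.card_prod, Fintype.card_fin,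
      nsmul_eq_mul, hL]
    push_cast
    ring

theorem pow_injective_of_sq_eq_add_one (hα : α ^ 2 = α + 1) (σ : O →+* ℂ) :
    Function.Injective fun l : ℕ => α ^ l := by
  intro l l' hll
  have hnorm := congrArg (fun x => ‖σ x‖) hll
  simp only [map_pow, norm_pow] at hnorm
  have hφ := one_lt_goldenRatio
  have hσα : σ α ^ 2 = σ α + 1 := by rw [← map_pow, hα, map_add, map_one]
  obtain ⟨hpos, hne⟩ : 0 < ‖σ α‖ ∧ ‖σ α‖ ≠ 1 := by
    rcases norm_eq_goldenRatio_or_inv hσα with h | h <;> rw [h]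
    · exact ⟨goldenRatio_pos, hφ.ne'⟩
    · exact ⟨inv_pos.2 goldenRatio_pos, (inv_lt_one_of_one_lt₀ hφ).ne⟩
  exact pow_right_injective₀ hpos hne hnorm

theorem exists_binomExpPolyApprox_ne_zero [IsDomain O] [CharZero O] (hα : α ^ 2 = α + 1)
    (hE : Function.Injective fun l : ℕ => E ^ l) (hA : A ≠ 0) (hη : η ≠ 0) {R : ℕ} (hJ : 0 < J)
    (hL : 0 < L) (hRS : L * J ≤ R * S) (hRm : R ≤ m) (hc : c ≠ 0) :
    ∃ r < R + L, ∃ s < S, binomExpPolyApprox α E A η c S m r s ≠ 0 := by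
  let ι := algebraMap O (FractionRing O)
  have hι : Function.Injective ι := FaithfulSMul.algebraMap_injective O (FractionRing O)
  have hE0 : E ≠ 0 := fun h => absurd (@hE 1 2 (by simp [h])) (by norm_num)
  let d (k : Fin J) (l : Fin L) : FractionRing O := ι (c (k, l, 0) + c (k, l, 1) * α)
  have hd : d ≠ 0 := fun hd => hc <| by
    ext ⟨k, l, b⟩
    obtain ⟨h₀, h₁⟩ := eq_zero_of_int_add_mul_eq_zero hα
      ((map_eq_zero_iff ι hι).1 (congrFun (congrFun hd k) l))
    fin_cases b
    exacts [h₀, h₁]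
  obtain ⟨r, hr, s, hs, h⟩ := exists_sum_choose_mul_pow_ne_zero (R := R) (S := S) (m := m) hd
    (z := fun l => ι (E ^ (l : ℕ))) (y := fun s l => ι (η ^ (s * l) * A ^ (S * L - s * l)))
    (fun l l' hll => Fin.ext (hE (hι hll)))
    (fun l => (map_ne_zero_iff ι hι).2 (pow_ne_zero _ hE0)) hJ hL hRS hRm
    (fun s l => (map_ne_zero_iff ι hι).2 (mul_ne_zero (pow_ne_zero _ hη) (pow_ne_zero _ hA)))
  refine ⟨r, hr, s, hs, fun h0 => h ?_⟩
  rw [← map_zero ι, ← h0]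
  simp only [binomExpPolyApprox, d, Fintype.sum_prod_type, Fin.sum_univ_two, map_sum]
  rw [Finset.sum_comm]
  refine Finset.sum_congr rfl fun l _ => ?_
  rw [Finset.sum_mul, Finset.sum_mul]
  refine Finset.sum_congr rfl fun k _ => ?_
  simp only [map_add, map_mul, map_pow, map_intCast, map_natCast]
  simp
  ring

end PadicCore

section PadicNumberField

open NumberField Real

variable {K : Type*} [Field K] [NumberField K] {α A η : 𝓞 K} {H : ℝ} {p : ℕ} {I : Ideal (𝓞 K)}

theorem mul_pow_sub_notMem_pow (hdeg : Module.finrank ℚ K ≤ 4) (hp : 0 < p) (hpI : (p : 𝓞 K) ∈ I)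
    (hN : p ^ 2 ≤ Ideal.absNorm I) (hα : α ^ 2 = α + 1) {e : 𝓞 K} {q : ℕ} (hq : 0 < q)
    (he : e ∈ Algebra.adjoin ℤ {α}) (hαe : α ^ q = 1 + p * e) (hA : A ≠ 0) (hη : η ≠ 0)
    (hH : 1 ≤ H) (hAH : ∀ σ : 𝓞 K →+* ℂ, ‖σ A‖ ≤ H) (hηH : ∀ σ : 𝓞 K →+* ℂ, ‖σ η‖ ≤ H)
    {m w J L M R S X C : ℕ} (hJ : 0 < J) (hM : 0 < M) (hL : L = 2 * M) (hX0 : 0 < X) (hC0 : 0 < C)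
    (hX : p ^ (2 * J * w + w ^ 2) < (X + 1) ^ (2 * (J * L)))
    (hRS : L * J ≤ R * S) (hRm : R ≤ m)
    (hC : ∀ r < R + L, ∀ s < S, ∀ k < J, (r + s * m).choose k ≤ C)
    (hsmall : (8 * J * M * X * C * goldenRatio ^ (q * M * (R + L)) * H ^ (S * L)) ^ 2 <
      p ^ w) :
    A * (α ^ q) ^ m - η ∉ I ^ w := by
  intro hmem
  have hE : α ^ q ∈ Algebra.adjoin ℤ {α} := pow_mem (Algebra.self_mem_adjoin_singleton ℤ α) _
  have hαinv : α * (α - 1) = 1 := by linear_combination hα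
  have hφ : (1 : ℝ) ≤ goldenRatio := one_lt_goldenRatio.le
  obtain ⟨σ⟩ : Nonempty (K →+* ℂ) := inferInstance
  have hinj : Function.Injective fun l : ℕ => (α ^ q) ^ l := fun l l' hll => by
    simp only [← pow_mul] at hll
    exact Nat.eq_of_mul_eq_mul_left hq
      (pow_injective_of_sq_eq_add_one hα (σ.comp (algebraMap (𝓞 K) K)) hll)
  obtain ⟨c, hc0, hcX, hc⟩ := exists_pow_dvd_binomExpPoly hα hp hJ hE he hαe hX
  obtain ⟨r, hr, s, hs, hne⟩ := exists_binomExpPolyApprox_ne_zero (A := A) (η := η) hα hinj hA hη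
    hJ (by omega) hRS hRm hc0
  have hQ : binomExpPolyApprox α (α ^ q) A η c S m r s ∈ I ^ w := binomExpPolyApprox_mem
    (fun t => Ideal.mem_of_dvd _ (hc t) (Ideal.pow_mem_pow hpI w)) hmem hs
  have hzero := eq_zero_of_mem_pow_of_norm_le hdeg hN
    (Ideal.mul_mem_left _ ((α - 1) ^ (q * M * r)) hQ) ?_
    (fun σ => (norm_map_sub_one_pow_mul_binomExpPolyApprox_le hα (σ.comp (algebraMap (𝓞 K) K))
      (hAH _) (hηH _) hL hcX (hC r hr s hs) hs).trans (by gcongr)) hsmall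
  · exact hne ((mul_eq_zero.1 hzero).resolve_left
      (pow_ne_zero _ (right_ne_zero_of_mul_eq_one hαinv)))
  · have hpos : 1 ≤ 8 * J * M * X * C := Nat.one_le_iff_ne_zero.2 (by positivity)
    have hpos' : (1 : ℝ) ≤ 8 * J * M * X * C := by exact_mod_cast hpos
    exact one_le_mul_of_one_le_of_one_le
      (one_le_mul_of_one_le_of_one_le hpos' (one_le_pow₀ hφ)) (one_le_pow₀ hH)

end PadicNumberField

section NumberFieldConstruction

open NumberField

theorem exists_sq_add_mul_add_eq_zero (a b : ℂ) : ∃ z : ℂ, z ^ 2 + a * z + b = 0 := by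
  obtain ⟨d, hd⟩ := IsAlgClosed.exists_pow_nat_eq (a ^ 2 - 4 * b) zero_lt_two
  exact ⟨(d - a) / 2, by linear_combination hd / 4⟩

open Polynomial IntermediateField in
theorem finiteDimensional_adjoin_and_finrank_le_two {z : ℂ} {a b : ℤ}
    (hz : z ^ 2 + a * z + b = 0) :
    FiniteDimensional ℚ ℚ⟮z⟯ ∧ Module.finrank ℚ ℚ⟮z⟯ ≤ 2 := by
  have hmonic : (X ^ 2 + C (a : ℚ) * X + C (b : ℚ) : ℚ[X]).Monic := by monicity!
  have hroot : aeval z (X ^ 2 + C (a : ℚ) * X + C (b : ℚ) : ℚ[X]) = 0 := by simpa using hz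
  have hint : IsIntegral ℚ z := ⟨_, hmonic, hroot⟩
  refine ⟨adjoin.finiteDimensional hint, ?_⟩
  rw [adjoin.finrank hint]
  refine (natDegree_le_of_dvd (minpoly.dvd ℚ z hroot) hmonic.ne_zero).trans ?_
  compute_degree

open Polynomial in
theorem exists_ringOfIntegers_sq_add_mul_add_eq_zero {K : Type*} [Field K] {z : K} {a b : ℤ}
    (hz : z ^ 2 + a * z + b = 0) : ∃ Z : 𝓞 K, Z ^ 2 + a * Z + b = 0 := by
  have hint : IsIntegral ℤ z := by
    refine ⟨X ^ 2 + C a * X + C b, by monicity!, ?_⟩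
    rw [← aeval_def]
    simpa using hz
  obtain ⟨Z, rfl⟩ : ∃ Z : 𝓞 K, (Z : K) = z := ⟨⟨z, hint⟩, rfl⟩
  exact ⟨Z, RingOfIntegers.ext (by simpa using hz)⟩

open IntermediateField in
theorem exists_numberField_of_quadratics (u v : ℤ) :
    ∃ (K : Type) (_ : Field K) (_ : NumberField K), Module.finrank ℚ K ≤ 4 ∧
      ∃ α η₁ η₂ : 𝓞 K, α ^ 2 = α + 1 ∧ η₁ + η₂ = -u ∧ η₁ * η₂ = v := by
  obtain ⟨z, hz⟩ := exists_sq_add_mul_add_eq_zero u v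
  obtain ⟨g, hg⟩ := exists_sq_add_mul_add_eq_zero ((-1 : ℤ) : ℂ) ((-1 : ℤ) : ℂ)
  obtain ⟨_, hz₂⟩ := finiteDimensional_adjoin_and_finrank_le_two hz
  obtain ⟨_, hg₂⟩ := finiteDimensional_adjoin_and_finrank_le_two hg
  let K : IntermediateField ℚ ℂ := ℚ⟮z⟯ ⊔ ℚ⟮g⟯
  obtain ⟨η, hη⟩ := exists_ringOfIntegers_sq_add_mul_add_eq_zero (a := u) (b := v)
    (z := (⟨z, le_sup_left (a := ℚ⟮z⟯) (mem_adjoin_simple_self ℚ z)⟩ : K))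
    (Subtype.ext (by simpa using hz))
  obtain ⟨α, hα⟩ := exists_ringOfIntegers_sq_add_mul_add_eq_zero (a := -1) (b := -1)
    (z := (⟨g, le_sup_right (a := ℚ⟮z⟯) (mem_adjoin_simple_self ℚ g)⟩ : K))
    (Subtype.ext (by simpa using hg))
  push_cast at hα
  exact ⟨K, inferInstance, ⟨⟩, (finrank_sup_le _ _).trans (Nat.mul_le_mul hz₂ hg₂), α, η, -u - η,
    by linear_combination hα, by ring, by linear_combination -hη⟩

theorem sq_le_card_of_sq_eq_add_one {k : Type*} [CommRing k] [Nontrivial k] [Finite k] {p : ℕ}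
    (hp : p = 2 ∨ p = 3) (hpk : (p : k) = 0) {x : k} (hx : x ^ 2 = x + 1) :
    p ^ 2 ≤ Nat.card k := by
  have hprime : p.Prime := by rcases hp with rfl | rfl <;> norm_num
  have : CharP k p := (CharP.charP_iff_prime_eq_zero hprime).2 hpk
  let ι : ZMod p →+* k := ZMod.castHom dvd_rfl k
  have hanisotropic : ∀ a b : ZMod p, a ^ 2 + a * b - b ^ 2 = 0 → a = 0 ∧ b = 0 := by
    rcases hp with rfl | rfl <;> decide
  have hinj : Function.Injective fun a : ZMod p × ZMod p => ι a.1 + ι a.2 * x := by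
    rintro ⟨a, b⟩ ⟨a', b'⟩ h
    obtain ⟨ha, hb⟩ := hanisotropic (a - a') (b - b') <| ZMod.castHom_injective k <| by
      change ι _ = ι 0
      simp only [map_sub, map_add, map_mul, map_pow, map_zero]
      linear_combination (ι a - ι a' + (ι b - ι b') * (1 - x)) * h + (ι b - ι b') ^ 2 * hx
    rw [sub_eq_zero.1 ha, sub_eq_zero.1 hb]
  simpa [sq] using Nat.card_le_card_of_injective _ hinj

theorem exists_isPrime_mem_sq_le_absNorm {K : Type*} [Field K] [NumberField K] {p : ℕ}
    (hp : p = 2 ∨ p = 3) {α : 𝓞 K} (hα : α ^ 2 = α + 1) :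
    ∃ I : Ideal (𝓞 K), I.IsPrime ∧ I ≠ ⊥ ∧ (p : 𝓞 K) ∈ I ∧ p ^ 2 ≤ Ideal.absNorm I := by
  have hprime : p.Prime := by rcases hp with rfl | rfl <;> norm_num
  have htop : Ideal.span {(p : 𝓞 K)} ≠ ⊤ := fun h => by
    have hnorm := congrArg Ideal.absNorm h
    rw [Ideal.absNorm_span_natCast, Ideal.absNorm_top] at hnorm
    exact hprime.ne_one ((Nat.pow_eq_one.1 hnorm).resolve_right Module.finrank_pos.ne')
  obtain ⟨I, hI, hle⟩ := Ideal.exists_le_maximal _ htop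
  have hpI : (p : 𝓞 K) ∈ I := hle (Ideal.mem_span_singleton_self _)
  have hbot : I ≠ ⊥ := by
    rintro rfl
    exact hprime.ne_zero (by simpa using hpI)
  have : Finite (𝓞 K ⧸ I) := I.finiteQuotientOfFreeOfNeBot hbot
  refine ⟨I, hI.isPrime, hbot, hpI, ?_⟩
  rw [Ideal.absNorm_apply, Submodule.cardQuot_apply]
  refine sq_le_card_of_sq_eq_add_one hp (x := Ideal.Quotient.mk I α) ?_ ?_
  · rw [← map_natCast (Ideal.Quotient.mk I)]
    exact Ideal.Quotient.eq_zero_iff_mem.2 hpI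
  · rw [← map_pow, hα, map_add, map_one]

end NumberFieldConstruction

section LucasFactorization

/-- The norm from `ℚ(√5)` of `(φ ^ k - 1) * φ ^ m`, where `φ` is the golden ratio. -/
def lucasNorm (m k : ℕ) : ℤ := (-1) ^ m * ((-1) ^ k + 1 - lucas k)

variable {O : Type*} [CommRing O] {α : O}

theorem cast_lucas_eq_pow_add_pow (hα : α ^ 2 = α + 1) :
    ∀ n : ℕ, (lucas n : O) = α ^ n + (1 - α) ^ n
  | 0 => by rw [lucas, pow_zero, pow_zero]; norm_num
  | 1 => by rw [lucas]; simp
  | n + 2 => by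
    rw [lucas, Int.cast_add, cast_lucas_eq_pow_add_pow hα (n + 1), cast_lucas_eq_pow_add_pow hα n]
    linear_combination (-α ^ n - (1 - α) ^ n) * hα

theorem cast_lucasNorm_eq (hα : α ^ 2 = α + 1) (m k : ℕ) :
    (lucasNorm m k : O) = (α ^ k - 1) * α ^ m * (((1 - α) ^ k - 1) * (1 - α) ^ m) := by
  have hnorm : α * (1 - α) = -1 := by linear_combination -hα
  rw [lucasNorm]
  push_cast
  rw [cast_lucas_eq_pow_add_pow hα, ← hnorm, mul_pow, mul_pow]
  ring

theorem mul_eq_mul_lucas_sub_lucas_add (hα : α ^ 2 = α + 1) {η₁ η₂ : O} {u : ℤ} {m k : ℕ}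
    (hadd : η₁ + η₂ = -u) (hmul : η₁ * η₂ = lucasNorm m k) :
    ((α ^ k - 1) * α ^ m - η₁) * ((α ^ k - 1) * α ^ m - η₂) =
      (α ^ k - 1) * α ^ m * (lucas (m + k) - lucas m + u : ℤ) := by
  rw [cast_lucasNorm_eq hα] at hmul
  push_cast
  rw [cast_lucas_eq_pow_add_pow hα, cast_lucas_eq_pow_add_pow hα, pow_add, pow_add]
  linear_combination hmul - (α ^ k - 1) * α ^ m * hadd

theorem exists_mem_adjoin_pow_eq_one_add_mul {p q : ℕ} (hpq : p = 2 ∧ q = 3 ∨ p = 3 ∧ q = 8)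
    (hα : α ^ 2 = α + 1) : ∃ e ∈ Algebra.adjoin ℤ {α}, α ^ q = 1 + p * e := by
  have hmem := Algebra.self_mem_adjoin_singleton ℤ α
  rcases hpq with ⟨rfl, rfl⟩ | ⟨rfl, rfl⟩
  · exact ⟨α, hmem, by push_cast; linear_combination (α + 1) * hα⟩
  · refine ⟨((4 : ℕ) : O) + ((7 : ℕ) : O) * α,
      add_mem (natCast_mem _ _) (mul_mem (natCast_mem _ _) hmem), ?_⟩
    push_cast
    linear_combination (α ^ 6 + α ^ 5 + 2 * α ^ 4 + 3 * α ^ 3 + 5 * α ^ 2 + 8 * α + 13) * hα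

theorem mem_pow_or_mem_pow_of_mul_mem [IsDedekindDomain O] {I : Ideal O} (hI : I.IsPrime)
    (hI0 : I ≠ ⊥) {x y : O} {w : ℕ} (h : x * y ∈ I ^ (2 * w)) : x ∈ I ^ w ∨ y ∈ I ^ w := by
  by_contra! hc
  have hprime := Ideal.prime_of_isPrime hI0 hI
  simp_rw [← Ideal.span_singleton_le_iff_mem, ← Ideal.dvd_iff_le] at h hc
  rw [← Ideal.span_singleton_mul_span_singleton, pow_dvd_iff_le_emultiplicity,
    emultiplicity_mul hprime] at h
  simp_rw [pow_dvd_iff_le_emultiplicity, not_le] at hc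
  obtain ⟨a, ha⟩ := ENat.ne_top_iff_exists.1 hc.1.ne_top
  obtain ⟨b, hb⟩ := ENat.ne_top_iff_exists.1 hc.2.ne_top
  rw [← ha, ← hb] at hc h
  norm_cast at hc h
  omega

end LucasFactorization

section LucasSize

open Real

theorem abs_goldenConj_pow_le_one (n : ℕ) : |goldenConj ^ n| ≤ 1 := by
  rw [abs_pow, abs_goldenConj]
  exact pow_le_one₀ (by positivity) (inv_le_one_of_one_le₀ one_lt_goldenRatio.le)

theorem cast_lucas_eq_goldenRatio_pow_add (n : ℕ) :
    (lucas n : ℝ) = goldenRatio ^ n + goldenConj ^ n := by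
  rw [cast_lucas_eq_pow_add_pow goldenRatio_sq, one_sub_goldenConj]

theorem eight_le_goldenRatio_pow_nine : 8 ≤ goldenRatio ^ 9 := by
  have : goldenRatio ^ 9 = 34 * goldenRatio + 21 := by
    linear_combination (goldenRatio ^ 7 + goldenRatio ^ 6 + 2 * goldenRatio ^ 5 +
      3 * goldenRatio ^ 4 + 5 * goldenRatio ^ 3 + 8 * goldenRatio ^ 2 + 13 * goldenRatio + 21) *
        goldenRatio_sq
  linarith [one_lt_goldenRatio]

theorem abs_lucasNorm_le (m k : ℕ) : |(lucasNorm m k : ℝ)| ≤ 2 * goldenRatio ^ k := by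
  have hφ : 1 ≤ goldenRatio ^ k := one_le_pow₀ one_lt_goldenRatio.le
  have hψ : |goldenConj ^ k - 1| ≤ 2 := by
    refine (abs_sub _ _).trans ?_
    linarith [abs_goldenConj_pow_le_one k, abs_one (α := ℝ)]
  rw [cast_lucasNorm_eq goldenRatio_sq, one_sub_goldenConj, mul_mul_mul_comm, ← mul_pow,
    goldenRatio_mul_goldenConj, abs_mul, abs_neg_one_pow, mul_one, mul_comm, abs_mul]
  gcongr
  rw [abs_of_nonneg (by linarith)]
  linarith

theorem lucasNorm_ne_zero {k : ℕ} (hk : k ≠ 0) (m : ℕ) : lucasNorm m k ≠ 0 := by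
  have hψ : |goldenConj ^ k| < 1 := by
    rw [abs_pow, abs_goldenConj]
    exact pow_lt_one₀ (by positivity) (inv_lt_one_of_one_lt₀ one_lt_goldenRatio) hk
  rw [← Int.cast_ne_zero (α := ℝ), cast_lucasNorm_eq goldenRatio_sq, one_sub_goldenConj]
  refine mul_ne_zero (mul_ne_zero ?_ (pow_ne_zero _ goldenRatio_ne_zero))
    (mul_ne_zero ?_ (pow_ne_zero _ goldenConj_ne_zero))
  · exact sub_ne_zero.2 (one_lt_pow₀ one_lt_goldenRatio hk).ne'
  · exact sub_ne_zero.2 fun h => by simp [h] at hψ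

theorem norm_le_one_add_of_sq_add_mul_add_eq_zero {z u v : ℂ} (h : z ^ 2 + u * z + v = 0) :
    ‖z‖ ≤ 1 + (‖u‖ + ‖v‖) := by
  by_contra! hlt
  have hsq : ‖z‖ ^ 2 ≤ ‖u‖ * ‖z‖ + ‖v‖ := by
    rw [← norm_pow, show z ^ 2 = -(u * z + v) by linear_combination h, norm_neg, ← norm_mul]
    exact norm_add_le _ _
  nlinarith [norm_nonneg u, norm_nonneg v, norm_nonneg z]

theorem norm_le_of_sq_add_mul_add_lucasNorm_eq_zero {z : ℂ} {u m k : ℕ}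
    (h : z ^ 2 + u * z + lucasNorm m k = 0) : ‖z‖ ≤ goldenRatio ^ (k + 9) * (u + 1) := by
  have hφ : 1 ≤ goldenRatio ^ k := one_le_pow₀ one_lt_goldenRatio.le
  calc ‖z‖ ≤ 1 + (‖(u : ℂ)‖ + ‖(lucasNorm m k : ℂ)‖) := norm_le_one_add_of_sq_add_mul_add_eq_zero h
    _ = 1 + (u + |(lucasNorm m k : ℝ)|) := by rw [Complex.norm_natCast, Complex.norm_intCast]
    _ ≤ goldenRatio ^ k + (goldenRatio ^ k * u + 2 * goldenRatio ^ k) := by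
      gcongr
      · exact le_mul_of_one_le_left u.cast_nonneg hφ
      · exact abs_lucasNorm_le m k
    _ ≤ goldenRatio ^ k * 8 * (u + 1) := by
      nlinarith [mul_nonneg (zero_le_one.trans hφ) u.cast_nonneg]
    _ ≤ goldenRatio ^ (k + 9) * (u + 1) := by
      rw [pow_add]
      gcongr
      exact eight_le_goldenRatio_pow_nine

theorem norm_pow_sub_one_mul_pow_le {x : ℂ} (hx : x ^ 2 = x + 1) (k : ℕ) {r : ℕ} (hr : r ≤ 7) :
    ‖(x ^ k - 1) * x ^ r‖ ≤ goldenRatio ^ (k + 9) := by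
  have hφ := one_lt_goldenRatio.le
  have hxφ : ‖x‖ ≤ goldenRatio := by
    rcases norm_eq_goldenRatio_or_inv hx with h | h <;> rw [h]
    exact (inv_le_one_of_one_le₀ hφ).trans hφ
  have hsub : ‖x ^ k - 1‖ ≤ goldenRatio ^ k * goldenRatio ^ 2 :=
    calc ‖x ^ k - 1‖ ≤ ‖x‖ ^ k + 1 := by simpa using norm_sub_le (x ^ k) 1
      _ ≤ goldenRatio ^ k + goldenRatio ^ k * goldenRatio := by
        gcongr
        exact one_le_mul_of_one_le_of_one_le (one_le_pow₀ hφ) hφ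
      _ = goldenRatio ^ k * goldenRatio ^ 2 := by rw [goldenRatio_sq]; ring
  calc ‖(x ^ k - 1) * x ^ r‖ ≤ goldenRatio ^ k * goldenRatio ^ 2 * goldenRatio ^ 7 := by
        rw [norm_mul, norm_pow x r]
        gcongr ?_ * ?_
        exact (pow_le_pow_left₀ (norm_nonneg _) hxφ r).trans (pow_le_pow_right₀ hφ hr)
    _ = goldenRatio ^ (k + 9) := by ring

end LucasSize

section InterpolationConclusion

open NumberField Real

variable {p q m k u w J L M R S X C : ℕ}

theorem pow_sub_one_mul_pow_sub_notMem_pow {K : Type*} [Field K] [NumberField K]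
    (hdeg : Module.finrank ℚ K ≤ 4) {I : Ideal (𝓞 K)} (hpI : (p : 𝓞 K) ∈ I)
    (hN : p ^ 2 ≤ Ideal.absNorm I) {α η : 𝓞 K} (hα : α ^ 2 = α + 1)
    (hη : η ^ 2 + u * η + lucasNorm m k = 0) (hpq : p = 2 ∧ q = 3 ∨ p = 3 ∧ q = 8) (hk : k ≠ 0)
    (hJ : 0 < J) (hM : 0 < M) (hL : L = 2 * M) (hX0 : 0 < X) (hC0 : 0 < C)
    (hX : p ^ (2 * J * w + w ^ 2) < (X + 1) ^ (2 * (J * L)))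
    (hRS : L * J ≤ R * S) (hRm : R ≤ m / q)
    (hC : ∀ r < R + L, ∀ s < S, ∀ k < J, (r + s * (m / q)).choose k ≤ C)
    (hsmall : (8 * J * M * X * C * goldenRatio ^ (q * M * (R + L)) *
      (goldenRatio ^ (k + 9) * (u + 1)) ^ (S * L)) ^ 2 < p ^ w) :
    (α ^ k - 1) * α ^ m - η ∉ I ^ w := by
  obtain ⟨hp0, hq0, hq8⟩ : 0 < p ∧ 0 < q ∧ q ≤ 8 := by omega
  obtain ⟨e, he, hαe⟩ := exists_mem_adjoin_pow_eq_one_add_mul hpq hα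
  have hnorm : (lucasNorm m k : 𝓞 K) ≠ 0 := Int.cast_ne_zero.2 (lucasNorm_ne_zero hk m)
  have hη0 : η ≠ 0 := fun h => hnorm (by simpa [h] using hη)
  have hα0 : α ≠ 0 := fun h => by simp [h] at hα
  have hA : (α ^ k - 1) * α ^ (m % q) ≠ 0 := by
    rw [cast_lucasNorm_eq hα] at hnorm
    exact mul_ne_zero (left_ne_zero_of_mul (left_ne_zero_of_mul hnorm)) (pow_ne_zero _ hα0)
  have hH : 1 ≤ goldenRatio ^ (k + 9) * ((u : ℝ) + 1) :=
    one_le_mul_of_one_le_of_one_le (one_le_pow₀ one_lt_goldenRatio.le) (by simp)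
  have hAH (σ : 𝓞 K →+* ℂ) :
      ‖σ ((α ^ k - 1) * α ^ (m % q))‖ ≤ goldenRatio ^ (k + 9) * ((u : ℝ) + 1) := by
    have hr : m % q ≤ 7 := by have := Nat.mod_lt m hq0; omega
    have hσ : σ α ^ 2 = σ α + 1 := by simpa using congrArg σ hα
    simpa using (norm_pow_sub_one_mul_pow_le hσ k hr).trans
      (le_mul_of_one_le_right (by positivity) (by simp : (1 : ℝ) ≤ u + 1))
  have hηH (σ : 𝓞 K →+* ℂ) : ‖σ η‖ ≤ goldenRatio ^ (k + 9) * ((u : ℝ) + 1) :=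
    norm_le_of_sq_add_mul_add_lucasNorm_eq_zero (by simpa using congrArg σ hη)
  have hsplit : (α ^ k - 1) * α ^ m = (α ^ k - 1) * α ^ (m % q) * (α ^ q) ^ (m / q) := by
    rw [mul_assoc, ← pow_mul, ← pow_add, Nat.mod_add_div]
  rw [hsplit]
  exact mul_pow_sub_notMem_pow hdeg hp0 hpI hN hα hq0 he hαe hA hη0 hH hAH hηH hJ hM hL hX0 hC0
    hX hRS hRm hC hsmall

theorem not_pow_dvd_lucas_sub_lucas_add_of_small (hpq : p = 2 ∧ q = 3 ∨ p = 3 ∧ q = 8) (hk : k ≠ 0)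
    (hJ : 0 < J) (hM : 0 < M) (hL : L = 2 * M) (hX0 : 0 < X) (hC0 : 0 < C)
    (hX : p ^ (2 * J * w + w ^ 2) < (X + 1) ^ (2 * (J * L)))
    (hRS : L * J ≤ R * S) (hRm : R ≤ m / q)
    (hC : ∀ r < R + L, ∀ s < S, ∀ k < J, (r + s * (m / q)).choose k ≤ C)
    (hsmall : (8 * J * M * X * C * goldenRatio ^ (q * M * (R + L)) *
      (goldenRatio ^ (k + 9) * (u + 1)) ^ (S * L)) ^ 2 < p ^ w) :
    ¬ (p : ℤ) ^ (2 * w) ∣ lucas (m + k) - lucas m + u := by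
  rintro ⟨d, hd⟩
  have hp : p = 2 ∨ p = 3 := hpq.imp And.left And.left
  obtain ⟨K, _, _, hdeg, α, η₁, η₂, hα, hadd, hmul⟩ :=
    exists_numberField_of_quadratics u (lucasNorm m k)
  obtain ⟨I, hI, hI0, hpI, hN⟩ := exists_isPrime_mem_sq_le_absNorm hp hα
  have hmem : ((α ^ k - 1) * α ^ m - η₁) * ((α ^ k - 1) * α ^ m - η₂) ∈ I ^ (2 * w) := by
    rw [mul_eq_mul_lucas_sub_lucas_add hα hadd hmul, hd]
    push_cast
    exact Ideal.mul_mem_left _ _ (Ideal.mul_mem_right _ _ (Ideal.pow_mem_pow hpI _))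
  have hnotMem {η : 𝓞 K} (hη : η ^ 2 + u * η + lucasNorm m k = 0) :
      (α ^ k - 1) * α ^ m - η ∉ I ^ w :=
    pow_sub_one_mul_pow_sub_notMem_pow hdeg hpI hN hα hη hpq hk hJ hM hL hX0 hC0 hX hRS hRm hC
      hsmall
  push_cast at hadd
  rcases mem_pow_or_mem_pow_of_mul_mem hI hI0 hmem with h | h
  · exact hnotMem (by linear_combination η₁ * hadd - hmul) h
  · exact hnotMem (by linear_combination η₂ * hadd - hmul) h

end InterpolationConclusion

section PowerComparison

theorem pow_le_pow_of_pow_le_pow {x y : ℝ} (hx : 1 ≤ x) (hy : 1 ≤ y) {a b s t : ℕ} (hb : b ≠ 0)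
    (h : x ^ a ≤ y ^ b) (hst : b * s ≤ a * t) : x ^ s ≤ y ^ t := by
  refine le_of_pow_le_pow_left₀ hb (by positivity) ?_
  calc (x ^ s) ^ b ≤ x ^ (a * t) := by
        rw [← pow_mul, mul_comm]
        exact pow_le_pow_right₀ hx hst
    _ ≤ (y ^ b) ^ t := by
        rw [pow_mul]
        exact pow_le_pow_left₀ (by positivity) h t
    _ = (y ^ t) ^ b := pow_right_comm y b t

theorem le_of_pow_le_pow_of_pow_le_pow {x y : ℝ} (hx : 1 < x) (hy : 0 ≤ y) {a b s t : ℕ}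
    (h : y ^ b ≤ x ^ a) (hst : x ^ s ≤ y ^ t) : b * s ≤ a * t := by
  rw [← pow_le_pow_iff_right₀ hx]
  calc x ^ (b * s) = (x ^ s) ^ b := by rw [← pow_mul, mul_comm]
    _ ≤ (y ^ t) ^ b := pow_le_pow_left₀ (by positivity) hst b
    _ = (y ^ b) ^ t := pow_right_comm y t b
    _ ≤ x ^ (a * t) := by
      rw [pow_mul]
      exact pow_le_pow_left₀ (by positivity) h t

theorem choose_le_two_pow_mul {t k J b : ℕ} (hb : 2 ≤ b) (hk : k ≤ J) (ht : 3 * t ≤ 2 ^ b * J) :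
    t.choose k ≤ 2 ^ (b * J) := by
  have htJ : (t : ℝ) ≤ 2 ^ b / 3 * J := by
    have : (3 : ℝ) * t ≤ 2 ^ b * J := by exact_mod_cast ht
    linarith
  have hbase : (1 : ℝ) ≤ 2 ^ b / 3 := by
    have : (2 : ℝ) ^ 2 ≤ 2 ^ b := pow_le_pow_right₀ one_le_two hb
    linarith
  have hfactorial : (J : ℝ) ^ k / k.factorial ≤ 3 ^ J := by
    refine (Real.pow_div_factorial_le_exp _ (Nat.cast_nonneg J) k).trans ?_
    rw [← Real.exp_one_pow]
    exact pow_le_pow_left₀ (Real.exp_pos 1).le (Real.exp_one_lt_d9.le.trans (by norm_num)) J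
  have hchoose : (t.choose k : ℝ) ≤ 2 ^ (b * J) :=
    calc (t.choose k : ℝ) ≤ t ^ k / k.factorial := Nat.choose_le_pow_div k t
      _ ≤ (2 ^ b / 3 * J) ^ k / k.factorial := by gcongr
      _ = (2 ^ b / 3) ^ k * (J ^ k / k.factorial) := by rw [mul_pow, mul_div_assoc]
      _ ≤ (2 ^ b / 3) ^ J * 3 ^ J :=
        mul_le_mul (pow_le_pow_right₀ hbase hk) hfactorial (by positivity) (by positivity)
      _ = 2 ^ (b * J) := by rw [← mul_pow, div_mul_cancel₀ _ (by norm_num), pow_mul]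
  exact_mod_cast hchoose

end PowerComparison

section GoldenRatioPowers

open Real

theorem goldenRatio_pow_twentyFive_le : goldenRatio ^ 25 ≤ (3 : ℝ) ^ 11 :=
  (pow_le_pow_left₀ goldenRatio_pos.le goldenRatio_lt_d4.le 25).trans (by norm_num)

theorem two_pow_seventeen_le : (2 : ℝ) ^ 17 ≤ goldenRatio ^ 25 := by
  have : (1.618 : ℝ) ≤ goldenRatio := by
    have : (2.236 : ℝ) ≤ √5 := Real.le_sqrt_of_sq_le (by norm_num)
    rw [goldenRatio]
    linarith
  exact le_trans (by norm_num) (pow_le_pow_left₀ (by norm_num) this 25)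

theorem goldenRatio_pow_le_two_pow (k : ℕ) : goldenRatio ^ k ≤ 2 ^ (7 * k / 10 + 1) :=
  pow_le_pow_of_pow_le_pow one_lt_goldenRatio.le one_le_two (by norm_num)
    goldenRatio_pow_ten_le (by omega)

end GoldenRatioPowers

section PadicLowerBound

open Real

theorem exists_two_pow_mul_pow_mul_goldenRatio_pow_le {p q j l E : ℕ}
    (hpq : p = 2 ∧ q = 3 ∨ p = 3 ∧ q = 8) (hl : 14 ≤ l) (hj : 38 * l ≤ j)
    (hE : E + 60 * j ≤ 55 * (j * l)) :
    ∃ F, 2 * F < 300 * (j * l) ∧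
      (2 : ℝ) ^ (6 + 2 * j + E) * p ^ (50 * j + 75 * (j * l)) *
        goldenRatio ^ (q * (3 * l) * (3 * j + 6 * l)) ≤ p ^ F := by
  have hll : 38 * (l * l) ≤ j * l := by nlinarith
  have hjl : 14 * j ≤ j * l := by nlinarith
  rcases hpq with ⟨rfl, rfl⟩ | ⟨rfl, rfl⟩
  · refine ⟨6 + 2 * j + E + (50 * j + 75 * (j * l)) + 20 * (j * l), by omega, ?_⟩
    push_cast
    rw [pow_add _ (6 + 2 * j + E + _), pow_add _ (6 + 2 * j + E)]
    gcongr
    refine pow_le_pow_of_pow_le_pow one_lt_goldenRatio.le one_le_two (by norm_num)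
      goldenRatio_pow_ten_le ?_
    nlinarith
  · refine ⟨36 * (j * l) + (50 * j + 75 * (j * l)) + 35 * (j * l), by omega, ?_⟩
    push_cast
    rw [pow_add _ (36 * (j * l) + _), pow_add _ (36 * (j * l))]
    gcongr ?_ * _ * ?_
    · exact pow_le_pow_of_pow_le_pow (a := 25) (b := 16) one_le_two (by norm_num)
        (by norm_num) (by norm_num) (by omega)
    · refine pow_le_pow_of_pow_le_pow one_lt_goldenRatio.le (by norm_num) (by norm_num)
        goldenRatio_pow_twentyFive_le ?_
      nlinarith

theorem mul_mul_le_two_pow {j l : ℕ} (hj : 38 * l ≤ j) :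
    8 * (100 * j) * (3 * l) ≤ 2 ^ (6 + 2 * j) :=
  calc 8 * (100 * j) * (3 * l) ≤ 64 * (j * j) := by nlinarith
    _ ≤ 64 * (2 ^ j * 2 ^ j) := by gcongr <;> exact Nat.lt_two_pow_self.le
    _ = 2 ^ (6 + 2 * j) := by ring

theorem sq_size_lt_pow {p q j l b h : ℕ} {H : ℝ} (hpq : p = 2 ∧ q = 3 ∨ p = 3 ∧ q = 8)
    (hl : 14 ≤ l) (hj : 38 * l ≤ j) (hH0 : 0 ≤ H) (hH : H ≤ 2 ^ h)
    (hcond : 1200 * (l * l * h) + 100 * (j * b) + 20 * (j * l) + 60 * j ≤ 75 * (j * l)) :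
    (8 * (100 * j : ℕ) * (3 * l : ℕ) * (p ^ (50 * j + 75 * (j * l)) : ℕ) *
      (2 ^ (b * (100 * j)) : ℕ) * goldenRatio ^ (q * (3 * l) * (3 * j + 6 * l)) *
        H ^ (200 * l * (6 * l))) ^ 2 < (p : ℝ) ^ (300 * (j * l)) := by
  have hp : 1 < p := by omega
  obtain ⟨F, hF, hle⟩ := exists_two_pow_mul_pow_mul_goldenRatio_pow_le hpq hl hj
    (E := 1200 * (l * l * h) + 100 * (j * b)) (by omega)
  have hcoeff : (8 * (100 * j : ℕ) * (3 * l : ℕ) : ℝ) ≤ 2 ^ (6 + 2 * j) := by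
    exact_mod_cast mul_mul_le_two_pow hj
  have hHpow : H ^ (200 * l * (6 * l)) ≤ 2 ^ (1200 * (l * l * h)) := by
    refine (pow_le_pow_left₀ hH0 hH _).trans_eq ?_
    rw [← pow_mul]
    congr 1
    ring
  calc _ ≤ (2 ^ (6 + 2 * j) * (p ^ (50 * j + 75 * (j * l)) : ℕ) * (2 ^ (b * (100 * j)) : ℕ) *
        goldenRatio ^ (q * (3 * l) * (3 * j + 6 * l)) * 2 ^ (1200 * (l * l * h)) : ℝ) ^ 2 := by
        gcongr
    _ = (2 ^ (6 + 2 * j + (1200 * (l * l * h) + 100 * (j * b))) * p ^ (50 * j + 75 * (j * l)) *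
        goldenRatio ^ (q * (3 * l) * (3 * j + 6 * l))) ^ 2 := by
      rw [show b * (100 * j) = 100 * (j * b) by ring, pow_add 2 (6 + 2 * j),
        pow_add 2 (1200 * _)]
      push_cast
      ring
    _ ≤ ((p : ℝ) ^ F) ^ 2 := pow_le_pow_left₀ (by positivity) hle 2
    _ = (p : ℝ) ^ (2 * F) := by rw [← pow_mul, mul_comm]
    _ < _ := pow_lt_pow_right₀ (by exact_mod_cast hp) hF

theorem not_pow_dvd_lucas_sub_lucas_add {p m k u j l b h : ℕ} (hp : p = 2 ∨ p = 3) (hk : k ≠ 0)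
    (hl : 14 ≤ l) (hj : 38 * l ≤ j) (hb : 2 ≤ b)
    (hh : goldenRatio ^ (k + 9) * ((u : ℝ) + 1) ≤ 2 ^ h)
    (hcond : 1200 * (l * l * h) + 100 * (j * b) + 20 * (j * l) + 60 * j ≤ 75 * (j * l))
    (hm : 24 * j ≤ m) (ht : 3 * (9 * j + 200 * l * (m / 3)) ≤ 2 ^ b * (100 * j)) :
    ¬ (p : ℤ) ^ (600 * (j * l)) ∣ lucas (m + k) - lucas m + u := by
  obtain ⟨q, hpq⟩ : ∃ q, p = 2 ∧ q = 3 ∨ p = 3 ∧ q = 8 := by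
    rcases hp with rfl | rfl <;> simp
  have hp0 : 0 < p := by omega
  have hjl : 0 < j * l := Nat.mul_pos (by omega) (by omega)
  rw [show 600 * (j * l) = 2 * (300 * (j * l)) by ring]
  refine not_pow_dvd_lucas_sub_lucas_add_of_small hpq hk (J := 100 * j) (M := 3 * l) (L := 6 * l)
    (R := 3 * j) (S := 200 * l) (X := p ^ (50 * j + 75 * (j * l))) (C := 2 ^ (b * (100 * j)))
    (by omega) (by omega) (by omega) (by positivity) (by positivity) ?_ (by nlinarith) ?_ ?_
    (sq_size_lt_pow hpq hl hj (by positivity) hh hcond)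
  · calc p ^ (2 * (100 * j) * (300 * (j * l)) + (300 * (j * l)) ^ 2) =
        (p ^ (50 * j + 75 * (j * l))) ^ (2 * (100 * j * (6 * l))) := by ring
      _ < _ := Nat.pow_lt_pow_left (Nat.lt_succ_self _) (by nlinarith)
  · rw [Nat.le_div_iff_mul_le (by omega)]
    have : q ≤ 8 := by omega
    nlinarith
  · intro r hr s hs i hi
    have hdiv : m / q ≤ m / 3 := Nat.div_le_div_left (by omega) (by norm_num)
    have hmul := Nat.mul_le_mul hs.le hdiv
    exact choose_le_two_pow_mul hb hi.le (le_trans (by omega) ht)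

end PadicLowerBound

section Representation

open Real

variable {c : ℤ} {n m x y x' y' : ℕ}

theorem two_pow_mul_three_pow_eq (h : c = lucas n - 2 ^ x * 3 ^ y) :
    (2 ^ x * 3 ^ y : ℝ) = goldenRatio ^ n + goldenConj ^ n - c := by
  have hc : (c : ℝ) = lucas n - 2 ^ x * 3 ^ y := by exact_mod_cast congrArg (Int.cast : ℤ → ℝ) h
  rw [cast_lucas_eq_goldenRatio_pow_add] at hc
  linarith

theorem two_pow_mul_three_pow_le (hc : 0 < c) (h : c = lucas n - 2 ^ x * 3 ^ y) :
    (2 ^ x * 3 ^ y : ℝ) ≤ goldenRatio ^ n := by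
  have hψ := (abs_le.1 (abs_goldenConj_pow_le_one n)).2
  have hc1 : (1 : ℝ) ≤ c := by exact_mod_cast hc
  rw [two_pow_mul_three_pow_eq h]
  linarith

theorem cast_le_goldenRatio_pow (h : c = lucas n - 2 ^ x * 3 ^ y) :
    (c : ℝ) ≤ goldenRatio ^ n := by
  have hψ := (abs_le.1 (abs_goldenConj_pow_le_one n)).2
  have hone : (1 : ℝ) ≤ 2 ^ x * 3 ^ y :=
    one_le_mul_of_one_le_of_one_le (one_le_pow₀ one_le_two) (one_le_pow₀ (by norm_num))
  linarith [two_pow_mul_three_pow_eq h]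

theorem exponents_le (hc : 0 < c) (h : c = lucas n - 2 ^ x * 3 ^ y) :
    10 * x ≤ 7 * n ∧ 25 * y ≤ 11 * n := by
  have hle := two_pow_mul_three_pow_le hc h
  have hx : (1 : ℝ) ≤ 2 ^ x := one_le_pow₀ one_le_two
  have hy : (1 : ℝ) ≤ 3 ^ y := one_le_pow₀ (by norm_num)
  exact ⟨le_of_pow_le_pow_of_pow_le_pow one_lt_two goldenRatio_pos.le goldenRatio_pow_ten_le
      ((le_mul_of_one_le_right (by positivity) hy).trans hle),
    le_of_pow_le_pow_of_pow_le_pow (by norm_num) goldenRatio_pos.le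
      goldenRatio_pow_twentyFive_le ((le_mul_of_one_le_left (by positivity) hx).trans hle)⟩

theorem goldenRatio_pow_sub_le (h : c = lucas n - 2 ^ x * 3 ^ y)
    (h' : c = lucas m - 2 ^ x' * 3 ^ y') :
    goldenRatio ^ n - goldenRatio ^ m - 1 ≤ 2 ^ x * 3 ^ y := by
  have hψ := (abs_le.1 (abs_goldenConj_pow_le_one n)).1
  rw [two_pow_mul_three_pow_eq h]
  linarith [cast_le_goldenRatio_pow h']

theorem seventeen_mul_sub_five_le (h : c = lucas n - 2 ^ x * 3 ^ y)
    (h' : c = lucas m - 2 ^ x' * 3 ^ y') (hmn : m < n) : 17 * (n - 5) ≤ 25 * (x + 2 * y) := by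
  rcases lt_or_ge n 5 with hn | hn
  · omega
  obtain ⟨a, rfl⟩ := Nat.exists_eq_add_of_le' hn
  have hφ := one_lt_goldenRatio
  refine le_of_pow_le_pow_of_pow_le_pow hφ zero_le_two two_pow_seventeen_le ?_
  rw [Nat.add_sub_cancel]
  have hm : goldenRatio ^ m ≤ goldenRatio ^ (a + 4) := pow_le_pow_right₀ hφ.le (by omega)
  have ha : (1 : ℝ) ≤ goldenRatio ^ a := one_le_pow₀ hφ.le
  have hgap : goldenRatio ^ (a + 5) - goldenRatio ^ (a + 4) =
      goldenRatio ^ a * (2 * goldenRatio + 1) := by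
    linear_combination goldenRatio ^ a * (goldenRatio ^ 3 + goldenRatio + 1) * goldenRatio_sq
  calc goldenRatio ^ a ≤ goldenRatio ^ (a + 5) - goldenRatio ^ m - 1 := by nlinarith
    _ ≤ 2 ^ x * 3 ^ y := goldenRatio_pow_sub_le h h'
    _ ≤ 2 ^ x * (2 ^ 2) ^ y := by gcongr; norm_num
    _ = 2 ^ (x + 2 * y) := by rw [pow_add, pow_mul]

theorem linear_form_eq_log_div :
    n * log goldenRatio - x * log 2 - y * log 3 = log (goldenRatio ^ n / (2 ^ x * 3 ^ y)) := by
  rw [log_div (x := goldenRatio ^ n) (by positivity) (by positivity),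
    log_mul (by positivity) (by positivity), log_pow, log_pow, log_pow]
  ring

theorem four_le_goldenRatio_pow {d : ℕ} (hd : 5 ≤ d) : 4 ≤ goldenRatio ^ d := by
  have hfive : goldenRatio ^ 5 = 5 * goldenRatio + 3 := by
    linear_combination (goldenRatio ^ 3 + goldenRatio ^ 2 + 2 * goldenRatio + 3) * goldenRatio_sq
  linarith [one_lt_goldenRatio, pow_le_pow_right₀ one_lt_goldenRatio.le hd]

theorem abs_linear_form_le (hc : 0 < c) (h : c = lucas n - 2 ^ x * 3 ^ y)
    (h' : c = lucas m - 2 ^ x' * 3 ^ y') (hmn : m + 5 ≤ n) :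
    |n * log goldenRatio - x * log 2 - y * log 3| ≤ 4 / goldenRatio ^ (n - m) := by
  obtain ⟨d, rfl⟩ := Nat.exists_eq_add_of_le (show m ≤ n by omega)
  have hle := two_pow_mul_three_pow_le hc h
  have hsub := goldenRatio_pow_sub_le h h'
  have hm : 1 ≤ goldenRatio ^ m := one_le_pow₀ one_lt_goldenRatio.le
  have hd : 4 ≤ goldenRatio ^ d := four_le_goldenRatio_pow (by omega)
  rw [linear_form_eq_log_div, Nat.add_sub_cancel_left]
  generalize (2 ^ x * 3 ^ y : ℝ) = U at hle hsub ⊢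
  rw [pow_add] at hle hsub ⊢
  have hU0 : 0 < U := by nlinarith
  have hU : goldenRatio ^ m * goldenRatio ^ d ≤ 2 * U := by nlinarith
  rw [abs_of_nonneg (log_nonneg ((one_le_div hU0).2 hle))]
  calc log (goldenRatio ^ m * goldenRatio ^ d / U) ≤ goldenRatio ^ m * goldenRatio ^ d / U - 1 :=
        log_le_sub_one_of_pos (by positivity)
    _ = (goldenRatio ^ m * goldenRatio ^ d - U) / U := div_sub_one hU0.ne'
    _ ≤ 2 * goldenRatio ^ m / U := by gcongr; linarith
    _ ≤ 4 / goldenRatio ^ d := by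
      rw [div_le_div_iff₀ hU0 (by positivity)]
      linarith

theorem goldenRatio_pow_sub_le_two_pow {N : ℕ} (hc : 0 < c) (h : c = lucas n - 2 ^ x * 3 ^ y)
    (h' : c = lucas m - 2 ^ x' * 3 ^ y') (hmn : m + 5 ≤ n)
    (hN : 1 < |n * log goldenRatio - x * log 2 - y * log 3| * 2 ^ N) :
    goldenRatio ^ (n - m) ≤ 2 ^ (N + 2) := by
  have hlt := hN.trans_le
    (mul_le_mul_of_nonneg_right (abs_linear_form_le hc h h' hmn) (by positivity))
  rw [div_mul_eq_mul_div, one_lt_div (by positivity)] at hlt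
  rw [pow_add]
  linarith

theorem mul_cube_le_two_pow {B : ℕ} (hB : 113 ≤ B) :
    8 * 10 ^ 17 * (25 * (1900800000 * B ^ 3 + 2)) ≤ 17 * 2 ^ (B - 1) := by
  induction B, hB using Nat.le_induction with
  | base => norm_num
  | succ B hB ih =>
    have hpow : 2 ^ (B + 1 - 1) = 2 * 2 ^ (B - 1) := by
      rw [← pow_succ']
      congr 1
      omega
    have hcube : (B + 1) ^ 3 ≤ 2 * B ^ 3 := by nlinarith [Nat.mul_le_mul hB hB]
    rw [hpow]
    omega

theorem mul_sub_le_of_eq_lucas_sub (hc : 0 < c) (h : c = lucas n - 2 ^ x * 3 ^ y)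
    (h' : c = lucas m - 2 ^ x' * 3 ^ y') (hn : 32 * 10 ^ 32 ≤ n) :
    8 * 10 ^ 17 * (n - m) ≤ n := by
  rcases lt_or_ge n (m + 5) with hmn | hmn
  · omega
  obtain ⟨B, hB⟩ : ∃ B, B = Nat.log 2 n + 1 := ⟨_, rfl⟩
  have hBn : 2 ^ (B - 1) ≤ n := by
    rw [hB, Nat.add_sub_cancel]
    exact Nat.pow_log_le_self 2 (by omega)
  have hnB : n < 2 ^ B := hB ▸ Nat.lt_pow_succ_log_self one_lt_two n
  have hB112 : 112 ≤ B := by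
    have := Nat.le_log_of_pow_le one_lt_two (show 2 ^ 111 ≤ n from le_trans (by norm_num) hn)
    omega
  obtain ⟨hx, hy⟩ := exponents_le hc h
  have hx' : (10 * x : ℝ) ≤ 7 * n := by exact_mod_cast hx
  have hy' : (25 * y : ℝ) ≤ 11 * n := by exact_mod_cast hy
  have hpow := goldenRatio_pow_sub_le_two_pow hc h h' hmn
    (one_lt_abs_linear_form_mul_two_pow hB112 hBn hnB (by linarith) (by linarith))
  have hgap : 17 * (n - m) ≤ 25 * (1900800000 * B ^ 3 + 2) :=
    le_of_pow_le_pow_of_pow_le_pow one_lt_goldenRatio zero_le_two two_pow_seventeen_le hpow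
  rcases hB112.eq_or_lt with rfl | hB113
  · omega
  · have := mul_cube_le_two_pow hB113
    omega

theorem not_pow_dvd_lucas_sub_lucas {p N : ℕ} (hp : p = 2 ∨ p = 3) (hmn : m < n) (hn : n ≤ N)
    (hd : 8 * 10 ^ 17 * (n - m) ≤ N) (hm : N ≤ 2 * m) (hN : 32 * 10 ^ 32 ≤ N) :
    ¬ (p : ℤ) ^ (90000 * (N / 10 ^ 14 + 1)) ∣ lucas n - lucas m := by
  obtain ⟨k, rfl⟩ := Nat.exists_eq_add_of_lt hmn
  obtain ⟨j, hj⟩ : ∃ j, j = N / 10 ^ 14 + 1 := ⟨_, rfl⟩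
  have hdvd := not_pow_dvd_lucas_sub_lucas_add hp (m := m) (k := k + 1) (u := 0) (j := j)
    (l := 150) (b := 55) (h := 7 * (k + 1 + 9) / 10 + 1) (by omega) (by norm_num) (by omega)
    (by norm_num) (by simpa using goldenRatio_pow_le_two_pow (k + 1 + 9)) (by omega) (by omega)
    (by omega)
  rw [← hj]
  rwa [Nat.cast_zero, add_zero, ← add_assoc, show 600 * (j * 150) = 90000 * j by ring] at hdvd

theorem exponents_lt_or_lt {N : ℕ} (h : c = lucas n - 2 ^ x * 3 ^ y)
    (h' : c = lucas m - 2 ^ x' * 3 ^ y') (hmn : m < n) (hn : n ≤ N)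
    (hd : 8 * 10 ^ 17 * (n - m) ≤ N) (hm : N ≤ 2 * m) (hN : 32 * 10 ^ 32 ≤ N) :
    (x < 90000 * (N / 10 ^ 14 + 1) ∨ x' < 90000 * (N / 10 ^ 14 + 1)) ∧
      (y < 90000 * (N / 10 ^ 14 + 1) ∨ y' < 90000 * (N / 10 ^ 14 + 1)) := by
  have hsub : lucas n - lucas m = 2 ^ x * 3 ^ y - 2 ^ x' * 3 ^ y' := by linarith
  constructor <;> by_contra! hlarge
  · refine not_pow_dvd_lucas_sub_lucas (Or.inl rfl) hmn hn hd hm hN ?_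
    rw [hsub]
    exact dvd_sub ((pow_dvd_pow 2 hlarge.1).mul_right _) ((pow_dvd_pow 2 hlarge.2).mul_right _)
  · refine not_pow_dvd_lucas_sub_lucas (Or.inr rfl) hmn hn hd hm hN ?_
    rw [hsub]
    exact dvd_sub ((pow_dvd_pow 3 hlarge.1).mul_left _) ((pow_dvd_pow 3 hlarge.2).mul_left _)

theorem two_pow_mul_three_pow_lt_two_pow {G : ℕ} (hx : x < G) (hy : y < G) :
    2 ^ x * 3 ^ y < 2 ^ (3 * G) :=
  calc 2 ^ x * 3 ^ y < 2 ^ G * 3 ^ G := by gcongr <;> norm_num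
    _ ≤ 2 ^ G * 4 ^ G := by gcongr; norm_num
    _ = 2 ^ (3 * G) := by rw [← mul_pow, pow_mul]; norm_num

theorem exponent_two_lt {N : ℕ} (h : c = lucas n - 2 ^ x * 3 ^ y)
    (h' : c = lucas m - 2 ^ x' * 3 ^ y') (hmn : m < n) (hn : n ≤ N)
    (hd : 8 * 10 ^ 17 * (n - m) ≤ N) (hm : N ≤ 2 * m) (hN : 32 * 10 ^ 32 ≤ N)
    (hx' : x' < 90000 * (N / 10 ^ 14 + 1)) (hy' : y' < 90000 * (N / 10 ^ 14 + 1)) :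
    x < 39600 * (N / 58300) := by
  obtain ⟨k, rfl⟩ := Nat.exists_eq_add_of_lt hmn
  obtain ⟨G, hG⟩ : ∃ G, G = 90000 * (N / 10 ^ 14 + 1) := ⟨_, rfl⟩
  obtain ⟨j, hj⟩ : ∃ j, j = N / 58300 := ⟨_, rfl⟩
  rw [← hG] at hx' hy'
  rw [← hj]
  by_contra! hx
  have hu : ((2 ^ x' * 3 ^ y' : ℕ) : ℝ) + 1 ≤ 2 ^ (3 * G) := by
    exact_mod_cast two_pow_mul_three_pow_lt_two_pow hx' hy'
  have hsize : goldenRatio ^ (k + 1 + 9) * ((2 ^ x' * 3 ^ y' : ℕ) + 1) ≤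
      2 ^ (7 * (k + 1 + 9) / 10 + 1 + 3 * G) := by
    rw [pow_add _ (7 * (k + 1 + 9) / 10 + 1)]
    gcongr
    exact goldenRatio_pow_le_two_pow _
  refine not_pow_dvd_lucas_sub_lucas_add (Or.inl rfl) (m := m) (j := j) (l := 66) (b := 23)
    (by omega) (by norm_num) (by omega) (by norm_num) hsize (by omega) (by omega) (by omega) ?_
  have hsub : lucas (m + (k + 1)) - lucas m + 2 ^ x' * 3 ^ y' = 2 ^ x * 3 ^ y := by
    rw [← add_assoc]
    linarith
  push_cast
  rw [hsub, show 600 * (j * 66) = 39600 * j by ring]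
  exact (pow_dvd_pow 2 hx).mul_right _

theorem index_lt (hc : 0 < c) {n₁ n₂ x₁ x₂ y₁ y₂ : ℕ} (h : c = lucas n - 2 ^ x * 3 ^ y)
    (h₁ : c = lucas n₁ - 2 ^ x₁ * 3 ^ y₁) (h₂ : c = lucas n₂ - 2 ^ x₂ * 3 ^ y₂) (hn₁ : n₁ < n)
    (hn₂ : n₂ < n₁) : n < 32 * 10 ^ 32 := by
  by_contra! hn
  have hd := mul_sub_le_of_eq_lucas_sub hc h h₂ hn
  have hxy₁ := exponents_lt_or_lt h h₁ hn₁ le_rfl (by omega) (by omega) hn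
  have hxy₂ := exponents_lt_or_lt h h₂ (hn₂.trans hn₁) le_rfl hd (by omega) hn
  have hxy₁₂ := exponents_lt_or_lt h₁ h₂ hn₂ hn₁.le (by omega) (by omega) hn
  have hx := exponent_two_lt h h₂ (hn₂.trans hn₁) le_rfl hd (by omega) hn
  have hx₁ := exponent_two_lt h₁ h₂ hn₂ hn₁.le (by omega) (by omega) hn
  have hsize := seventeen_mul_sub_five_le h h₁ hn₁
  have hsize₁ := seventeen_mul_sub_five_le h₁ h₂ hn₂
  -- The sizes force a large exponent in each of `(x, y)` and `(x₁, y₁)`; as no two of `x, x₁, x₂`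
  -- and no two of `y, y₁, y₂` are large, both `x₂` and `y₂` are small.
  rcases le_or_gt (90000 * (n / 10 ^ 14 + 1)) x with hlarge | hsmall
  · have := hx (by omega) (by omega)
    omega
  · have := hx₁ (by omega) (by omega)
    omega

end Representation

end LucasSUnit

theorem pos_c_absolute_bound (c : ℤ) (hc : 0 < c)
    (n n₁ n₂ x x₁ x₂ y y₁ y₂ : ℕ)
    (h1 : c = lucas n - 2 ^ x * 3 ^ y) (h2 : c = lucas n₁ - 2 ^ x₁ * 3 ^ y₁)
    (h3 : c = lucas n₂ - 2 ^ x₂ * 3 ^ y₂)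
    (hnn : n₁ < n) (hnn' : n₂ < n₁) (hn : 60000 < n) :
    (n : ℝ) < 3.2 * 10 ^ 33 ∧ (x : ℝ) < 2.4 * 10 ^ 33 ∧
      (y : ℝ) < 1.5 * 10 ^ 33 := by
  have hlt : (n : ℝ) < 32 * 10 ^ 32 := by exact_mod_cast LucasSUnit.index_lt hc h1 h2 h3 hnn hnn'
  obtain ⟨hx, hy⟩ := LucasSUnit.exponents_le hc h1
  have hx' : (10 * x : ℝ) ≤ 7 * n := by exact_mod_cast hx
  have hy' : (25 * y : ℝ) ≤ 11 * n := by exact_mod_cast hy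
  refine ⟨?_, ?_, ?_⟩ <;> linarith
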